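/- arXiv:1112.5157 — 3 statements merged into one kernel-verified Lean document; each statement's English description precedes it below -/
import Mathlib

section
/- Let d > 6 and let G be a connected d-regular graph on n vertices such that G² is not a complete graph, and suppose G is neither a snake graph nor a peanut graph. Then e(G²) − e(G) > 2n(1 − 2/(d+1) − 3/(d−3)). -/
open SimpleGraph

variable {V : Type*}

/-- The set of vertices at distance exactly `i` from `v`. -/
def distSet (G : SimpleGraph V) (v : V) (i : ℕ) : Set V := {u | G.dist v u = i}

/-- `deg₂ v` : the number of vertices at distance exactly 2 from `v`. -/
noncomputable def deg2 (G : SimpleGraph V) (v : V) : ℕ := (distSet G v 2).ncard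

/-- `N₂'(v)` : vertices at distance 2 from `v` that are adjacent to a vertex at
distance 3 from `v`. -/
def N2' (G : SimpleGraph V) (v : V) : Set V :=
  {u | G.dist v u = 2 ∧ ∃ w, G.dist v w = 3 ∧ G.Adj u w}

/-- The square of `G` : an edge between `u` and `v` whenever `1 ≤ d(u,v) ≤ 2`. -/
def graphSquare (G : SimpleGraph V) : SimpleGraph V where
  Adj u v := 1 ≤ G.dist u v ∧ G.dist u v ≤ 2
  symm := by
    constructor
    intro u v h
    rwa [SimpleGraph.dist_comm]
  loopless := by
    constructor
    intro v h
    simp [SimpleGraph.dist_self] at h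

/-- `G` is `d`-regular : every vertex has exactly `d` neighbors. -/
def IsRegularGraph (G : SimpleGraph V) (d : ℕ) : Prop :=
  ∀ v, (G.neighborSet v).ncard = d

/-- The vertex set of the connected component of `G - u` containing `v` :
all vertices reachable from `v` by a walk avoiding `u`. -/
def compDel (G : SimpleGraph V) (u v : V) : Set V :=
  {w | ∃ p : G.Walk v w, u ∉ p.support}

/-- The complement of the induced subgraph of `G` on `S` is precisely a perfect matching
on `M ⊆ S` : there is a fixed-point-free involution `m` of `M` such that the non-adjacent
pairs of distinct vertices inside `S` are exactly the matched pairs. -/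
def ComplIsMatchingOn (G : SimpleGraph V) (S M : Set V) : Prop :=
  M ⊆ S ∧ ∃ m : V → V,
    (∀ x ∈ M, m x ∈ M ∧ m x ≠ x ∧ m (m x) = x) ∧
    (∀ a ∈ S, ∀ b ∈ S, a ≠ b → (¬ G.Adj a b ↔ (a ∈ M ∧ b = m a)))

/-- A tail with `k ≥ 1` segments in the graph `G` (for degree `d`). -/
structure Tail (G : SimpleGraph V) (d : ℕ) where
  /-- the vertex set of the tail -/
  carrier : Set V
  /-- the number of segments -/
  k : ℕ
  /-- the segments `R₁, …, R_k` -/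
  seg : ℕ → Set V
  /-- the vertex `v` of the first segment with `deg₂ v = 1` -/
  v0 : V
  /-- the vertex `u` with `N₂(v) = {u}` -/
  u0 : V
  /-- the endpoints `v_i` of the removed edges of later segments -/
  vt : ℕ → V
  /-- the endpoints `v_i'` of the removed edges of later segments -/
  vt' : ℕ → V
  /-- the unique vertex `w_T` of the tail having a neighbor outside the tail -/
  w : V
  /-- the unique neighbor `u_T` of `w_T` outside the tail -/
  uT : V
  k_pos : 1 ≤ k
  carrier_eq : carrier = ⋃ i ∈ Set.Icc 1 k, seg i
  seg_disj : ∀ i ∈ Set.Icc 1 k, ∀ j ∈ Set.Icc 1 k, i ≠ j → Disjoint (seg i) (seg j)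
  seg1 : seg 1 = {v0} ∪ G.neighborSet v0 ∪ {u0}
  seg1_card : (seg 1).ncard = d + 2
  deg2_v0 : deg2 G v0 = 1
  dist2_v0 : distSet G v0 2 = {u0}
  u0_nbrs : (G.neighborSet u0 ∩ G.neighborSet v0).ncard = d - 1
  compl_matching :
    ComplIsMatchingOn G ({v0} ∪ G.neighborSet v0) (G.neighborSet u0 ∩ G.neighborSet v0)
  seg_card : ∀ i ∈ Set.Icc 2 k, (seg i).ncard = d + 1
  vt_mem : ∀ i ∈ Set.Icc 2 k, vt i ∈ seg i
  vt'_mem : ∀ i ∈ Set.Icc 2 k, vt' i ∈ seg i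
  vt_ne : ∀ i ∈ Set.Icc 2 k, vt i ≠ vt' i
  seg_adj : ∀ i ∈ Set.Icc 2 k, ∀ a ∈ seg i, ∀ b ∈ seg i, a ≠ b →
    (G.Adj a b ↔ ({a, b} : Set V) ≠ {vt i, vt' i})
  inter_seg : ∀ i ∈ Set.Icc 1 k, ∀ j ∈ Set.Icc 1 k, i ≠ j → ∀ a ∈ seg i, ∀ b ∈ seg j,
    (G.Adj a b ↔ ((i = 1 ∧ j = 2 ∧ a = u0 ∧ b = vt 2) ∨
                  (j = 1 ∧ i = 2 ∧ b = u0 ∧ a = vt 2) ∨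
                  (i + 1 = j ∧ 2 ≤ i ∧ a = vt' i ∧ b = vt j) ∨
                  (j + 1 = i ∧ 2 ≤ j ∧ b = vt' j ∧ a = vt i)))
  w_eq_of_k_ge_two : 2 ≤ k → w = vt' k
  w_eq_of_k_eq_one : k = 1 → w = u0
  w_mem : w ∈ carrier
  uT_not_mem : uT ∉ carrier
  w_adj_uT : G.Adj w uT
  w_unique_out : ∀ b, G.Adj w b → b ∉ carrier → b = uT
  others_in : ∀ a ∈ carrier, a ≠ w → ∀ b, G.Adj a b → b ∈ carrier

/-- A tail is proper if it is not contained in a strictly larger tail. -/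
def IsProperTail (G : SimpleGraph V) (d : ℕ) (t : Tail G d) : Prop :=
  ∀ t' : Tail G d, t.carrier ⊆ t'.carrier → t.carrier = t'.carrier

/-- A snake graph : a connected `d`-regular graph which is the disjoint union of two tails,
the only edge joining them being `w_T w_{T'}`. -/
def IsSnake (G : SimpleGraph V) (d : ℕ) : Prop :=
  G.Connected ∧ IsRegularGraph G d ∧
  ∃ t t' : Tail G d,
    Disjoint t.carrier t'.carrier ∧
    t.carrier ∪ t'.carrier = Set.univ ∧
    t.uT = t'.w ∧ t'.uT = t.w ∧
    (∀ a ∈ t.carrier, ∀ b ∈ t'.carrier, G.Adj a b → a = t.w ∧ b = t'.w)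

/-- A peanut graph : a connected `d`-regular graph (`d` even) partitioned into `R₁` of size
`d+1` whose induced complement is the single edge `w₁w₂`, and `R₂` of size `d+2` whose
induced complement is a star `uv₁, uv₂, uv₃` plus a perfect matching on the remaining
vertices, the only edges between the parts being `uw₁` and `uw₂`. -/
def IsPeanut (G : SimpleGraph V) (d : ℕ) : Prop :=
  G.Connected ∧ IsRegularGraph G d ∧ Even d ∧
  ∃ (R1 R2 : Set V) (w1 w2 u v1 v2 v3 : V),
    Disjoint R1 R2 ∧ R1 ∪ R2 = Set.univ ∧
    R1.ncard = d + 1 ∧ R2.ncard = d + 2 ∧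
    w1 ∈ R1 ∧ w2 ∈ R1 ∧ w1 ≠ w2 ∧
    u ∈ R2 ∧ v1 ∈ R2 ∧ v2 ∈ R2 ∧ v3 ∈ R2 ∧
    ([u, v1, v2, v3].Pairwise (· ≠ ·)) ∧
    (∀ a ∈ R1, ∀ b ∈ R1, a ≠ b → (¬ G.Adj a b ↔ ({a, b} : Set V) = {w1, w2})) ∧
    (∃ m : V → V,
      (∀ x ∈ R2 \ {u, v1, v2, v3}, m x ∈ R2 \ {u, v1, v2, v3} ∧ m x ≠ x ∧ m (m x) = x) ∧
      (∀ a ∈ R2, ∀ b ∈ R2, a ≠ b →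
        (¬ G.Adj a b ↔ (({a, b} : Set V) = {u, v1} ∨ ({a, b} : Set V) = {u, v2} ∨
          ({a, b} : Set V) = {u, v3} ∨ (a ∈ R2 \ {u, v1, v2, v3} ∧ b = m a))))) ∧
    (∀ a ∈ R1, ∀ b ∈ R2, (G.Adj a b ↔ (b = u ∧ (a = w1 ∨ a = w2))))

/-!
The degree of `v` in `G²` exceeds its degree in `G` by `|N₂(v)|`, so `2 (e(G²) - e(G))` is the sum
of all `|N₂(v)|`, and these numbers have to average more than `4 - β`, where
`β = 8 / (d + 1) + 12 / (d - 3)`.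

Give each vertex the charge `|N₂(v)| - 4`. A vertex with `|N₂(v)| ≤ 3` draws charge from its exits,
the vertices of `N₂(v)` that have a neighbour at distance three from `v`. An exit `p` can afford
this because `|N₂(p)| + |N₂(v)| > d`. Two kinds of exits must be spared, having no charge to give
away: the end of a tail, and the two vertices through which a block of order `d + 1` hangs on its
cut vertex. If a vertex `v` with `|N₂(v)|` equal to `2` or `3` could draw from none of its
exits, then, for parity reasons, either `v` would join two tails to a snake, or the exits would be
two vertices of the second kind and `G` a peanut.

The charge of a vertex can thus end up below `-β` only if `|N₂(v)| ≤ 2` and `v` draws from at most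
one exit. Such vertices sit in a block hanging on a cut vertex, in the first segment of a tail, or
in the closed neighbourhood of a vertex at distance two from the end of a tail. These clusters are
disjoint, and each of them has at least `d + 1` vertices and total charge at least `-20`, whereas
`(d + 1) β > 20`.
-/

section Development

open Finset
attribute [local instance] Classical.propDecidable

variable {G : SimpleGraph V} {d : ℕ}

theorem mem_of_forall_adj_mem {S : Set V} {v : V} (hconn : G.Connected)
    (hv : v ∈ S) (h : ∀ x ∈ S, ∀ z, G.Adj x z → z ∈ S) (z : V) : z ∈ S := by
  obtain ⟨p⟩ := hconn.preconnected v z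
  induction p with
  | nil => exact hv
  | cons hadj _ ih => exact ih (h _ hv _ hadj)

/-! ### Extending a tail -/

namespace Tail

variable {i j : ℕ} {a b : V}

/-- The vertex through which segment `i` of a tail is left towards segment `i + 1`. It is `u` for
the first segment and `v_i'` for the later ones. -/
def segEnd (t : Tail G d) (i : ℕ) : V := if i = 1 then t.u0 else t.vt' i

theorem seg_subset_carrier (t : Tail G d) (hi : i ∈ Set.Icc 1 t.k) : t.seg i ⊆ t.carrier := by
  rw [t.carrier_eq]
  exact Set.subset_biUnion_of_mem hi

theorem segEnd_mem_seg (t : Tail G d) (hi : i ∈ Set.Icc 1 t.k) : t.segEnd i ∈ t.seg i := by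
  unfold segEnd
  split_ifs with h
  · simp [h, t.seg1]
  · exact t.vt'_mem i ⟨by have := hi.1; lia, hi.2⟩

theorem w_eq_segEnd (t : Tail G d) : t.w = t.segEnd t.k := by
  unfold segEnd
  split_ifs with h
  · exact t.w_eq_of_k_eq_one h
  · exact t.w_eq_of_k_ge_two (by have := t.k_pos; lia)

theorem eq_k_of_w_mem_seg (t : Tail G d) (hi : i ∈ Set.Icc 1 t.k) (hw : t.w ∈ t.seg i) :
    i = t.k := by
  have hk : t.k ∈ Set.Icc 1 t.k := ⟨t.k_pos, le_rfl⟩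
  by_contra hne
  exact Set.disjoint_left.1 (t.seg_disj i hi t.k hk hne) hw
    (t.w_eq_segEnd ▸ t.segEnd_mem_seg hk)

theorem adj_iff_of_lt (t : Tail G d) (hi : 1 ≤ i) (hij : i < j) (hj : j ≤ t.k)
    (ha : a ∈ t.seg i) (hb : b ∈ t.seg j) :
    G.Adj a b ↔ j = i + 1 ∧ a = t.segEnd i ∧ b = t.vt j := by
  rw [t.inter_seg i ⟨hi, by lia⟩ j ⟨by lia, hj⟩ hij.ne a ha b hb, segEnd]
  obtain rfl | hi' := hi.eq_or_lt
  · by_cases hj2 : j = 2 <;> simp [hj2]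
    lia
  · simp only [hi'.ne', false_and, if_false, false_or, show ¬ j + 1 = i by lia,
      show ¬ j = 1 by lia, or_false, eq_comm (a := j), show 2 ≤ i from hi', true_and]

theorem mem_carrier_or_of_adj (t : Tail G d) (ha : a ∈ t.carrier) (h : G.Adj a b) :
    b ∈ t.carrier ∨ (a = t.w ∧ b = t.uT) := by
  by_cases hb : b ∈ t.carrier
  · exact .inl hb
  obtain rfl : a = t.w := of_not_not fun haw => hb (t.others_in a ha haw b h)
  exact .inr ⟨rfl, t.w_unique_out b h hb⟩

/-- `R` can be attached to the tail `t` as a further segment: it is a complete graph on `d + 1`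
vertices minus the edge `t.uT p`, the vertex `t.uT` is joined to the end of `t`, and the vertex
`p`, the end of the extended tail, is joined to `u` outside. -/
structure IsNextSegment (t : Tail G d) (R : Set V) (p u : V) : Prop where
  disjoint : Disjoint t.carrier R
  ncard_eq : R.ncard = d + 1
  uT_mem : t.uT ∈ R
  mem : p ∈ R
  ne : t.uT ≠ p
  adj_iff : ∀ a ∈ R, ∀ b ∈ R, a ≠ b → (G.Adj a b ↔ ({a, b} : Set V) ≠ {t.uT, p})
  mem_or_of_adj : ∀ a ∈ R, ∀ b, G.Adj a b → b ∈ R ∨ (a = t.uT ∧ b = t.w) ∨ (a = p ∧ b = u)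
  adj : G.Adj p u
  notMem_carrier : u ∉ t.carrier
  notMem : u ∉ R

namespace IsNextSegment

variable {t : Tail G d} {R : Set V} {p u : V}

theorem adj_cross_iff (h : t.IsNextSegment R p u) (ha : a ∈ t.carrier) (hb : b ∈ R) :
    G.Adj a b ↔ a = t.w ∧ b = t.uT := by
  constructor
  · exact fun hab => (t.mem_carrier_or_of_adj ha hab).resolve_left
      fun hb' => Set.disjoint_left.1 h.disjoint hb' hb
  · rintro ⟨rfl, rfl⟩
    exact t.w_adj_uT

theorem adj_seg_iff (h : t.IsNextSegment R p u) (hi : i ∈ Set.Icc 1 t.k) (ha : a ∈ t.seg i)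
    (hb : b ∈ R) : G.Adj a b ↔ i = t.k ∧ a = t.segEnd i ∧ b = t.uT := by
  rw [h.adj_cross_iff (t.seg_subset_carrier hi ha) hb]
  constructor
  · rintro ⟨rfl, hb⟩
    obtain rfl := t.eq_k_of_w_mem_seg hi ha
    exact ⟨rfl, t.w_eq_segEnd, hb⟩
  · rintro ⟨rfl, rfl, hb⟩
    exact ⟨t.w_eq_segEnd.symm, hb⟩

theorem adj_iff_of_lt (h : t.IsNextSegment R p u) (hi : 1 ≤ i) (hij : i < j) (hj : j ≤ t.k + 1)
    (ha : a ∈ if i ≤ t.k then t.seg i else R) (hb : b ∈ if j ≤ t.k then t.seg j else R) :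
    G.Adj a b ↔ j = i + 1 ∧ a = t.segEnd i ∧ b = if j ≤ t.k then t.vt j else t.uT := by
  have hik : i ≤ t.k := by lia
  rw [if_pos hik] at ha
  split_ifs at hb ⊢ with hjk
  · exact t.adj_iff_of_lt hi hij hjk ha hb
  · rw [h.adj_seg_iff ⟨hi, hik⟩ ha hb, show j = i + 1 ↔ i = t.k by lia]

theorem inter_seg (h : t.IsNextSegment R p u) (hi : i ∈ Set.Icc 1 (t.k + 1))
    (hj : j ∈ Set.Icc 1 (t.k + 1)) (hij : i ≠ j)
    (ha : a ∈ if i ≤ t.k then t.seg i else R) (hb : b ∈ if j ≤ t.k then t.seg j else R) :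
    G.Adj a b ↔
      ((i = 1 ∧ j = 2 ∧ a = t.u0 ∧ b = if 2 ≤ t.k then t.vt 2 else t.uT) ∨
        (j = 1 ∧ i = 2 ∧ b = t.u0 ∧ a = if 2 ≤ t.k then t.vt 2 else t.uT) ∨
        (i + 1 = j ∧ 2 ≤ i ∧ (a = if i ≤ t.k then t.vt' i else p) ∧
          b = if j ≤ t.k then t.vt j else t.uT) ∨
        (j + 1 = i ∧ 2 ≤ j ∧ (b = if j ≤ t.k then t.vt' j else p) ∧
          a = if i ≤ t.k then t.vt i else t.uT)) := by
  wlog hlt : i < j generalizing i j a b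
  · rw [G.adj_comm, this hj hi hij.symm hb ha (by lia)]
    exact or_left_comm.trans (or_congr_right (or_congr_right or_comm))
  rw [h.adj_iff_of_lt hi.1 hlt hj.2 ha hb, segEnd]
  obtain ⟨hi, -⟩ := hi
  obtain ⟨-, hj⟩ := hj
  obtain rfl | hi' := hi.eq_or_lt
  · by_cases hj2 : j = 2 <;> simp [hj2]
    lia
  · simp only [hi'.ne', false_and, if_false, false_or, show ¬ j + 1 = i by lia,
      show ¬ j = 1 by lia, or_false, eq_comm (a := j), show 2 ≤ i from hi', true_and,
      show i ≤ t.k by lia, if_true]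

theorem carrier_union_eq (t : Tail G d) (R : Set V) :
    t.carrier ∪ R = ⋃ i ∈ Set.Icc 1 (t.k + 1), if i ≤ t.k then t.seg i else R := by
  rw [← Set.insert_Icc_right_eq_Icc_add_one (by lia), Set.biUnion_insert, if_neg (by lia),
    t.carrier_eq, Set.union_comm]
  exact congrArg _ (Set.iUnion₂_congr fun i hi => (if_pos hi.2).symm)

theorem disjoint_seg (h : t.IsNextSegment R p u) (hi : i ∈ Set.Icc 1 (t.k + 1))
    (hj : j ∈ Set.Icc 1 (t.k + 1)) (hij : i ≠ j) :
    Disjoint (if i ≤ t.k then t.seg i else R) (if j ≤ t.k then t.seg j else R) := by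
  obtain ⟨hi, hi'⟩ := hi
  obtain ⟨hj, hj'⟩ := hj
  split_ifs with hik hjk hjk
  · exact t.seg_disj i ⟨hi, hik⟩ j ⟨hj, hjk⟩ hij
  · exact h.disjoint.mono_left (t.seg_subset_carrier ⟨hi, hik⟩)
  · exact (h.disjoint.mono_left (t.seg_subset_carrier ⟨hj, hjk⟩)).symm
  · lia

/-- The tail obtained from `t` by attaching the further segment `R`. -/
def extend (h : t.IsNextSegment R p u) : Tail G d where
  carrier := t.carrier ∪ R
  k := t.k + 1
  seg i := if i ≤ t.k then t.seg i else R
  v0 := t.v0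
  u0 := t.u0
  vt i := if i ≤ t.k then t.vt i else t.uT
  vt' i := if i ≤ t.k then t.vt' i else p
  w := p
  uT := u
  k_pos := by lia
  carrier_eq := carrier_union_eq t R
  seg_disj _ hi _ hj := h.disjoint_seg hi hj
  seg1 := by rw [if_pos t.k_pos, t.seg1]
  seg1_card := by rw [if_pos t.k_pos, t.seg1_card]
  deg2_v0 := t.deg2_v0
  dist2_v0 := t.dist2_v0
  u0_nbrs := t.u0_nbrs
  compl_matching := t.compl_matching
  seg_card i hi := by
    split_ifs with hik
    exacts [t.seg_card i ⟨hi.1, hik⟩, h.ncard_eq]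
  vt_mem i hi := by
    split_ifs with hik
    exacts [t.vt_mem i ⟨hi.1, hik⟩, h.uT_mem]
  vt'_mem i hi := by
    split_ifs with hik
    exacts [t.vt'_mem i ⟨hi.1, hik⟩, h.mem]
  vt_ne i hi := by
    split_ifs with hik
    exacts [t.vt_ne i ⟨hi.1, hik⟩, h.ne]
  seg_adj i hi := by
    split_ifs with hik
    exacts [t.seg_adj i ⟨hi.1, hik⟩, h.adj_iff]
  inter_seg _ hi _ hj hij _ ha _ hb := h.inter_seg hi hj hij ha hb
  w_eq_of_k_ge_two _ := (if_neg (by lia)).symm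
  w_eq_of_k_eq_one hk := absurd t.k_pos (by lia)
  w_mem := .inr h.mem
  uT_not_mem := not_or_intro h.notMem_carrier h.notMem
  w_adj_uT := h.adj
  w_unique_out b hb hbn :=
    ((h.mem_or_of_adj p h.mem b hb).resolve_left fun hR => hbn (.inr hR)).elim
      (fun hpb => absurd hpb.1.symm h.ne) And.right
  others_in a ha hap b hab := by
    obtain ha | ha := ha
    · obtain hb | ⟨-, rfl⟩ := t.mem_carrier_or_of_adj ha hab
      exacts [.inl hb, .inr h.uT_mem]
    · obtain hb | ⟨-, rfl⟩ | ⟨rfl, -⟩ := h.mem_or_of_adj a ha b hab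
      exacts [.inr hb, .inl t.w_mem, absurd rfl hap]

end IsNextSegment
end Tail

variable [Fintype V]

/-! ### Second neighbourhoods -/

/-- The closed neighbourhood `N[v] = {v} ∪ N(v)`. -/
noncomputable def closedNbhd (G : SimpleGraph V) (v : V) : Finset V :=
  insert v (G.neighborFinset v)

/-- The second neighbourhood `N₂(v)`, as a finset. -/
noncomputable def secondNbhd (G : SimpleGraph V) (v : V) : Finset V := (distSet G v 2).toFinset

/-- The exits of `v`: the finset version of `N₂'(v)`. In the discharging argument the exits of a
vertex with small second neighbourhood are the vertices it may take charge from. -/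
noncomputable def exits (G : SimpleGraph V) (v : V) : Finset V := (N2' G v).toFinset

/-- The core of `v`: all vertices within distance two of `v` except its exits. An edge leaving the
core ends in an exit. -/
noncomputable def core (G : SimpleGraph V) (v : V) : Finset V :=
  closedNbhd G v ∪ (secondNbhd G v \ exits G v)

section Neighbourhoods

variable {S : Finset V} {v w x y z : V}

theorem mem_closedNbhd : z ∈ closedNbhd G v ↔ z = v ∨ G.Adj v z := by
  simp [closedNbhd]

theorem self_mem_closedNbhd (v : V) : v ∈ closedNbhd G v := mem_closedNbhd.2 (.inl rfl)

theorem mem_closedNbhd_of_adj (h : G.Adj v z) : z ∈ closedNbhd G v := mem_closedNbhd.2 (.inr h)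

theorem mem_closedNbhd_comm : z ∈ closedNbhd G v ↔ v ∈ closedNbhd G z := by
  rw [mem_closedNbhd, mem_closedNbhd, eq_comm, G.adj_comm]

theorem notMem_closedNbhd (h : z ≠ v) : z ∉ closedNbhd G v ↔ ¬ G.Adj v z := by
  simp [mem_closedNbhd, h]

theorem mem_secondNbhd_iff_dist : z ∈ secondNbhd G v ↔ G.dist v z = 2 := by
  rw [secondNbhd, Set.mem_toFinset, distSet, Set.mem_ofPred]

theorem mem_secondNbhd_iff :
    z ∈ secondNbhd G v ↔ z ≠ v ∧ ¬ G.Adj v z ∧ ∃ t, G.Adj v t ∧ G.Adj t z := by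
  rw [mem_secondNbhd_iff_dist, SimpleGraph.dist, ENat.toNat_eq_iff two_ne_zero, Nat.cast_ofNat,
    edist_eq_two_iff, Set.Nonempty, ne_comm]
  simp only [mem_commonNeighbors, G.adj_comm]

theorem mem_secondNbhd :
    z ∈ secondNbhd G v ↔ z ∉ closedNbhd G v ∧ ∃ t ∈ closedNbhd G v, G.Adj t z := by
  rw [mem_secondNbhd_iff]
  constructor
  · rintro ⟨hne, hnadj, t, hvt, htz⟩
    exact ⟨(notMem_closedNbhd hne).2 hnadj, t, mem_closedNbhd_of_adj hvt, htz⟩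
  · rintro ⟨hz, t, ht, htz⟩
    rw [mem_closedNbhd, not_or] at hz
    obtain rfl | hvt := mem_closedNbhd.1 ht
    · exact absurd htz hz.2
    · exact ⟨hz.1, hz.2, t, hvt, htz⟩

theorem notMem_closedNbhd_of_mem_secondNbhd (h : z ∈ secondNbhd G v) : z ∉ closedNbhd G v :=
  (mem_secondNbhd.1 h).1

theorem mem_secondNbhd_comm : z ∈ secondNbhd G v ↔ v ∈ secondNbhd G z := by
  rw [mem_secondNbhd_iff_dist, mem_secondNbhd_iff_dist, dist_comm]

theorem disjoint_closedNbhd_secondNbhd (v : V) : Disjoint (closedNbhd G v) (secondNbhd G v) :=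
  Finset.disjoint_right.2 fun _ => notMem_closedNbhd_of_mem_secondNbhd

theorem mem_closedNbhd_or_mem_secondNbhd_of_adj (hx : x ∈ closedNbhd G v) (h : G.Adj x z) :
    z ∈ closedNbhd G v ∨ z ∈ secondNbhd G v :=
  or_iff_not_imp_left.2 fun hz => mem_secondNbhd.2 ⟨hz, x, hx, h⟩

theorem secondNbhd_congr (h : closedNbhd G x = closedNbhd G v) :
    secondNbhd G x = secondNbhd G v := by
  ext z
  rw [mem_secondNbhd, mem_secondNbhd, h]

theorem mem_exits : z ∈ exits G v ↔
    z ∈ secondNbhd G v ∧ ∃ w, G.Adj z w ∧ w ∉ closedNbhd G v ∧ w ∉ secondNbhd G v := by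
  rw [mem_secondNbhd_iff_dist, exits, Set.mem_toFinset]
  refine and_congr_right fun hvz => exists_congr fun w => ?_
  rw [and_comm, and_congr_right_iff]
  intro hzw
  have hvw : G.Reachable v w := (Reachable.of_dist_ne_zero (by lia)).trans hzw.reachable
  have hle : G.dist v w ≤ 3 := by
    have := hzw.reachable.dist_triangle_right v
    rw [hvz, dist_eq_one_iff_adj.2 hzw] at this
    exact this
  rw [mem_closedNbhd, mem_secondNbhd_iff_dist, ← dist_eq_one_iff_adj, eq_comm (a := w),
    ← hvw.dist_eq_zero_iff]
  lia

theorem exits_subset_secondNbhd (v : V) : exits G v ⊆ secondNbhd G v :=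
  fun _ hz => (mem_exits.1 hz).1

theorem exits_congr (h : closedNbhd G x = closedNbhd G v) : exits G x = exits G v := by
  ext z
  rw [mem_exits, mem_exits, h, secondNbhd_congr h]

theorem self_mem_core (v : V) : v ∈ core G v := mem_union_left _ (self_mem_closedNbhd v)

theorem disjoint_core_exits (v : V) : Disjoint (core G v) (exits G v) :=
  disjoint_union_left.2 ⟨(disjoint_closedNbhd_secondNbhd v).mono_right (exits_subset_secondNbhd v),
    sdiff_disjoint⟩

theorem mem_core_or_mem_exits_of_adj (hx : x ∈ core G v) (h : G.Adj x z) :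
    z ∈ core G v ∨ z ∈ exits G v := by
  have hz : z ∈ closedNbhd G v ∨ z ∈ secondNbhd G v := by
    rw [core, mem_union, mem_sdiff] at hx
    obtain hx | hx := hx
    · exact mem_closedNbhd_or_mem_secondNbhd_of_adj hx h
    · by_contra! hz
      exact hx.2 (mem_exits.2 ⟨hx.1, z, h, hz⟩)
  rw [core, mem_union, mem_sdiff]
  tauto

theorem IsRegularGraph.card_neighborFinset (hreg : IsRegularGraph G d) (v : V) :
    #(G.neighborFinset v) = d := by
  rw [← Set.ncard_coe_finset, coe_neighborFinset, hreg v]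

theorem IsRegularGraph.card_inter_add_card_sdiff (hreg : IsRegularGraph G d) (u : V)
    (S : Finset V) : #(G.neighborFinset u ∩ S) + #(G.neighborFinset u \ S) = d := by
  rw [Finset.card_inter_add_card_sdiff, hreg.card_neighborFinset]

theorem IsRegularGraph.card_closedNbhd (hreg : IsRegularGraph G d) (v : V) :
    #(closedNbhd G v) = d + 1 := by
  rw [closedNbhd, card_insert_of_notMem (G.notMem_neighborFinset_self v), hreg.card_neighborFinset]

theorem IsRegularGraph.card_closedNbhd_sdiff_neighborFinset (hreg : IsRegularGraph G d) (v x : V) :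
    #(closedNbhd G v \ G.neighborFinset x) = #(G.neighborFinset x \ closedNbhd G v) + 1 := by
  have h₁ := Finset.card_inter_add_card_sdiff (closedNbhd G v) (G.neighborFinset x)
  have h₂ := hreg.card_inter_add_card_sdiff x (closedNbhd G v)
  rw [hreg.card_closedNbhd, inter_comm] at h₁
  lia

theorem IsRegularGraph.card_closedNbhd_sdiff_comm (hreg : IsRegularGraph G d) (v x : V) :
    #(closedNbhd G v \ closedNbhd G x) = #(closedNbhd G x \ closedNbhd G v) :=
  card_sdiff_comm (by rw [hreg.card_closedNbhd, hreg.card_closedNbhd])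

theorem IsRegularGraph.closedNbhd_eq_of_subset (hreg : IsRegularGraph G d)
    (h : closedNbhd G x ⊆ closedNbhd G v) : closedNbhd G x = closedNbhd G v :=
  eq_of_subset_of_card_le h (by rw [hreg.card_closedNbhd, hreg.card_closedNbhd])

theorem IsRegularGraph.closedNbhd_eq_of_forall_not_adj (hreg : IsRegularGraph G d)
    (hx : x ∈ closedNbhd G v) (h : ∀ z ∈ secondNbhd G v, ¬ G.Adj x z) :
    closedNbhd G x = closedNbhd G v := by
  refine hreg.closedNbhd_eq_of_subset fun z hz => ?_
  obtain rfl | hz := mem_closedNbhd.1 hz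
  · exact hx
  · exact (mem_closedNbhd_or_mem_secondNbhd_of_adj hx hz).resolve_right fun hz' => h z hz' hz

theorem IsRegularGraph.card_core_add_card_exits (hreg : IsRegularGraph G d) (v : V) :
    #(core G v) + #(exits G v) = d + 1 + #(secondNbhd G v) := by
  rw [core, card_union_of_disjoint ((disjoint_closedNbhd_secondNbhd v).mono_right sdiff_subset),
    hreg.card_closedNbhd, add_assoc, card_sdiff_add_card_eq_card (exits_subset_secondNbhd v)]

theorem graphSquare_adj :
    (graphSquare G).Adj v z ↔ G.Adj v z ∨ z ∈ secondNbhd G v := by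
  rw [mem_secondNbhd_iff_dist, ← dist_eq_one_iff_adj (G := G)]
  change 1 ≤ G.dist v z ∧ G.dist v z ≤ 2 ↔ _
  lia

theorem IsRegularGraph.le_card_of_graphSquare_ne_top (hreg : IsRegularGraph G d)
    (h : graphSquare G ≠ ⊤) : 2 * d + 2 ≤ Fintype.card V := by
  obtain ⟨x, y, hne, hxy⟩ : ∃ x y, x ≠ y ∧ ¬ (graphSquare G).Adj x y := by
    by_contra! hall
    exact h (top_unique fun x y hne => hall x y hne)
  rw [graphSquare_adj, not_or] at hxy
  have hdisj : Disjoint (closedNbhd G x) (closedNbhd G y) := by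
    refine Finset.disjoint_left.2 fun z hzx hzy => ?_
    obtain rfl | hzy := mem_closedNbhd.1 hzy
    · exact (mem_closedNbhd.1 hzx).elim hne.symm hxy.1
    · exact (mem_closedNbhd_or_mem_secondNbhd_of_adj hzx hzy.symm).elim
        (fun hy => (mem_closedNbhd.1 hy).elim hne.symm hxy.1) hxy.2
  have hcard := card_le_univ (closedNbhd G x ∪ closedNbhd G y)
  rw [card_union_of_disjoint hdisj, hreg.card_closedNbhd, hreg.card_closedNbhd] at hcard
  lia

theorem exits_nonempty (hconn : G.Connected)
    (h : #(closedNbhd G v) + #(secondNbhd G v) < Fintype.card V) : (exits G v).Nonempty := by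
  rw [nonempty_iff_ne_empty]
  intro hempty
  have hclosed : ∀ x ∈ core G v, ∀ z, G.Adj x z → z ∈ core G v := fun x hx z hxz =>
    (mem_core_or_mem_exits_of_adj hx hxz).resolve_right (by simp [hempty])
  have huniv : (univ : Finset V) ⊆ closedNbhd G v ∪ secondNbhd G v := fun z _ => by
    have := mem_of_forall_adj_mem (S := core G v) hconn (self_mem_core v) hclosed z
    rwa [core, hempty, sdiff_empty] at this
  have := (card_le_card huniv).trans (card_union_le _ _)
  rw [card_univ] at this
  lia

theorem IsRegularGraph.secondNbhd_eq_empty_of_forall_common (hreg : IsRegularGraph G d)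
    (hu : G.Adj v w) (h : ∀ z ∈ secondNbhd G v, ∀ t, G.Adj v t → G.Adj t z → t = w) :
    secondNbhd G v = ∅ := by
  by_contra hne
  obtain ⟨z, hz⟩ := nonempty_of_ne_empty hne
  obtain ⟨-, -, t, hvt, htz⟩ := mem_secondNbhd_iff.1 hz
  obtain rfl := h z hz t hvt htz
  have hpos : 0 < #(closedNbhd G t \ closedNbhd G v) :=
    card_pos.2 ⟨z, mem_sdiff.2
      ⟨mem_closedNbhd_of_adj htz, notMem_closedNbhd_of_mem_secondNbhd hz⟩⟩
  rw [hreg.card_closedNbhd_sdiff_comm] at hpos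
  obtain ⟨x, hx⟩ := card_pos.1 hpos
  rw [mem_sdiff, mem_closedNbhd] at hx
  obtain rfl | hvx := hx.1
  · exact hx.2 (mem_closedNbhd_of_adj hvt.symm)
  have hxt : x ≠ t := by
    rintro rfl
    exact hx.2 (self_mem_closedNbhd x)
  have htwin : closedNbhd G x = closedNbhd G v :=
    hreg.closedNbhd_eq_of_forall_not_adj (mem_closedNbhd_of_adj hvx) fun z' hz' hxz' =>
      hxt (h z' hz' x hvx hxz')
  exact hx.2 (mem_closedNbhd_comm.1 (htwin ▸ mem_closedNbhd_of_adj hvt))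

theorem IsRegularGraph.lt_card_secondNbhd_add_of_mem_exits (hreg : IsRegularGraph G d)
    (h : w ∈ exits G v) : d < #(secondNbhd G w) + #(secondNbhd G v) := by
  obtain ⟨hw, t, hwt, ht, ht'⟩ := mem_exits.1 h
  obtain ⟨-, -, y, hvy, hyw⟩ := mem_secondNbhd_iff.1 hw
  have hy : y ∈ closedNbhd G v := mem_closedNbhd_of_adj hvy
  have hyt : ¬ G.Adj y t := fun hyt =>
    (mem_closedNbhd_or_mem_secondNbhd_of_adj hy hyt).elim ht ht'
  have hty : t ≠ y := fun hty => ht (hty ▸ hy)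
  have hinter : G.neighborFinset y ∩ G.neighborFinset t ⊆ secondNbhd G v := by
    intro z hz
    simp only [mem_inter, mem_neighborFinset] at hz
    refine (mem_closedNbhd_or_mem_secondNbhd_of_adj hy hz.1).resolve_left fun hzv => ?_
    exact (mem_closedNbhd_or_mem_secondNbhd_of_adj hzv hz.2.symm).elim ht ht'
  have hunion : G.neighborFinset y ∪ G.neighborFinset t ⊆
      secondNbhd G w ∪ ((closedNbhd G w).erase y).erase t := by
    intro z hz
    have hzy : z ≠ y := by rintro rfl; simp [G.adj_comm t, hyt] at hz
    have hzt : z ≠ t := by rintro rfl; simp [hyt] at hz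
    simp only [mem_union, mem_neighborFinset, mem_erase, ne_eq, hzy, hzt, not_false_eq_true,
      true_and] at hz ⊢
    exact (hz.elim (mem_closedNbhd_or_mem_secondNbhd_of_adj (mem_closedNbhd_of_adj hyw.symm))
      (mem_closedNbhd_or_mem_secondNbhd_of_adj (mem_closedNbhd_of_adj hwt))).symm
  have herase : #(((closedNbhd G w).erase y).erase t) = d - 1 := by
    rw [card_erase_of_mem (mem_erase.2 ⟨hty, mem_closedNbhd_of_adj hwt⟩),
      card_erase_of_mem (mem_closedNbhd_of_adj hyw.symm), hreg.card_closedNbhd, Nat.add_sub_cancel]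
  have hcard := card_union_add_card_inter (G.neighborFinset y) (G.neighborFinset t)
  rw [hreg.card_neighborFinset, hreg.card_neighborFinset] at hcard
  have hpos : 0 < d := hreg.card_neighborFinset v ▸ card_pos.2 ⟨y, by simpa using hvy⟩
  have := card_le_card hinter
  have := (card_le_card hunion).trans (card_union_le _ _)
  lia

theorem even_sum_card_neighborFinset_inter (G : SimpleGraph V) (S : Finset V) :
    Even (∑ x ∈ S, #(G.neighborFinset x ∩ S)) := by
  have hdeg (x : (S : Set V)) : (G.induce S).degree x = #(G.neighborFinset x ∩ S) := by
    have := congrArg card (map_neighborFinset_induce (G := G) x)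
    rw [card_map, Finset.toFinset_coe, card_neighborFinset_eq_degree] at this
    convert this
  have hsum := (G.induce (S : Set V)).sum_degrees_eq_twice_card_edges
  simp only [hdeg] at hsum
  rw [← Finset.sum_coe_sort]
  exact ⟨_, hsum.trans (two_mul _)⟩

theorem IsRegularGraph.even_mul_card_add_sum_boundary (hreg : IsRegularGraph G d)
    {B : Finset V} (hdisj : Disjoint S B) (h : ∀ x ∈ S, ∀ z, G.Adj x z → z ∈ S ∨ z ∈ B) :
    Even (d * #S + ∑ p ∈ B, #(G.neighborFinset p ∩ S)) := by
  have hsplit : ∀ x ∈ S, #(G.neighborFinset x ∩ S) + #(G.neighborFinset x ∩ B) = d := by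
    intro x hx
    rw [← hreg.card_neighborFinset x, ← card_union_of_disjoint
      (hdisj.mono inter_subset_right inter_subset_right), ← inter_union_distrib_left,
      inter_eq_left.2 fun z hz => mem_union.2 (h x hx z (by simpa using hz))]
  have hdouble : ∑ x ∈ S, #(G.neighborFinset x ∩ B) = ∑ p ∈ B, #(G.neighborFinset p ∩ S) := by
    convert sum_card_bipartiteAbove_eq_sum_card_bipartiteBelow (s := S) (t := B) G.Adj using 3
    · ext z; simp [bipartiteAbove, and_comm]
    · ext z; simp [bipartiteBelow, and_comm, G.adj_comm]
  have hsum := sum_congr rfl hsplit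
  rw [sum_add_distrib, hdouble, sum_const, smul_eq_mul, mul_comm] at hsum
  rw [← hsum, add_assoc]
  exact (even_sum_card_neighborFinset_inter G S).add (Even.add_self _)

end Neighbourhoods

/-! ### Pendant blocks -/

/-- A pendant block of excess `k ∈ {1, 2}` in a `d`-regular graph, `d > 6`: a set `C` of `d + k`
vertices which `u ∉ C` separates from the rest of the graph, where `u` has neighbours both inside
and outside `C`. Each vertex of `C` then misses at most `k` other vertices of `C`. -/
structure IsPendantBlock (G : SimpleGraph V) (d k : ℕ) (C : Finset V) (u : V) : Prop where
  regular : IsRegularGraph G d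
  lt_degree : 6 < d
  one_le : 1 ≤ k
  le_two : k ≤ 2
  card_eq : #C = d + k
  notMem : u ∉ C
  mem_or_eq_of_adj : ∀ x ∈ C, ∀ z, G.Adj x z → z ∈ C ∨ z = u
  exists_adj_notMem : ∃ w, G.Adj u w ∧ w ∉ C
  exists_adj_mem : ∃ x ∈ C, G.Adj u x

theorem IsRegularGraph.isPendantBlock_core (hreg : IsRegularGraph G d) (hd : 6 < d) {u v : V}
    (hexits : exits G v = {u}) (hle : #(secondNbhd G v) ≤ 2) :
    IsPendantBlock G d #(secondNbhd G v) (core G v) u := by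
  have hu : u ∈ exits G v := hexits ▸ mem_singleton_self u
  obtain ⟨hu₂, w, huw, hw, hw₂⟩ := mem_exits.1 hu
  obtain ⟨-, -, t, hvt, htu⟩ := mem_secondNbhd_iff.1 hu₂
  refine ⟨hreg, hd, card_pos.2 ⟨u, hu₂⟩, hle, ?_,
    Finset.disjoint_right.1 (disjoint_core_exits v) hu, fun x hx z hxz => ?_, ⟨w, huw, ?_⟩,
    t, mem_union_left _ (mem_closedNbhd_of_adj hvt), htu.symm⟩
  · have := hreg.card_core_add_card_exits v
    rw [hexits, card_singleton] at this
    lia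
  · simpa only [hexits, mem_singleton] using mem_core_or_mem_exits_of_adj hx hxz
  · simp [core, hw, hw₂]

theorem two_le_card_common_neighborFinset {S : Finset V} {x y : V} (hS : 8 ≤ #S)
    (hx : #(S \ closedNbhd G x) ≤ 2) (hy : #(S \ closedNbhd G y) ≤ 2) :
    2 ≤ #(G.neighborFinset x ∩ G.neighborFinset y ∩ S) := by
  have hsub : S ⊆ (G.neighborFinset x ∩ G.neighborFinset y ∩ S) ∪
      ((S \ closedNbhd G x) ∪ (S \ closedNbhd G y) ∪ {x, y}) := by
    intro z hz
    simp only [mem_union, mem_inter, mem_sdiff, mem_neighborFinset, mem_closedNbhd, mem_insert,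
      mem_singleton]
    tauto
  have := (card_le_card hsub).trans (card_union_le _ _)
  have := card_union_le (S \ closedNbhd G x ∪ S \ closedNbhd G y) {x, y}
  have := card_union_le (S \ closedNbhd G x) (S \ closedNbhd G y)
  have := card_le_two (a := x) (b := y)
  lia

namespace IsPendantBlock

variable {C : Finset V} {k : ℕ} {q u x y : V}

theorem closedNbhd_subset (P : IsPendantBlock G d k C u) (hx : x ∈ C) (hux : ¬ G.Adj u x) :
    closedNbhd G x ⊆ C := by
  intro z hz
  obtain rfl | hz := mem_closedNbhd.1 hz
  · exact hx
  · refine (P.mem_or_eq_of_adj x hx z hz).resolve_right ?_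
    rintro rfl
    exact hux hz.symm

theorem card_sdiff_closedNbhd_of_not_adj (P : IsPendantBlock G d k C u) (hx : x ∈ C)
    (hux : ¬ G.Adj u x) : #(C \ closedNbhd G x) + 1 = k := by
  have := card_sdiff_add_card_eq_card (P.closedNbhd_subset hx hux)
  rw [P.regular.card_closedNbhd, P.card_eq] at this
  lia

theorem card_sdiff_closedNbhd_of_adj (P : IsPendantBlock G d k C u) (hx : x ∈ C)
    (hux : G.Adj u x) : #(C \ closedNbhd G x) = k := by
  have hsub : (closedNbhd G x).erase u ⊆ C := by
    intro z hz
    obtain ⟨hzu, hz⟩ := mem_erase.1 hz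
    obtain rfl | hz := mem_closedNbhd.1 hz
    · exact hx
    · exact (P.mem_or_eq_of_adj x hx z hz).resolve_right hzu
  have hcard := card_sdiff_add_card_eq_card hsub
  rw [card_erase_of_mem (mem_closedNbhd_of_adj hux.symm), P.regular.card_closedNbhd,
    P.card_eq, ← sdiff_singleton_eq_erase, sdiff_sdiff_right', inf_eq_inter,
    inter_singleton_of_notMem P.notMem, sup_eq_union, union_empty] at hcard
  lia

theorem card_sdiff_closedNbhd_le (P : IsPendantBlock G d k C u) (hx : x ∈ C) :
    #(C \ closedNbhd G x) ≤ k := by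
  by_cases hux : G.Adj u x
  · exact (P.card_sdiff_closedNbhd_of_adj hx hux).le
  · exact Nat.le_of_lt (P.card_sdiff_closedNbhd_of_not_adj hx hux).le

theorem two_le_card_common (P : IsPendantBlock G d k C u) (hx : x ∈ C) (hy : y ∈ C) :
    2 ≤ #(G.neighborFinset x ∩ G.neighborFinset y ∩ C) :=
  two_le_card_common_neighborFinset (by rw [P.card_eq]; linarith [P.lt_degree, P.one_le])
    ((P.card_sdiff_closedNbhd_le hx).trans P.le_two)
    ((P.card_sdiff_closedNbhd_le hy).trans P.le_two)

theorem mem_secondNbhd_of_mem_sdiff (P : IsPendantBlock G d k C u) (hx : x ∈ C)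
    (hy : y ∈ C \ closedNbhd G x) : y ∈ secondNbhd G x := by
  rw [mem_sdiff] at hy
  obtain ⟨t, ht⟩ := card_pos.1 (two_pos.trans_le (P.two_le_card_common hx hy.1))
  simp only [mem_inter, mem_neighborFinset] at ht
  exact mem_secondNbhd.2 ⟨hy.2, t, mem_closedNbhd_of_adj ht.1.1, ht.1.2.symm⟩

theorem card_neighborFinset_inter_pos (P : IsPendantBlock G d k C u) :
    0 < #(G.neighborFinset u ∩ C) := by
  obtain ⟨x, hx, hux⟩ := P.exists_adj_mem
  exact card_pos.2 ⟨x, by simp [hx, hux]⟩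

theorem card_neighborFinset_sdiff_pos (P : IsPendantBlock G d k C u) :
    0 < #(G.neighborFinset u \ C) := by
  obtain ⟨w, huw, hw⟩ := P.exists_adj_notMem
  exact card_pos.2 ⟨w, by simp [hw, huw]⟩

theorem card_sdiff_neighborFinset (P : IsPendantBlock G d k C u) :
    #(C \ G.neighborFinset u) = #(G.neighborFinset u \ C) + k := by
  have := P.regular.card_inter_add_card_sdiff u C
  have := card_sdiff_add_card_inter C (G.neighborFinset u)
  rw [inter_comm, P.card_eq] at this
  lia

theorem sdiff_neighborFinset_nonempty (P : IsPendantBlock G d k C u) :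
    (C \ G.neighborFinset u).Nonempty :=
  card_pos.1 (P.card_sdiff_neighborFinset.symm ▸
    Nat.add_pos_left P.card_neighborFinset_sdiff_pos k)

theorem two_le_card_neighborFinset_inter (P : IsPendantBlock G d 1 C u) :
    2 ≤ #(G.neighborFinset u ∩ C) := by
  obtain ⟨x, hx, hux⟩ := P.exists_adj_mem
  obtain ⟨y, hy⟩ := card_pos.1 (P.card_sdiff_closedNbhd_of_adj hx hux).ge
  rw [mem_sdiff] at hy
  have huy : G.Adj u y := by
    by_contra huy
    have hempty : C \ closedNbhd G y = ∅ :=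
      card_eq_zero.1 (Nat.succ.inj (P.card_sdiff_closedNbhd_of_not_adj hy.1 huy))
    exact hy.2 (mem_closedNbhd_comm.1 (sdiff_eq_empty_iff_subset.1 hempty hx))
  have hne : x ≠ y := by
    rintro rfl
    exact hy.2 (self_mem_closedNbhd x)
  rw [← card_pair hne]
  exact card_le_card (by simp [insert_subset_iff, hx, hux, hy.1, huy])

theorem secondNbhd_of_not_adj (P : IsPendantBlock G d k C u) (hx : x ∈ C) (hux : ¬ G.Adj u x)
    (hcommon : ∃ t ∈ C, G.Adj x t ∧ G.Adj u t) :
    secondNbhd G x = insert u (C \ closedNbhd G x) := by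
  ext z
  rw [mem_insert]
  constructor
  · intro hz
    obtain ⟨hzx, t, ht, htz⟩ := mem_secondNbhd.1 hz
    exact (P.mem_or_eq_of_adj t (P.closedNbhd_subset hx hux ht) z htz).symm.imp_right
      fun hz => mem_sdiff.2 ⟨hz, hzx⟩
  · rintro (rfl | hz)
    · obtain ⟨t, -, hxt, hut⟩ := hcommon
      exact mem_secondNbhd.2 ⟨fun h => P.notMem (P.closedNbhd_subset hx hux h), t,
        mem_closedNbhd_of_adj hxt, hut.symm⟩
    · exact P.mem_secondNbhd_of_mem_sdiff hx hz

theorem card_secondNbhd_of_not_adj (P : IsPendantBlock G d k C u) (hx : x ∈ C)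
    (hux : ¬ G.Adj u x) (hcommon : ∃ t ∈ C, G.Adj x t ∧ G.Adj u t) :
    #(secondNbhd G x) = k := by
  rw [P.secondNbhd_of_not_adj hx hux hcommon,
    card_insert_of_notMem fun h => P.notMem (mem_sdiff.1 h).1,
    P.card_sdiff_closedNbhd_of_not_adj hx hux]

theorem exits_of_not_adj (P : IsPendantBlock G d k C u) (hx : x ∈ C) (hux : ¬ G.Adj u x)
    (hcommon : ∃ t ∈ C, G.Adj x t ∧ G.Adj u t) : exits G x = {u} := by
  have hN := P.secondNbhd_of_not_adj hx hux hcommon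
  ext z
  rw [mem_singleton, mem_exits, hN, mem_insert]
  constructor
  · rintro ⟨hz | hz, w, hzw, hw, hw'⟩
    · exact hz
    · have := P.mem_or_eq_of_adj z (mem_sdiff.1 hz).1 w hzw
      simp only [mem_insert, mem_sdiff] at hw'
      tauto
  · rintro rfl
    obtain ⟨w, hzw, hw⟩ := P.exists_adj_notMem
    refine ⟨.inl rfl, w, hzw, fun h => hw (P.closedNbhd_subset hx hux h), fun h => ?_⟩
    obtain rfl | h := mem_insert.1 h
    · exact hzw.ne rfl
    · exact hw (mem_sdiff.1 h).1

theorem core_of_not_adj (P : IsPendantBlock G d k C u) (hx : x ∈ C) (hux : ¬ G.Adj u x)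
    (hcommon : ∃ t ∈ C, G.Adj x t ∧ G.Adj u t) : core G x = C := by
  rw [core, P.exits_of_not_adj hx hux hcommon, P.secondNbhd_of_not_adj hx hux hcommon,
    sdiff_singleton_eq_erase, erase_insert fun h => P.notMem (mem_sdiff.1 h).1,
    union_sdiff_of_subset (P.closedNbhd_subset hx hux)]

theorem exists_common_of_not_adj (P : IsPendantBlock G d k C u)
    (ha : 2 ≤ #(G.neighborFinset u ∩ C)) (hx : x ∈ C) (hux : ¬ G.Adj u x) :
    ∃ t ∈ C, G.Adj x t ∧ G.Adj u t := by
  by_contra! hnone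
  have hsub : G.neighborFinset u ∩ C ⊆ C \ closedNbhd G x := by
    intro z hz
    rw [mem_inter, mem_neighborFinset] at hz
    rw [mem_sdiff, mem_closedNbhd]
    refine ⟨hz.2, ?_⟩
    rintro (rfl | hxz)
    exacts [hux hz.1, hnone z hz.2 hxz hz.1]
  have := card_le_card hsub
  have := P.card_sdiff_closedNbhd_of_not_adj hx hux
  have := P.le_two
  lia

theorem secondNbhd_of_adj (P : IsPendantBlock G d k C u) (hx : x ∈ C) (hux : G.Adj u x) :
    secondNbhd G x = (C \ closedNbhd G x) ∪ (G.neighborFinset u \ C) := by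
  ext z
  rw [mem_union]
  constructor
  · intro hz
    obtain ⟨hzx, hxz, t, hxt, htz⟩ := mem_secondNbhd_iff.1 hz
    by_cases hzC : z ∈ C
    · exact .inl (mem_sdiff.2 ⟨hzC, (notMem_closedNbhd hzx).2 hxz⟩)
    obtain ht | rfl := P.mem_or_eq_of_adj x hx t hxt
    · obtain rfl := (P.mem_or_eq_of_adj t ht z htz).resolve_left hzC
      exact absurd hux.symm hxz
    · exact .inr (by simp [htz, hzC])
  · rintro (hz | hz)
    · exact P.mem_secondNbhd_of_mem_sdiff hx hz
    · rw [mem_sdiff, mem_neighborFinset] at hz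
      refine mem_secondNbhd.2 ⟨fun hxz => ?_, u, mem_closedNbhd_of_adj hux.symm, hz.1⟩
      obtain rfl | hxz := mem_closedNbhd.1 hxz
      · exact hz.2 hx
      · exact (P.mem_or_eq_of_adj x hx z hxz).elim hz.2 hz.1.ne'

theorem card_secondNbhd_of_adj (P : IsPendantBlock G d k C u) (hx : x ∈ C) (hux : G.Adj u x) :
    #(secondNbhd G x) = k + #(G.neighborFinset u \ C) := by
  rw [P.secondNbhd_of_adj hx hux, card_union_of_disjoint (disjoint_sdiff.mono_left sdiff_subset),
    P.card_sdiff_closedNbhd_of_adj hx hux]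

theorem exits_subset_of_adj (P : IsPendantBlock G d k C u) (hx : x ∈ C) (hux : G.Adj u x) :
    exits G x ⊆ G.neighborFinset u \ C := by
  intro z hz
  obtain ⟨hz₂, w, hzw, hw, hw₂⟩ := mem_exits.1 hz
  rw [P.secondNbhd_of_adj hx hux, mem_union] at hz₂ hw₂
  refine hz₂.resolve_left fun hzC => ?_
  obtain hwC | rfl := P.mem_or_eq_of_adj z (mem_sdiff.1 hzC).1 w hzw
  · exact hw₂ (.inl (mem_sdiff.2 ⟨hwC, hw⟩))
  · exact hw (mem_closedNbhd_of_adj hux.symm)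

omit [Fintype V] in
theorem not_adj_of_notMem (P : IsPendantBlock G d k C u) (hq : q ∉ C) (hqu : q ≠ u)
    (hx : x ∈ C) : ¬ G.Adj q x := fun h =>
  (P.mem_or_eq_of_adj x hx q h.symm).elim hq hqu

theorem adj_of_mem_secondNbhd (P : IsPendantBlock G d k C u) (hx : x ∈ C) (hux : G.Adj u x)
    (hq : q ∉ C) (hqx : x ∈ secondNbhd G q) : G.Adj u q := by
  obtain ⟨-, hnadj, t, hqt, htx⟩ := mem_secondNbhd_iff.1 hqx
  have hqu : q ≠ u := by
    rintro rfl
    exact hnadj hux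
  obtain ht | rfl := P.mem_or_eq_of_adj x hx t htx.symm
  · exact absurd hqt (P.not_adj_of_notMem hq hqu ht)
  · exact hqt.symm

theorem neighborFinset_inter_eq_singleton (P : IsPendantBlock G d k C u) (hx : x ∈ C)
    (hux : G.Adj u x) (hq : q ∉ C) (huq : G.Adj u q) :
    G.neighborFinset x ∩ G.neighborFinset q = {u} := by
  ext z
  rw [mem_inter, mem_neighborFinset, mem_neighborFinset, mem_singleton]
  constructor
  · rintro ⟨hxz, hqz⟩
    exact (P.mem_or_eq_of_adj x hx z hxz).resolve_left fun hz =>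
      P.not_adj_of_notMem hq huq.ne' hz hqz
  · rintro rfl
    exact ⟨hux.symm, huq.symm⟩

theorem neighborFinset_inter_subset_exits (P : IsPendantBlock G d k C u) (hq : q ∉ C)
    (huq : G.Adj u q) : G.neighborFinset u ∩ C ⊆ exits G q := by
  intro p hp
  rw [mem_inter, mem_neighborFinset] at hp
  have hfar : ∀ z ∈ C, z ∉ closedNbhd G q := fun z hz hqz =>
    (mem_closedNbhd.1 hqz).elim (fun h => hq (h ▸ hz)) (P.not_adj_of_notMem hq huq.ne' hz)
  refine mem_exits.2
    ⟨mem_secondNbhd.2 ⟨hfar p hp.2, u, mem_closedNbhd_of_adj huq.symm, hp.1⟩, ?_⟩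
  have hlt : #(C \ closedNbhd G p) < #(C \ G.neighborFinset u) := by
    rw [P.card_sdiff_closedNbhd_of_adj hp.2 hp.1, P.card_sdiff_neighborFinset]
    exact Nat.lt_add_of_pos_left P.card_neighborFinset_sdiff_pos
  obtain ⟨z, hz, hzp⟩ := exists_mem_notMem_of_card_lt_card hlt
  rw [mem_sdiff, mem_neighborFinset] at hz
  have hpz : G.Adj p z := by
    have : z ∈ closedNbhd G p := by simpa [hz.1] using hzp
    obtain rfl | h := mem_closedNbhd.1 this
    exacts [absurd hp.1 hz.2, h]
  refine ⟨z, hpz, hfar z hz.1, fun hz₂ => ?_⟩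
  obtain ⟨-, s, hqs, hsz⟩ := mem_secondNbhd.1 hz₂
  obtain hs | rfl := P.mem_or_eq_of_adj z hz.1 s hsz.symm
  exacts [hfar s hs hqs, hz.2 hsz]

theorem degree_lt_card_secondNbhd_add (P : IsPendantBlock G d k C u)
    (ha : 2 ≤ #(G.neighborFinset u ∩ C)) : d < #(secondNbhd G u) + k := by
  obtain ⟨z, hz⟩ := P.sdiff_neighborFinset_nonempty
  obtain ⟨hz, huz⟩ : z ∈ C ∧ ¬ G.Adj u z := by simpa using hz
  have hcommon := P.exists_common_of_not_adj ha hz huz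
  rw [← P.card_secondNbhd_of_not_adj hz huz hcommon]
  refine P.regular.lt_card_secondNbhd_add_of_mem_exits ?_
  rw [P.exits_of_not_adj hz huz hcommon, mem_singleton]

end IsPendantBlock

theorem coe_closedNbhd (v : V) : (closedNbhd G v : Set V) = {v} ∪ G.neighborSet v := by
  ext z
  simp [mem_closedNbhd]

theorem coe_secondNbhd (v : V) : (secondNbhd G v : Set V) = distSet G v 2 := by
  simp [secondNbhd]

theorem exists_involution_of_card_sdiff_closedNbhd_eq_one {S A : Finset V} (hAS : A ⊆ S)
    (hone : ∀ x ∈ A, #(S \ closedNbhd G x) = 1)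
    (hclosed : ∀ x ∈ A, ∀ y ∈ S, y ∉ closedNbhd G x → y ∈ A) :
    ∃ m : V → V, (∀ x ∈ A, m x ∈ A ∧ m x ≠ x ∧ m (m x) = x) ∧
      ∀ x ∈ A, ∀ y ∈ S, x ≠ y → (¬ G.Adj x y ↔ y = m x) := by
  have hex : ∀ x, ∃ y, x ∈ A → S \ closedNbhd G x = {y} := fun x => by
    by_cases hx : x ∈ A
    · exact (card_eq_one.1 (hone x hx)).imp fun y hy _ => hy
    · exact ⟨x, fun h => absurd h hx⟩
  choose m hm using hex
  have hiff : ∀ x ∈ A, ∀ y, y ∈ S ∧ y ∉ closedNbhd G x ↔ y = m x := fun x hx y => by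
    rw [← mem_sdiff, hm x hx, mem_singleton]
  have hmem : ∀ x ∈ A, m x ∈ S ∧ m x ∉ closedNbhd G x := fun x hx => (hiff x hx _).2 rfl
  have hmA : ∀ x ∈ A, m x ∈ A := fun x hx => hclosed x hx _ (hmem x hx).1 (hmem x hx).2
  refine ⟨m, fun x hx => ⟨hmA x hx, fun h => ?_, ?_⟩, fun x hx y hy hne => ?_⟩
  · exact (hmem x hx).2 (by rw [h]; exact self_mem_closedNbhd x)
  · exact ((hiff _ (hmA x hx) x).1 ⟨hAS hx, mt mem_closedNbhd_comm.1 (hmem x hx).2⟩).symm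
  · rw [← hiff x hx, notMem_closedNbhd hne.symm, and_iff_right hy]

theorem eq_of_adj_of_inter_eq_singleton {p u v x : V} (hp : p ∈ secondNbhd G v)
    (hinter : G.neighborFinset p ∩ G.neighborFinset v = {u}) (hx : x ∈ closedNbhd G v)
    (hxp : G.Adj x p) : x = u := by
  obtain rfl | hvx := mem_closedNbhd.1 hx
  · exact absurd hxp (mem_secondNbhd_iff.1 hp).2.1
  · rw [← mem_singleton, ← hinter]
    simp [hvx, hxp.symm]

/-- `X` is the vertex set of a tail in the `d`-regular graph `G` whose only edge to the outside is
`p u`, where `p ∈ X`. The parity of `d` and the second neighbourhoods of the vertices that see `p`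
at distance two are determined by the tail; they are recorded as its segments are attached one by
one. -/
structure IsTailEnd (G : SimpleGraph V) (d : ℕ) (p u : V) (X : Finset V) : Prop where
  exists_tail : ∃ t : Tail G d, t.w = p ∧ t.uT = u ∧ t.carrier = X
  odd : Odd d
  card_eq_one_or_le : ∀ v ∈ X, p ∈ secondNbhd G v →
    (#(secondNbhd G v) = 1 ∧ #(G.neighborFinset p \ closedNbhd G v) = 1) ∨ 4 ≤ #(secondNbhd G v)

namespace IsTailEnd

variable {p u v x z : V} {X Y : Finset V}

theorem mem (T : IsTailEnd G d p u X) : p ∈ X := by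
  obtain ⟨t, rfl, -, ht⟩ := T.exists_tail
  exact mem_coe.1 (ht ▸ t.w_mem)

theorem notMem (T : IsTailEnd G d p u X) : u ∉ X := by
  obtain ⟨t, -, rfl, ht⟩ := T.exists_tail
  exact mt mem_coe.2 (ht ▸ t.uT_not_mem)

theorem adj (T : IsTailEnd G d p u X) : G.Adj p u := by
  obtain ⟨t, rfl, rfl, -⟩ := T.exists_tail
  exact t.w_adj_uT

theorem mem_or_of_adj (T : IsTailEnd G d p u X) (hx : x ∈ X) (h : G.Adj x z) :
    z ∈ X ∨ (x = p ∧ z = u) := by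
  obtain ⟨t, rfl, rfl, ht⟩ := T.exists_tail
  rw [← mem_coe, ← ht] at hx ⊢
  exact t.mem_carrier_or_of_adj hx h

theorem eq_of_adj_of_adj (T : IsTailEnd G d p u X) (hv : v ∉ X) (hvx : G.Adj v x)
    (hxp : G.Adj x p) : x = u :=
  ((T.mem_or_of_adj T.mem hxp.symm).resolve_left fun hx =>
    (T.mem_or_of_adj hx hvx.symm).elim hv fun h => hxp.ne h.1).2

theorem adj_of_mem_secondNbhd (T : IsTailEnd G d p u X) (hv : v ∉ X) (hp : p ∈ secondNbhd G v) :
    G.Adj v u := by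
  obtain ⟨-, -, x, hvx, hxp⟩ := mem_secondNbhd_iff.1 hp
  exact T.eq_of_adj_of_adj hv hvx hxp ▸ hvx

theorem disjoint_closedNbhd (T : IsTailEnd G d p u X) (hv : v ∉ X) (hp : p ∈ secondNbhd G v) :
    Disjoint X (closedNbhd G v) := by
  refine Finset.disjoint_left.2 fun z hz hvz => ?_
  obtain rfl | hvz := mem_closedNbhd.1 hvz
  · exact hv hz
  · obtain hv' | ⟨rfl, -⟩ := T.mem_or_of_adj hz hvz.symm
    exacts [hv hv', (mem_secondNbhd_iff.1 hp).2.1 hvz]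

theorem neighborFinset_inter_eq_singleton (T : IsTailEnd G d p u X) (hv : v ∉ X)
    (hp : p ∈ secondNbhd G v) : G.neighborFinset p ∩ G.neighborFinset v = {u} := by
  ext z
  rw [mem_inter, mem_neighborFinset, mem_neighborFinset, mem_singleton]
  constructor
  · exact fun ⟨hpz, hvz⟩ => T.eq_of_adj_of_adj hv hvz hpz.symm
  · rintro rfl
    exact ⟨T.adj, T.adj_of_mem_secondNbhd hv hp⟩

theorem degree_le_card_secondNbhd_add_one (T : IsTailEnd G d p u X) (hreg : IsRegularGraph G d) :
    d ≤ #(secondNbhd G u) + 1 := by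
  have hsub : (G.neighborFinset p).erase u ⊆ secondNbhd G u := by
    intro z hz
    rw [mem_erase, mem_neighborFinset] at hz
    refine mem_secondNbhd_iff.2 ⟨hz.1, fun huz => ?_, p, T.adj.symm, hz.2⟩
    have hzX : z ∈ X := (T.mem_or_of_adj T.mem hz.2).resolve_right fun h => hz.1 h.2
    obtain hu | ⟨rfl, -⟩ := T.mem_or_of_adj hzX huz.symm
    exacts [T.notMem hu, hz.2.ne rfl]
  have := card_le_card hsub
  rw [card_erase_of_mem (by simpa using T.adj), hreg.card_neighborFinset] at this
  lia

theorem isSnake (T : IsTailEnd G d p u X) (T' : IsTailEnd G d u p Y) (hdisj : Disjoint X Y)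
    (hconn : G.Connected) (hreg : IsRegularGraph G d) : IsSnake G d := by
  have hcover : ∀ z, z ∈ ((X ∪ Y : Finset V) : Set V) :=
    mem_of_forall_adj_mem hconn (mem_union_left _ T.mem) fun x hx z hxz => by
      rw [mem_coe, mem_union] at hx ⊢
      obtain hx | hx := hx
      · obtain hz | ⟨-, rfl⟩ := T.mem_or_of_adj hx hxz
        exacts [.inl hz, .inr T'.mem]
      · obtain hz | ⟨-, rfl⟩ := T'.mem_or_of_adj hx hxz
        exacts [.inr hz, .inl T.mem]
  have hcross : ∀ a ∈ X, ∀ b ∈ Y, G.Adj a b → a = p ∧ b = u := fun a ha b hb hab =>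
    (T.mem_or_of_adj ha hab).resolve_left fun hbX => Finset.disjoint_left.1 hdisj hbX hb
  obtain ⟨t, hp, hu, ht⟩ := T.exists_tail
  obtain ⟨t', hu', hp', ht'⟩ := T'.exists_tail
  refine ⟨hconn, hreg, t, t', ?_, ?_, hu.trans hu'.symm, hp'.trans hp.symm, ?_⟩
  · rwa [ht, ht', disjoint_coe]
  · rw [ht, ht', ← coe_union]
    exact Set.eq_univ_of_forall hcover
  · rw [ht, ht', hp, hu']
    exact hcross

end IsTailEnd

namespace IsPendantBlock

variable {C : Finset V} {u w x y : V}

theorem closedNbhd_eq_of_not_adj (P : IsPendantBlock G d 1 C u) (hy : y ∈ C)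
    (huy : ¬ G.Adj u y) : closedNbhd G y = C := by
  have hempty := card_eq_zero.1 (Nat.succ.inj (P.card_sdiff_closedNbhd_of_not_adj hy huy))
  exact (P.closedNbhd_subset hy huy).antisymm (sdiff_eq_empty_iff_subset.1 hempty)

theorem secondNbhd_eq_singleton (P : IsPendantBlock G d 1 C u) (hx : x ∈ C)
    (hux : ¬ G.Adj u x) : secondNbhd G x = {u} := by
  rw [P.secondNbhd_of_not_adj hx hux
    (P.exists_common_of_not_adj P.two_le_card_neighborFinset_inter hx hux),
    P.closedNbhd_eq_of_not_adj hx hux, sdiff_self, bot_eq_empty, insert_empty_eq]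

theorem neighborSet_inter_of_not_adj (P : IsPendantBlock G d 1 C u) (hx : x ∈ C)
    (hux : ¬ G.Adj u x) :
    G.neighborSet u ∩ G.neighborSet x = (G.neighborFinset u ∩ C : Finset V) := by
  ext z
  rw [← P.closedNbhd_eq_of_not_adj hx hux]
  simp only [Set.mem_inter_iff, mem_neighborSet, coe_inter, mem_coe, mem_neighborFinset,
    mem_closedNbhd, and_congr_right_iff]
  exact fun huz => (or_iff_right fun hzx : z = x => hux (hzx ▸ huz)).symm

theorem complIsMatchingOn (P : IsPendantBlock G d 1 C u) :
    ComplIsMatchingOn G C (G.neighborFinset u ∩ C : Finset V) := by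
  simp only [ComplIsMatchingOn, mem_coe, coe_subset]
  obtain ⟨m, hm, hadj⟩ :=
    exists_involution_of_card_sdiff_closedNbhd_eq_one (G := G) (A := G.neighborFinset u ∩ C)
      inter_subset_right
      (fun x hx => P.card_sdiff_closedNbhd_of_adj (mem_inter.1 hx).2
        ((mem_neighborFinset _ _ _).1 (mem_inter.1 hx).1))
      (fun x hx y hy hxy => by
        rw [mem_inter, mem_neighborFinset] at hx ⊢
        refine ⟨of_not_not fun huy => hxy ?_, hy⟩
        rw [mem_closedNbhd_comm, P.closedNbhd_eq_of_not_adj hy huy]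
        exact hx.2)
  refine ⟨inter_subset_right, m, hm, fun a ha b hb hab => ?_⟩
  by_cases hau : a ∈ G.neighborFinset u ∩ C
  · rw [hadj a hau b hb hab, and_iff_right hau]
  · have hua : ¬ G.Adj u a := fun h => hau (mem_inter.2 ⟨(mem_neighborFinset _ _ _).2 h, ha⟩)
    rw [← P.closedNbhd_eq_of_not_adj ha hua, mem_closedNbhd] at hb
    simp only [hau, false_and, iff_false, not_not]
    exact hb.resolve_left hab.symm

/-- The one-segment tail formed by a pendant block of excess `1` together with its separating
vertex `u`, when only one neighbour of `u` lies outside the block. -/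
def tail (P : IsPendantBlock G d 1 C u) (hw : G.neighborFinset u \ C = {w}) (hx : x ∈ C)
    (hux : ¬ G.Adj u x) : Tail G d where
  carrier := insert u C
  k := 1
  seg _ := insert u C
  v0 := x
  u0 := u
  vt _ := x
  vt' _ := x
  w := u
  uT := w
  k_pos := le_rfl
  carrier_eq := by simp
  seg_disj i hi j hj hij := by
    have := hi.1; have := hi.2; have := hj.1; have := hj.2
    lia
  seg1 := by
    rw [← coe_closedNbhd, P.closedNbhd_eq_of_not_adj hx hux, Set.union_singleton]
  seg1_card := by
    rw [← coe_insert, Set.ncard_coe_finset, card_insert_of_notMem P.notMem, P.card_eq]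
  deg2_v0 := by
    rw [deg2, ← coe_secondNbhd, Set.ncard_coe_finset, P.secondNbhd_eq_singleton hx hux,
      card_singleton]
  dist2_v0 := by
    rw [← coe_secondNbhd, P.secondNbhd_eq_singleton hx hux, coe_singleton]
  u0_nbrs := by
    have := P.regular.card_inter_add_card_sdiff u C
    rw [hw, card_singleton] at this
    rw [P.neighborSet_inter_of_not_adj hx hux, Set.ncard_coe_finset]
    lia
  compl_matching := by
    rw [← coe_closedNbhd, P.closedNbhd_eq_of_not_adj hx hux,
      P.neighborSet_inter_of_not_adj hx hux]
    exact P.complIsMatchingOn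
  seg_card i hi := by
    have := hi.1; have := hi.2
    lia
  vt_mem i hi := by simp at hi
  vt'_mem i hi := by simp at hi
  vt_ne i hi := by simp at hi
  seg_adj i hi := by simp at hi
  inter_seg i hi j hj hij := by
    have := hi.1; have := hi.2; have := hj.1; have := hj.2
    lia
  w_eq_of_k_ge_two h := by lia
  w_eq_of_k_eq_one _ := rfl
  w_mem := by simp
  uT_not_mem := by
    have hw' : w ∈ G.neighborFinset u \ C := hw ▸ mem_singleton_self w
    rw [mem_sdiff, mem_neighborFinset] at hw'
    exact not_or_intro hw'.1.ne' hw'.2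
  w_adj_uT := by
    have hw' : w ∈ G.neighborFinset u \ C := hw ▸ mem_singleton_self w
    exact (mem_neighborFinset _ _ _).1 (mem_sdiff.1 hw').1
  w_unique_out b hb hbn := by
    rw [← mem_singleton, ← hw]
    exact mem_sdiff.2 ⟨(mem_neighborFinset _ _ _).2 hb, fun hbC => hbn (.inr hbC)⟩
  others_in a ha hau b hab :=
    (P.mem_or_eq_of_adj a (ha.resolve_left hau) b hab).symm

theorem isTailEnd_insert (P : IsPendantBlock G d 1 C u) (hw : G.neighborFinset u \ C = {w}) :
    IsTailEnd G d u w (insert u C) := by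
  have hcard := P.regular.card_inter_add_card_sdiff u C
  rw [hw, card_singleton] at hcard
  refine ⟨?_, ?_, fun v hv huv => .inl ?_⟩
  · obtain ⟨x, hx⟩ := P.sdiff_neighborFinset_nonempty
    obtain ⟨hx, hux⟩ : x ∈ C ∧ ¬ G.Adj u x := by simpa using hx
    exact ⟨P.tail hw hx hux, rfl, rfl, (coe_insert u C).symm⟩
  · have hparity := P.regular.even_mul_card_add_sum_boundary
      (disjoint_singleton_right.2 P.notMem) fun x hx z hxz =>
        (P.mem_or_eq_of_adj x hx z hxz).imp_right mem_singleton.2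
    rw [sum_singleton, P.card_eq, Nat.even_add] at hparity
    exact hcard ▸ (hparity.1 (Nat.even_mul_succ_self d)).add_one
  · obtain ⟨hvu, hadj, -⟩ := mem_secondNbhd_iff.1 huv
    have hvC : v ∈ C := mem_of_mem_insert_of_ne hv hvu.symm
    have huv : ¬ G.Adj u v := fun h => hadj h.symm
    rw [P.secondNbhd_eq_singleton hvC huv, P.closedNbhd_eq_of_not_adj hvC huv, hw]
    exact ⟨card_singleton u, card_singleton w⟩

variable {p : V}

theorem neighborFinset_sdiff_erase (P : IsPendantBlock G d 2 C u)
    (hp : G.neighborFinset u ∩ C = {p}) : G.neighborFinset p \ C.erase p = {u} := by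
  have hp' : p ∈ G.neighborFinset u ∩ C := hp ▸ mem_singleton_self p
  rw [mem_inter, mem_neighborFinset] at hp'
  ext z
  rw [mem_sdiff, mem_neighborFinset, mem_singleton]
  constructor
  · rintro ⟨hpz, hz⟩
    exact (P.mem_or_eq_of_adj p hp'.2 z hpz).resolve_left fun h => hz (mem_erase.2 ⟨hpz.ne', h⟩)
  · rintro rfl
    exact ⟨hp'.1.symm, fun h => P.notMem (mem_of_mem_erase h)⟩

theorem erase (P : IsPendantBlock G d 2 C u) (hp : G.neighborFinset u ∩ C = {p}) :
    IsPendantBlock G d 1 (C.erase p) p := by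
  have hp' : p ∈ G.neighborFinset u ∩ C := hp ▸ mem_singleton_self p
  rw [mem_inter, mem_neighborFinset] at hp'
  refine ⟨P.regular, P.lt_degree, le_rfl, one_le_two, ?_, notMem_erase p C, fun x hx z hxz => ?_,
    ⟨u, hp'.1.symm, fun h => P.notMem (mem_of_mem_erase h)⟩, ?_⟩
  · rw [card_erase_of_mem hp'.2, P.card_eq, Nat.add_succ_sub_one]
  · obtain ⟨hxp, hx⟩ := mem_erase.1 hx
    obtain hz | rfl := P.mem_or_eq_of_adj x hx z hxz
    · rw [mem_erase]
      tauto
    · have : x ∈ G.neighborFinset z ∩ C := by simp [hx, hxz.symm]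
      exact absurd (mem_singleton.1 (hp ▸ this)) hxp
  · obtain ⟨t, ht⟩ := card_pos.1 (two_pos.trans_le (P.two_le_card_common hp'.2 hp'.2))
    simp only [mem_inter, mem_neighborFinset] at ht
    exact ⟨t, mem_erase.2 ⟨ht.1.1.ne', ht.2⟩, ht.1.1⟩

theorem isTailEnd (P : IsPendantBlock G d 2 C u) (hp : G.neighborFinset u ∩ C = {p}) :
    IsTailEnd G d p u C := by
  have hp' : p ∈ G.neighborFinset u ∩ C := hp ▸ mem_singleton_self p
  have := (P.erase hp).isTailEnd_insert (P.neighborFinset_sdiff_erase hp)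
  rwa [insert_erase (mem_inter.1 hp').2] at this

end IsPendantBlock

/-- The closed neighbourhood of `v` is a link: the only edges leaving it join its vertex `u` to `p`
and its vertex `q` to `w`, where `N₂(v) = {p, w}`. Such a neighbourhood is a complete graph minus
the edge `u q`, that is, a possible further segment of a tail ending in `p`. -/
structure IsLink (G : SimpleGraph V) (d : ℕ) (v p u q w : V) : Prop where
  regular : IsRegularGraph G d
  secondNbhd_eq : secondNbhd G v = {p, w}
  ne : p ≠ w
  inter_left : G.neighborFinset p ∩ G.neighborFinset v = {u}
  inter_right : G.neighborFinset w ∩ G.neighborFinset v = {q}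

namespace IsLink

variable {a b p q u v w x z : V} {X : Finset V}

theorem symm (L : IsLink G d v p u q w) : IsLink G d v w q u p :=
  ⟨L.regular, L.secondNbhd_eq.trans (pair_comm p w), L.ne.symm, L.inter_right, L.inter_left⟩

theorem mem_secondNbhd (L : IsLink G d v p u q w) : p ∈ secondNbhd G v :=
  L.secondNbhd_eq ▸ mem_insert_self p {w}

theorem adj_left (L : IsLink G d v p u q w) : G.Adj p u ∧ G.Adj v u := by
  have : u ∈ G.neighborFinset p ∩ G.neighborFinset v := L.inter_left ▸ mem_singleton_self u
  simpa using this

theorem mem_left (L : IsLink G d v p u q w) : u ∈ closedNbhd G v :=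
  mem_closedNbhd_of_adj L.adj_left.2

theorem eq_of_adj (L : IsLink G d v p u q w) (hx : x ∈ closedNbhd G v) (hxp : G.Adj x p) :
    x = u :=
  eq_of_adj_of_inter_eq_singleton L.mem_secondNbhd L.inter_left hx hxp

theorem ends_ne (L : IsLink G d v p u q w) : u ≠ q := by
  rintro rfl
  have hempty : secondNbhd G v = ∅ := by
    refine L.regular.secondNbhd_eq_empty_of_forall_common L.adj_left.2 fun z hz t hvt htz => ?_
    rw [L.secondNbhd_eq, mem_insert, mem_singleton] at hz
    obtain rfl | rfl := hz
    exacts [L.eq_of_adj (mem_closedNbhd_of_adj hvt) htz,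
      L.symm.eq_of_adj (mem_closedNbhd_of_adj hvt) htz]
  exact notMem_empty p (hempty ▸ L.mem_secondNbhd)

theorem mem_or_of_adj (L : IsLink G d v p u q w) (hx : x ∈ closedNbhd G v) (h : G.Adj x z) :
    z ∈ closedNbhd G v ∨ (x = u ∧ z = p) ∨ (x = q ∧ z = w) := by
  refine (mem_closedNbhd_or_mem_secondNbhd_of_adj hx h).imp_right fun hz => ?_
  rw [L.secondNbhd_eq, mem_insert, mem_singleton] at hz
  obtain rfl | rfl := hz
  exacts [.inl ⟨L.eq_of_adj hx h, rfl⟩, .inr ⟨L.symm.eq_of_adj hx h, rfl⟩]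

theorem closedNbhd_eq (L : IsLink G d v p u q w) (hx : x ∈ closedNbhd G v) (hxu : x ≠ u)
    (hxq : x ≠ q) : closedNbhd G x = closedNbhd G v := by
  refine L.regular.closedNbhd_eq_of_forall_not_adj hx fun z hz hxz => ?_
  obtain h | ⟨h, -⟩ | ⟨h, -⟩ := L.mem_or_of_adj hx hxz
  exacts [notMem_closedNbhd_of_mem_secondNbhd hz h, hxu h, hxq h]

theorem not_adj (L : IsLink G d v p u q w) : ¬ G.Adj u q := by
  intro huq
  have hsub : closedNbhd G v ⊆ closedNbhd G u := by
    intro z hz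
    rw [mem_closedNbhd]
    by_cases hzu : z = u
    · exact .inl hzu
    by_cases hzq : z = q
    · exact .inr (hzq ▸ huq)
    · have := L.closedNbhd_eq hz hzu hzq
      exact mem_closedNbhd.1 (mem_closedNbhd_comm.1 (this ▸ L.mem_left))
  have hp : p ∈ closedNbhd G v :=
    (L.regular.closedNbhd_eq_of_subset hsub).symm ▸ mem_closedNbhd_of_adj L.adj_left.1.symm
  exact notMem_closedNbhd_of_mem_secondNbhd L.mem_secondNbhd hp

theorem adj_of_ne (L : IsLink G d v p u q w) (ha : a ∈ closedNbhd G v) (hb : b ∈ closedNbhd G v)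
    (hab : a ≠ b) (hau : a ≠ u) (haq : a ≠ q) : G.Adj a b := by
  rw [← L.closedNbhd_eq ha hau haq, mem_closedNbhd] at hb
  exact hb.resolve_left hab.symm

theorem adj_iff (L : IsLink G d v p u q w) (ha : a ∈ closedNbhd G v) (hb : b ∈ closedNbhd G v)
    (hab : a ≠ b) : G.Adj a b ↔ ({a, b} : Set V) ≠ {u, q} := by
  rw [Ne, Set.pair_eq_pair_iff]
  constructor
  · rintro hadj (⟨rfl, rfl⟩ | ⟨rfl, rfl⟩)
    exacts [L.not_adj hadj, L.not_adj hadj.symm]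
  · intro hne
    by_cases ha' : a = u ∨ a = q
    · exact (L.adj_of_ne hb ha hab.symm (by grind) (by grind)).symm
    · exact L.adj_of_ne ha hb hab (fun h => ha' (.inl h)) fun h => ha' (.inr h)

theorem isNextSegment (L : IsLink G d v p u q w) (t : Tail G d) (hp : t.w = p) (hu : t.uT = u)
    (hdisj : Disjoint t.carrier (closedNbhd G v)) :
    t.IsNextSegment (closedNbhd G v) q w := by
  subst hp hu
  refine ⟨hdisj, by rw [Set.ncard_coe_finset, L.regular.card_closedNbhd], L.mem_left,
    L.symm.mem_left, L.ends_ne, fun a ha b hb => L.adj_iff ha hb, fun a ha b => L.mem_or_of_adj ha,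
    L.symm.adj_left.1.symm, fun hw => ?_,
    notMem_closedNbhd_of_mem_secondNbhd L.symm.mem_secondNbhd⟩
  obtain hq | ⟨h, -⟩ := t.mem_carrier_or_of_adj hw L.symm.adj_left.1
  exacts [Set.disjoint_left.1 hdisj hq L.symm.mem_left, L.ne h.symm]

end IsLink

theorem IsTailEnd.extend {p q u v w : V} {X : Finset V} (T : IsTailEnd G d p u X)
    (L : IsLink G d v p u q w) (hd : 6 < d) (hv : v ∉ X) :
    IsTailEnd G d q w (X ∪ closedNbhd G v) := by
  have hdisj := T.disjoint_closedNbhd hv L.mem_secondNbhd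
  refine ⟨?_, T.odd, fun x hx hxq => .inr ?_⟩
  · obtain ⟨t, hp, hu, ht⟩ := T.exists_tail
    have hnext := L.isNextSegment t hp hu (by rwa [ht, disjoint_coe])
    exact ⟨hnext.extend, rfl, rfl, by rw [coe_union, ← ht]; rfl⟩
  · suffices h : x = u by
      have := T.degree_le_card_secondNbhd_add_one L.regular
      rw [h]
      lia
    obtain ⟨hqx, hxq, s, hxs, hsq⟩ := mem_secondNbhd_iff.1 hxq
    obtain hx | hx := mem_union.1 hx
    · obtain hs | ⟨rfl, rfl⟩ := T.mem_or_of_adj hx hxs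
      · obtain hq | ⟨-, hq⟩ := T.mem_or_of_adj hs hsq
        exacts [absurd L.symm.mem_left (Finset.disjoint_left.1 hdisj hq), absurd hq L.ends_ne.symm]
      · exact absurd hsq L.not_adj
    · by_contra hxu
      exact hxq (L.adj_of_ne hx L.symm.mem_left hqx.symm hxu hqx.symm)

theorem exists_involution_of_forall_ne_card_sdiff_eq_one {S : Finset V} {u : V} (hu : u ∈ S)
    (hone : ∀ x ∈ S, x ≠ u → #(S \ closedNbhd G x) = 1) :
    ∃ m : V → V,
      (∀ x ∈ G.neighborFinset u ∩ S, m x ∈ G.neighborFinset u ∩ S ∧ m x ≠ x ∧ m (m x) = x) ∧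
      ∀ x ∈ S, ∀ y ∈ S, x ≠ y →
        (¬ G.Adj x y ↔ (x = u ∧ y ∉ closedNbhd G u) ∨ (y = u ∧ x ∉ closedNbhd G u) ∨
          (x ∈ G.neighborFinset u ∩ S ∧ y = m x)) := by
  have hmiss : ∀ x ∈ S, x ∉ closedNbhd G u → ∀ y ∈ S, y ∉ closedNbhd G x → y = u := by
    intro x hx hxu y hy hyx
    have hxu' : x ≠ u := fun h => hxu (h ▸ self_mem_closedNbhd x)
    exact card_le_one.1 (hone x hx hxu').le y (mem_sdiff.2 ⟨hy, hyx⟩) u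
      (mem_sdiff.2 ⟨hu, mt mem_closedNbhd_comm.1 hxu⟩)
  obtain ⟨m, hm, hmadj⟩ := exists_involution_of_card_sdiff_closedNbhd_eq_one (G := G)
    (A := G.neighborFinset u ∩ S) inter_subset_right
    (fun x hx => hone x (mem_inter.1 hx).2
      ((G.mem_neighborFinset u x).1 (mem_inter.1 hx).1).ne')
    fun x hx y hy hyx => by
      rw [mem_inter, mem_neighborFinset] at hx ⊢
      refine ⟨not_not.1 fun huy => ?_, hy⟩
      have hyu : y ≠ u := fun h => hyx (mem_closedNbhd.2 (.inr (h ▸ hx.1.symm)))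
      exact hx.1.ne' (hmiss y hy ((notMem_closedNbhd hyu).2 huy) x hx.2
        (mt mem_closedNbhd_comm.1 hyx))
  refine ⟨m, hm, fun x hx y hy hxy => ?_⟩
  obtain rfl | hxu := eq_or_ne x u
  · simp only [← notMem_closedNbhd hxy.symm, true_and, self_mem_closedNbhd, not_true_eq_false,
      and_false, G.mem_neighborFinset, G.irrefl, mem_inter, false_and, or_false]
  by_cases hux : G.Adj u x
  · rw [hmadj x (mem_inter.2 ⟨(G.mem_neighborFinset u x).2 hux, hx⟩) y hy hxy]
    simp [hxu, hux, hx, mem_closedNbhd]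
  · rw [← notMem_closedNbhd hxu] at hux
    rw [← notMem_closedNbhd hxy.symm]
    have : y ∉ closedNbhd G x ↔ y = u :=
      ⟨hmiss x hx hux y hy, fun h => h ▸ mt mem_closedNbhd_comm.1 hux⟩
    have h' : x ∉ G.neighborFinset u := fun h => hux (mem_closedNbhd_of_adj (by simpa using h))
    simp [hxu, hux, this, h']

theorem exists_three_and_involution {S : Finset V} {u : V} (hu : u ∈ S)
    (hone : ∀ x ∈ S, x ≠ u → #(S \ closedNbhd G x) = 1) (hthree : #(S \ closedNbhd G u) = 3) :
    ∃ v₁ ∈ S, ∃ v₂ ∈ S, ∃ v₃ ∈ S, [u, v₁, v₂, v₃].Pairwise (· ≠ ·) ∧ ∃ m : V → V,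
      (∀ x ∈ (S \ {u, v₁, v₂, v₃} : Set V),
        m x ∈ (S \ {u, v₁, v₂, v₃} : Set V) ∧ m x ≠ x ∧ m (m x) = x) ∧
      ∀ x ∈ S, ∀ y ∈ S, x ≠ y →
        (¬ G.Adj x y ↔ ({x, y} : Set V) = {u, v₁} ∨ ({x, y} : Set V) = {u, v₂} ∨
          ({x, y} : Set V) = {u, v₃} ∨ (x ∈ (S \ {u, v₁, v₂, v₃} : Set V) ∧ y = m x)) := by
  obtain ⟨v₁, v₂, v₃, h₁₂, h₁₃, h₂₃, hv⟩ := card_eq_three.1 hthree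
  have hfar (x : V) : x ∈ S ∧ x ∉ closedNbhd G u ↔ x = v₁ ∨ x = v₂ ∨ x = v₃ := by
    simpa using Finset.ext_iff.1 hv x
  have hne_u : ∀ x, x ∈ S ∧ x ∉ closedNbhd G u → u ≠ x := by
    rintro _ ⟨-, hx⟩ rfl
    exact hx (self_mem_closedNbhd _)
  have hv₁ := (hfar v₁).2 (.inl rfl)
  have hv₂ := (hfar v₂).2 (.inr (.inl rfl))
  have hv₃ := (hfar v₃).2 (.inr (.inr rfl))
  have hnear : (S \ {u, v₁, v₂, v₃} : Set V) = (G.neighborFinset u ∩ S : Finset V) := by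
    ext x
    have hxu := hfar x
    have := G.ne_of_adj (a := u) (b := x)
    simp only [mem_closedNbhd, Set.mem_sdiff, mem_coe, Set.mem_insert_iff,
      Set.mem_singleton_iff, mem_inter, mem_neighborFinset] at hxu ⊢
    grind
  obtain ⟨m, hm, hmadj⟩ :=
    exists_involution_of_forall_ne_card_sdiff_eq_one (G := G) hu hone
  refine ⟨v₁, hv₁.1, v₂, hv₂.1, v₃, hv₃.1, ?_, m, hnear ▸ hm, fun x hx y hy hxy => ?_⟩
  · simp [hne_u _ hv₁, hne_u _ hv₂, hne_u _ hv₃, h₁₂, h₁₃, h₂₃]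
  · have hxu := hfar x
    have hyu := hfar y
    simp only [hx, hy, true_and] at hxu hyu
    rw [hmadj x hx y hy hxy, hxu, hyu, hnear, mem_coe]
    grind [Set.pair_eq_pair_iff]

namespace IsPendantBlock

variable {C : Finset V} {p p' q u x y : V}

theorem core_eq_compl {k : ℕ} (P : IsPendantBlock G d k C u) (hconn : G.Connected) (hq : q ∉ C)
    (huq : G.Adj u q) (hexits : exits G q = G.neighborFinset u ∩ C) : core G q = Cᶜ := by
  have hmem : u ∈ core G q := mem_union_left _ (mem_closedNbhd_of_adj huq.symm)
  have hnadj : ∀ x ∈ C, ¬ G.Adj q x := fun x hx => P.not_adj_of_notMem hq huq.ne' hx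
  have hdisj : ∀ x ∈ core G q, x ∉ C := by
    intro x hx hxC
    rw [core, mem_union, mem_sdiff, hexits, mem_inter, mem_neighborFinset] at hx
    obtain hx | ⟨hx, hxu⟩ := hx
    · obtain rfl | hx := mem_closedNbhd.1 hx
      · exact hq hxC
      · exact hnadj x hxC hx
    · obtain ⟨-, -, t, hqt, htx⟩ := mem_secondNbhd_iff.1 hx
      obtain ht | rfl := P.mem_or_eq_of_adj x hxC t htx.symm
      · exact hnadj t ht hqt
      · exact hxu ⟨htx, hxC⟩
  have hcover (x : V) : x ∈ C ∨ x ∈ core G q := by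
    refine mem_of_forall_adj_mem (S := {x | x ∈ C ∨ x ∈ core G q}) hconn
      (.inr (self_mem_core q)) ?_ x
    rintro x (hx | hx) z hxz
    · exact (P.mem_or_eq_of_adj x hx z hxz).imp_right fun (h : z = u) => h ▸ hmem
    · refine (mem_core_or_mem_exits_of_adj hx hxz).symm.imp_left fun h => ?_
      exact (mem_inter.1 (hexits.subset h : z ∈ _)).2
  ext x
  rw [mem_compl]
  exact ⟨hdisj x, (hcover x).resolve_left⟩

theorem not_adj_iff_pair_eq (P : IsPendantBlock G d 1 C u)
    (hC : G.neighborFinset u ∩ C = {p, p'}) (hx : x ∈ C) (hy : y ∈ C) (hxy : x ≠ y) :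
    ¬ G.Adj x y ↔ ({x, y} : Set V) = {p, p'} := by
  obtain ⟨-, m, hm, hmadj⟩ := P.complIsMatchingOn
  rw [hC] at hm hmadj
  have hp := hm p (by simp)
  have hp' := hm p' (by simp)
  have hmp : m p = p' := by simpa [hp.2.1] using hp.1
  have hmp' : m p' = p := by simpa [hp'.2.1] using hp'.1
  rw [hmadj x hx y hy hxy, Set.pair_eq_pair_iff]
  constructor
  · rintro ⟨hx, rfl⟩
    obtain rfl | rfl := show x = p ∨ x = p' by simpa using hx
    · exact .inl ⟨rfl, hmp⟩
    · exact .inr ⟨rfl, hmp'⟩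
  · rintro (⟨rfl, rfl⟩ | ⟨rfl, rfl⟩)
    · exact ⟨by simp, hmp.symm⟩
    · exact ⟨by simp, hmp'.symm⟩

theorem adj_iff_of_mem_compl {k : ℕ} (P : IsPendantBlock G d k C u) (hx : x ∈ C)
    (hy : y ∈ Cᶜ) : G.Adj x y ↔ y = u ∧ G.Adj u x := by
  constructor
  · intro hxy
    obtain rfl := (P.mem_or_eq_of_adj x hx y hxy).resolve_left (mem_compl.1 hy)
    exact ⟨rfl, hxy.symm⟩
  · rintro ⟨rfl, hyx⟩
    exact hyx.symm

theorem neighborFinset_inter_compl_eq_singleton {k : ℕ} (P : IsPendantBlock G d k C u)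
    (hx : x ∈ C) (hux : G.Adj u x) : G.neighborFinset x ∩ Cᶜ = {u} := by
  ext z
  simp only [mem_inter, mem_neighborFinset, mem_compl, mem_singleton]
  constructor
  · rintro ⟨hxz, hz⟩
    exact ((P.adj_iff_of_mem_compl hx (mem_compl.2 hz)).1 hxz).1
  · rintro rfl
    exact ⟨hux.symm, P.notMem⟩

theorem even_mul_card_compl_add {k : ℕ} (P : IsPendantBlock G d k C u) :
    Even (d * #Cᶜ + #(G.neighborFinset u ∩ C)) := by
  have hdisj : Disjoint Cᶜ (G.neighborFinset u ∩ C) :=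
    disjoint_compl_left.mono_right inter_subset_right
  have heven := P.regular.even_mul_card_add_sum_boundary hdisj fun x hx z hxz => by
    rw [mem_compl] at hx
    rw [mem_compl, mem_inter, mem_neighborFinset, or_iff_not_imp_left, not_not]
    refine fun hz => ⟨?_, hz⟩
    exact (P.mem_or_eq_of_adj z hz x hxz.symm).resolve_left hx ▸ hxz
  rwa [sum_congr rfl fun x hx => ?_, sum_const, smul_eq_mul, mul_one] at heven
  rw [mem_inter, mem_neighborFinset] at hx
  rw [P.neighborFinset_inter_compl_eq_singleton hx.2 hx.1, card_singleton]

theorem card_compl_sdiff_closedNbhd {k : ℕ} (P : IsPendantBlock G d k C u) (hx : x ∉ C)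
    (hxu : x ≠ u) : #(Cᶜ \ closedNbhd G x) + (d + 1) = #Cᶜ := by
  have hsub : closedNbhd G x ⊆ Cᶜ := by
    intro z hz
    rw [mem_compl]
    obtain rfl | hz := mem_closedNbhd.1 hz
    · exact hx
    · exact fun hzC => P.not_adj_of_notMem hx hxu hzC hz
  rw [← P.regular.card_closedNbhd x, card_sdiff_add_card_eq_card hsub]

theorem card_compl_sdiff_closedNbhd_self {k : ℕ} (P : IsPendantBlock G d k C u) :
    #(Cᶜ \ closedNbhd G u) + (d + 1) = #Cᶜ + #(G.neighborFinset u ∩ C) := by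
  have hinter : Cᶜ ∩ closedNbhd G u = insert u (G.neighborFinset u \ C) := by
    ext z
    have : z = u → z ∉ C := fun h => h ▸ P.notMem
    simp only [mem_inter, mem_compl, mem_closedNbhd, mem_insert, mem_sdiff, mem_neighborFinset]
    tauto
  have hcard := card_sdiff_add_card_inter Cᶜ (closedNbhd G u)
  rw [hinter, card_insert_of_notMem (by simp)] at hcard
  have := P.regular.card_inter_add_card_sdiff u C
  lia

theorem isPeanut (P : IsPendantBlock G d 1 C u) (hconn : G.Connected)
    (hC : G.neighborFinset u ∩ C = {p, p'}) (hne : p ≠ p') (hcard : #Cᶜ = d + 2) :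
    IsPeanut G d := by
  have hmem (x : V) : x ∈ C ∧ G.Adj u x ↔ x = p ∨ x = p' := by
    simpa [and_comm] using Finset.ext_iff.1 hC x
  have hp := (hmem p).2 (.inl rfl)
  have hp' := (hmem p').2 (.inr rfl)
  have heven : Even d := by
    have := P.even_mul_card_compl_add
    rw [hC, card_pair hne, hcard] at this
    simpa [parity_simps] using this
  have huC : u ∈ Cᶜ := mem_compl.2 P.notMem
  obtain ⟨v₁, hv₁, v₂, hv₂, v₃, hv₃, hpairwise, hmatching⟩ :=
    exists_three_and_involution (G := G) huC
      (fun x hx hxu => by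
        have := P.card_compl_sdiff_closedNbhd (mem_compl.1 hx) hxu
        lia)
      (by
        have := P.card_compl_sdiff_closedNbhd_self
        rw [hC, card_pair hne] at this
        lia)
  refine ⟨hconn, P.regular, heven, C, (Cᶜ : Finset V), p, p', u, v₁, v₂, v₃,
    disjoint_coe.2 disjoint_compl_right, by rw [coe_compl, Set.union_compl_self],
    by rw [Set.ncard_coe_finset, P.card_eq], by rw [Set.ncard_coe_finset, hcard],
    hp.1, hp'.1, hne, huC, hv₁, hv₂, hv₃, hpairwise,
    fun x hx y hy hxy => P.not_adj_iff_pair_eq hC hx hy hxy, hmatching, fun x hx y hy => ?_⟩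
  rw [P.adj_iff_of_mem_compl hx hy, ← hmem, and_iff_right (mem_coe.1 hx)]

end IsPendantBlock

/-! ### Donors -/

/-- The standing assumptions of the discharging argument. The cardinality bound is what
`graphSquare G ≠ ⊤` provides. -/
structure IsBroadRegular (G : SimpleGraph V) (d : ℕ) : Prop where
  lt_degree : 6 < d
  regular : IsRegularGraph G d
  connected : G.Connected
  two_mul_add_two_le_card : 2 * d + 2 ≤ Fintype.card V

/-- A broad regular graph other than the exceptional snake and peanut graphs. -/
structure IsOrdinary (G : SimpleGraph V) (d : ℕ) : Prop extends IsBroadRegular G d where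
  not_isSnake : ¬ IsSnake G d
  not_isPeanut : ¬ IsPeanut G d

/-- `p` is the vertex `w_T` of some tail. -/
def IsTailPort (G : SimpleGraph V) (d : ℕ) (p : V) : Prop := ∃ u X, IsTailEnd G d p u X

/-- `p` is one of exactly two vertices through which a pendant block of order `d + 1` is attached
to its cut vertex. -/
def IsTwinPort (G : SimpleGraph V) (d : ℕ) (p : V) : Prop :=
  ∃ C u, IsPendantBlock G d 1 C u ∧ #(G.neighborFinset u ∩ C) = 2 ∧ p ∈ G.neighborFinset u ∩ C

/-- The exits which are not asked for charge, because they lie in a tail or a pendant block which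
needs its charge itself. -/
def IsExempt (G : SimpleGraph V) (d : ℕ) (p : V) : Prop := IsTailPort G d p ∨ IsTwinPort G d p

/-- The exits of `v` that give charge to `v` when `v` has a small second neighbourhood. -/
noncomputable def donors (G : SimpleGraph V) (d : ℕ) (v : V) : Finset V :=
  {p ∈ exits G v | ¬ IsExempt G d p}

section SmallSecondNbhd

variable {p q u v w : V} {X Y : Finset V}

theorem mem_donors : p ∈ donors G d v ↔ p ∈ exits G v ∧ ¬ IsExempt G d p := mem_filter

theorem donors_subset_secondNbhd (v : V) : donors G d v ⊆ secondNbhd G v :=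
  (filter_subset _ _).trans (exits_subset_secondNbhd v)

theorem IsBroadRegular.exits_nonempty (H : IsBroadRegular G d) (h : #(secondNbhd G v) ≤ d) :
    (exits G v).Nonempty :=
  _root_.exits_nonempty H.connected (by
    have := H.two_mul_add_two_le_card
    rw [H.regular.card_closedNbhd]
    lia)

theorem IsRegularGraph.even_mul_card_core_add_card_exits (hreg : IsRegularGraph G d)
    (h : ∀ p ∈ exits G v, #(G.neighborFinset p ∩ core G v) = 1) :
    Even (d * #(core G v) + #(exits G v)) := by
  have := hreg.even_mul_card_add_sum_boundary (disjoint_core_exits v)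
    fun x hx z hz => mem_core_or_mem_exits_of_adj hx hz
  rwa [sum_congr rfl h, ← card_eq_sum_ones] at this

theorem IsRegularGraph.even_card_secondNbhd_of_exits_eq (hreg : IsRegularGraph G d)
    (hexits : exits G v = secondNbhd G v)
    (h : ∀ p ∈ exits G v, #(G.neighborFinset p ∩ G.neighborFinset v) = 1) :
    Even #(secondNbhd G v) := by
  have hcore : core G v = closedNbhd G v := by rw [core, hexits, Finset.sdiff_self, union_empty]
  have heven := hreg.even_mul_card_core_add_card_exits (v := v) fun p hp => by
    have hvp : v ∉ G.neighborFinset p := fun hvp =>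
      notMem_closedNbhd_of_mem_secondNbhd (exits_subset_secondNbhd v hp)
        (mem_closedNbhd_of_adj ((G.mem_neighborFinset p v).1 hvp).symm)
    rw [hcore, closedNbhd, inter_insert_of_notMem hvp, h p hp]
  rw [hcore, hreg.card_closedNbhd, hexits, Nat.even_add] at heven
  exact heven.1 (Nat.even_mul_succ_self d)

namespace IsTailEnd

theorem notMem_of_card (T : IsTailEnd G d p u X) (hp : p ∈ secondNbhd G v)
    (h₂ : 2 ≤ #(secondNbhd G v)) (h₃ : #(secondNbhd G v) ≤ 3) : v ∉ X := fun hv => by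
  obtain h | h := T.card_eq_one_or_le v hv hp <;> lia

theorem disjoint_core (T : IsTailEnd G d p u X) (hv : v ∉ X) (hp : p ∈ exits G v) :
    Disjoint X (core G v) := by
  have hdisj := T.disjoint_closedNbhd hv (exits_subset_secondNbhd v hp)
  refine disjoint_union_right.2 ⟨hdisj, Finset.disjoint_left.2 fun z hzX hz => ?_⟩
  rw [mem_sdiff, mem_secondNbhd] at hz
  obtain ⟨⟨-, t, ht, htz⟩, hzexits⟩ := hz
  obtain htX | ⟨rfl, -⟩ := T.mem_or_of_adj hzX htz.symm
  · exact Finset.disjoint_left.1 hdisj htX ht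
  · exact hzexits hp

theorem neighborFinset_inter_core (T : IsTailEnd G d p u X) (hv : v ∉ X) (hp : p ∈ exits G v) :
    G.neighborFinset p ∩ core G v = {u} := by
  have hvu := T.adj_of_mem_secondNbhd hv (exits_subset_secondNbhd v hp)
  ext z
  rw [mem_inter, mem_neighborFinset, mem_singleton]
  refine ⟨fun ⟨hpz, hz⟩ => ?_, fun h => h ▸ ⟨T.adj, mem_union_left _ (mem_closedNbhd_of_adj hvu)⟩⟩
  obtain hzX | ⟨-, rfl⟩ := T.mem_or_of_adj T.mem hpz
  · exact absurd hz (Finset.disjoint_left.1 (T.disjoint_core hv hp) hzX)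
  · rfl

theorem disjoint (T : IsTailEnd G d p u X) (T' : IsTailEnd G d q w Y) (hconn : G.Connected)
    (hpY : p ∉ Y) (hqX : q ∉ X) (hv : v ∉ X) : Disjoint X Y := by
  refine Finset.disjoint_left.2 fun z hzX hzY => hv ?_
  refine (mem_of_forall_adj_mem (S := {x | x ∈ X ∧ x ∈ Y}) hconn ⟨hzX, hzY⟩ ?_ v).1
  rintro x ⟨hxX, hxY⟩ y hxy
  refine ⟨(T.mem_or_of_adj hxX hxy).resolve_right fun h => hpY (h.1 ▸ hxY),
    (T'.mem_or_of_adj hxY hxy).resolve_right fun h => hqX (h.1 ▸ hxX)⟩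

end IsTailEnd

theorem IsRegularGraph.even_card_secondNbhd_of_forall_isTailEnd (hreg : IsRegularGraph G d)
    (hne : (exits G v).Nonempty) (h : ∀ p ∈ exits G v, ∃ u X, IsTailEnd G d p u X ∧ v ∉ X) :
    Even #(secondNbhd G v) := by
  have hodd : Odd d := by
    obtain ⟨p, hp⟩ := hne
    obtain ⟨u, X, T, -⟩ := h p hp
    exact T.odd
  have heven := hreg.even_mul_card_core_add_card_exits (v := v) fun p hp => by
    obtain ⟨u, X, T, hv⟩ := h p hp
    rw [T.neighborFinset_inter_core hv hp, card_singleton]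
  have hcard := congrArg Even (hreg.card_core_add_card_exits v)
  rw [← Nat.not_even_iff_odd] at hodd
  simp only [Nat.even_add, Nat.even_mul, hodd, false_or, Nat.not_even_one, true_iff,
    eq_iff_iff] at heven hcard
  exact hcard.1 heven

theorem IsTwinPort.exists_isPendantBlock (h : IsTwinPort G d p) (hp : p ∈ exits G v)
    (hle : #(secondNbhd G v) ≤ 3) : ∃ C u, IsPendantBlock G d 1 C u ∧
      #(G.neighborFinset u ∩ C) = 2 ∧ p ∈ G.neighborFinset u ∩ C ∧ v ∉ C ∧ G.Adj u v := by
  obtain ⟨C, u, P, hcard, hpu⟩ := h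
  have hpu' := hpu
  rw [mem_inter, mem_neighborFinset] at hpu'
  have hv : v ∉ C := by
    intro hv
    by_cases huv : G.Adj u v
    · have := P.card_secondNbhd_of_adj hv huv
      have := P.regular.card_inter_add_card_sdiff u C
      have := P.lt_degree
      lia
    · rw [P.exits_of_not_adj hv huv (P.exists_common_of_not_adj hcard.ge hv huv),
        mem_singleton] at hp
      exact P.notMem (hp ▸ hpu'.2)
  exact ⟨C, u, P, hcard, hpu, hv,
    P.adj_of_mem_secondNbhd hpu'.2 hpu'.1 hv (exits_subset_secondNbhd v hp)⟩

theorem not_isTwinPort_of_card_le_two (hp : p ∈ exits G v) (hle : #(secondNbhd G v) ≤ 2) :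
    ¬ IsTwinPort G d p := by
  intro h
  obtain ⟨C, u, P, hcard, -, hv, huv⟩ := h.exists_isPendantBlock hp (by lia)
  obtain ⟨x, y, hxy, hC⟩ := card_eq_two.1 hcard
  have hsecond : {x, y} = secondNbhd G v := by
    refine eq_of_subset_of_card_le (hC ▸ ?_) (by rwa [card_pair hxy])
    exact (P.neighborFinset_inter_subset_exits hv huv).trans (exits_subset_secondNbhd v)
  have hmem : ∀ z ∈ ({x, y} : Finset V), G.neighborFinset z ∩ G.neighborFinset v = {u} := by
    intro z hz
    rw [← hC, mem_inter, mem_neighborFinset] at hz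
    exact P.neighborFinset_inter_eq_singleton hz.2 hz.1 hv huv
  have L : IsLink G d v x u u y :=
    ⟨P.regular, hsecond.symm, hxy, hmem x (by simp), hmem y (by simp)⟩
  exact L.ends_ne rfl

theorem IsBroadRegular.exits_eq_singleton (H : IsBroadRegular G d) (hu : secondNbhd G v = {u}) :
    exits G v = {u} := by
  have hle : #(secondNbhd G v) ≤ d := by
    have := H.lt_degree
    rw [hu, card_singleton]
    lia
  exact (H.exits_nonempty hle).subset_singleton_iff.1 (hu ▸ exits_subset_secondNbhd v)

theorem IsBroadRegular.card_neighborFinset_sdiff_closedNbhd (H : IsBroadRegular G d)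
    (hu : secondNbhd G v = {u}) (h : IsTailPort G d u) :
    #(G.neighborFinset u \ closedNbhd G v) = 1 := by
  obtain ⟨w, X, T⟩ := h
  have hcard : #(secondNbhd G v) = 1 := by rw [hu, card_singleton]
  by_cases hv : v ∈ X
  · obtain h | h := T.card_eq_one_or_le v hv (by simp [hu])
    · exact h.2
    · lia
  · have hexits := H.exits_eq_singleton hu
    have := H.regular.even_card_secondNbhd_of_forall_isTailEnd (v := v) (by simp [hexits])
      (by simpa [hexits] using ⟨w, X, T, hv⟩)
    exact absurd (hcard ▸ this) Nat.not_even_one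

theorem IsOrdinary.not_isExempt_of_exits_eq_singleton (H : IsOrdinary G d)
    (hcard : #(secondNbhd G v) = 2) (hexits : exits G v = {p}) : ¬ IsExempt G d p := by
  have hp : p ∈ exits G v := by rw [hexits, mem_singleton]
  rintro (⟨u, X, T⟩ | h)
  · have hv : v ∉ X := T.notMem_of_card (exits_subset_secondNbhd v hp) hcard.ge (by lia)
    have P := H.regular.isPendantBlock_core H.lt_degree hexits hcard.le
    rw [hcard] at P
    exact H.not_isSnake (T.isSnake
      (P.isTailEnd (T.neighborFinset_inter_core hv hp)) (T.disjoint_core hv hp)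
      H.connected H.regular)
  · exact not_isTwinPort_of_card_le_two hp hcard.le h

theorem IsOrdinary.not_isTailPort_of_isTailPort (H : IsOrdinary G d)
    (hsecond : secondNbhd G v = {p, q}) (hne : p ≠ q) (hp : IsTailPort G d p) :
    ¬ IsTailPort G d q := by
  rintro ⟨y, Y, T'⟩
  obtain ⟨x, X, T⟩ := hp
  have hcard : #(secondNbhd G v) = 2 := by rw [hsecond, card_pair hne]
  have hp : p ∈ secondNbhd G v := by simp [hsecond]
  have hq : q ∈ secondNbhd G v := by simp [hsecond]
  have hvX := T.notMem_of_card hp hcard.ge (by lia)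
  have hvY := T'.notMem_of_card hq hcard.ge (by lia)
  have L : IsLink G d v p x y q := ⟨H.regular, hsecond, hne,
    T.neighborFinset_inter_eq_singleton hvX hp, T'.neighborFinset_inter_eq_singleton hvY hq⟩
  have E := T.extend L H.lt_degree hvX
  have hqX : q ∉ X := fun h => E.notMem (mem_union_left _ h)
  have hpY : p ∉ Y := fun h => (T'.extend L.symm H.lt_degree hvY).notMem (mem_union_left _ h)
  exact H.not_isSnake (E.isSnake T' (disjoint_union_left.2
    ⟨T.disjoint T' H.connected hpY hqX hvX, (T'.disjoint_closedNbhd hvY hq).symm⟩)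
    H.connected H.regular)

theorem IsExempt.card_neighborFinset_inter_eq_one (h : IsExempt G d p) (hp : p ∈ exits G v)
    (h₂ : 2 ≤ #(secondNbhd G v)) (h₃ : #(secondNbhd G v) ≤ 3) :
    #(G.neighborFinset p ∩ G.neighborFinset v) = 1 := by
  obtain ⟨u, X, T⟩ | h := h
  · have hp' := exits_subset_secondNbhd v hp
    rw [T.neighborFinset_inter_eq_singleton (T.notMem_of_card hp' h₂ h₃) hp', card_singleton]
  · obtain ⟨C, u, P, -, hpu, hv, huv⟩ := h.exists_isPendantBlock hp h₃
    rw [mem_inter, mem_neighborFinset] at hpu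
    rw [P.neighborFinset_inter_eq_singleton hpu.2 hpu.1 hv huv, card_singleton]

theorem IsOrdinary.donors_nonempty (H : IsOrdinary G d) (hcard : #(secondNbhd G v) = 3) :
    (donors G d v).Nonempty := by
  have hodd : ¬ Even #(secondNbhd G v) := by rw [hcard]; decide
  by_contra! hempty
  have hexempt : ∀ p ∈ exits G v, IsExempt G d p := fun p hp => by
    by_contra h
    exact notMem_empty p (hempty ▸ mem_donors.2 ⟨hp, h⟩)
  by_cases htwin : ∃ p ∈ exits G v, IsTwinPort G d p
  · obtain ⟨p, hp, h⟩ := htwin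
    obtain ⟨C, u, P, hcard₂, -, hv, huv⟩ := h.exists_isPendantBlock hp hcard.le
    have hsub := P.neighborFinset_inter_subset_exits hv huv
    have hexits : exits G v ≠ secondNbhd G v := fun hexits =>
      hodd (H.regular.even_card_secondNbhd_of_exits_eq hexits fun p hp =>
        (hexempt p hp).card_neighborFinset_inter_eq_one hp (by lia) hcard.le)
    have hlt : #(exits G v) < 3 :=
      hcard ▸ card_lt_card ((exits_subset_secondNbhd v).ssubset_of_ne hexits)
    have hexits₂ : exits G v = G.neighborFinset u ∩ C :=
      (eq_of_subset_of_card_le hsub (by lia)).symm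
    have hcompl := H.regular.card_core_add_card_exits v
    rw [P.core_eq_compl H.connected hv huv hexits₂, hexits₂, hcard₂, hcard] at hcompl
    obtain ⟨x, y, hxy, hC⟩ := card_eq_two.1 hcard₂
    exact H.not_isPeanut (P.isPeanut H.connected hC hxy (by lia))
  · push Not at htwin
    refine hodd (H.regular.even_card_secondNbhd_of_forall_isTailEnd
      (H.exits_nonempty (by have := H.lt_degree; lia)) fun p hp => ?_)
    obtain ⟨u, X, T⟩ := (hexempt p hp).resolve_right (htwin p hp)
    exact ⟨u, X, T, T.notMem_of_card (exits_subset_secondNbhd v hp) (by lia) hcard.le⟩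

end SmallSecondNbhd

/-! ### Discharging -/

/-- The part of every transferred unit of charge that stays with the donor. A donor `x` satisfies
`d - 2 ≤ |N₂(x)|` and gives away at most `|N₂(x)|` units, so it retains at least four in total. -/
noncomputable def discount (d : ℕ) : ℝ := 4 / (d - 2)

/-- The average amount by which the second neighbourhoods may fall short of four vertices. -/
noncomputable def allowance (d : ℕ) : ℝ := 8 / (d + 1) + 12 / (d - 3)

/-- The amount `v` demands from `x` in the discharging: vertices with at most two vertices at
distance two demand a full unit from each of their donors, those with three demand one unit in
total. -/
noncomputable def demand (G : SimpleGraph V) (d : ℕ) (v x : V) : ℝ :=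
  if #(secondNbhd G v) ≤ 3 ∧ x ∈ donors G d v then
    if #(secondNbhd G v) = 3 then 1 / #(donors G d v) else 1
  else 0

/-- The total amount `x` demands. -/
noncomputable def inflow (G : SimpleGraph V) (d : ℕ) (x : V) : ℝ := ∑ p, demand G d x p

/-- The total amount demanded from `x`. -/
noncomputable def outflow (G : SimpleGraph V) (d : ℕ) (x : V) : ℝ := ∑ v, demand G d v x

/-- The charge of `x` after discharging, starting from `|N₂(x)| - 4`. -/
noncomputable def finalCharge (G : SimpleGraph V) (d : ℕ) (x : V) : ℝ :=
  #(secondNbhd G x) - 4 + (1 - discount d) * (inflow G d x - outflow G d x)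

/-- A vertex with at most two vertices at distance two and at most one donor. These are the
vertices whose final charge may fall below `-allowance d`. -/
def IsNeedy (G : SimpleGraph V) (d : ℕ) (v : V) : Prop :=
  #(secondNbhd G v) ≤ 2 ∧ #(donors G d v) ≤ 1

section Discharging

theorem discount_pos (hd : 6 < d) : 0 < discount d := by
  have : (7 : ℝ) ≤ d := mod_cast hd
  exact div_pos four_pos (by linarith)

theorem discount_le (hd : 6 < d) : discount d ≤ 4 / 5 := by
  have : (7 : ℝ) ≤ d := mod_cast hd
  exact div_le_div_of_nonneg_left four_pos.le (by norm_num) (by linarith)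

theorem sub_two_mul_discount (hd : 6 < d) : ((d : ℝ) - 2) * discount d = 4 := by
  have : (7 : ℝ) ≤ d := mod_cast hd
  exact mul_div_cancel₀ 4 (by linarith)

theorem two_mul_discount_lt_allowance (hd : 6 < d) : 2 * discount d < allowance d := by
  have : (7 : ℝ) ≤ d := mod_cast hd
  calc 2 * discount d = 8 / ((d : ℝ) - 2) := by rw [discount]; ring
    _ ≤ 12 / ((d : ℝ) - 3) := by gcongr <;> linarith
    _ < allowance d := lt_add_of_pos_left _ (by positivity)

theorem allowance_pos (hd : 6 < d) : 0 < allowance d := by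
  linarith [discount_pos hd, two_mul_discount_lt_allowance hd]

theorem lt_add_one_mul_allowance (hd : 6 < d) : 20 < ((d : ℝ) + 1) * allowance d := by
  have : (7 : ℝ) ≤ d := mod_cast hd
  have h₁ : ((d : ℝ) + 1) * (8 / (d + 1)) = 8 := mul_div_cancel₀ 8 (by positivity)
  have h₂ : 12 < ((d : ℝ) + 1) * (12 / (d - 3)) := by
    rw [mul_div_assoc', lt_div_iff₀ (by linarith)]
    linarith
  rw [allowance, mul_add, h₁]
  linarith

variable {v x : V} {b k : ℕ}

theorem demand_nonneg (v x : V) : 0 ≤ demand G d v x := by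
  unfold demand
  split_ifs <;> positivity

theorem demand_le_one (v x : V) : demand G d v x ≤ 1 := by
  unfold demand
  split_ifs
  · exact div_le_self zero_le_one (mod_cast card_pos.2 ⟨x, by tauto⟩) |>.trans_eq rfl
  · exact le_rfl
  · exact zero_le_one

theorem mem_donors_of_demand_ne_zero (h : demand G d v x ≠ 0) :
    #(secondNbhd G v) ≤ 3 ∧ x ∈ donors G d v := by
  by_contra hc
  exact h (if_neg hc)

theorem inflow_nonneg (x : V) : 0 ≤ inflow G d x := sum_nonneg fun _ _ => demand_nonneg _ _

theorem outflow_nonneg (x : V) : 0 ≤ outflow G d x := sum_nonneg fun _ _ => demand_nonneg _ _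

theorem sum_inflow_eq_sum_outflow (G : SimpleGraph V) (d : ℕ) :
    ∑ x, inflow G d x = ∑ x, outflow G d x := sum_comm

theorem sum_finalCharge (G : SimpleGraph V) (d : ℕ) :
    ∑ x, finalCharge G d x = ∑ x, ((#(secondNbhd G x) : ℝ) - 4) := by
  simp only [finalCharge]
  rw [sum_add_distrib, ← mul_sum, sum_sub_distrib (inflow G d), sum_inflow_eq_sum_outflow, sub_self,
    mul_zero, add_zero]

theorem inflow_eq_card_donors (h : #(secondNbhd G x) ≤ 2) : inflow G d x = #(donors G d x) := by
  have h₃ : #(secondNbhd G x) ≤ 3 := by lia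
  have h₃' : #(secondNbhd G x) ≠ 3 := by lia
  simp [inflow, demand, h₃, h₃']

theorem IsOrdinary.inflow_eq_one (H : IsOrdinary G d) (h : #(secondNbhd G x) = 3) :
    inflow G d x = 1 := by
  have : (#(donors G d x) : ℝ) ≠ 0 := mod_cast (H.donors_nonempty h).card_pos.ne'
  simp [inflow, demand, h, mul_inv_cancel₀ this]

theorem exists_demand_ne_zero (h : outflow G d x ≠ 0) : ∃ v, demand G d v x ≠ 0 := by
  obtain ⟨v, -, hv⟩ := exists_ne_zero_of_sum_ne_zero h
  exact ⟨v, hv⟩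

theorem outflow_eq_zero_of_isExempt (h : IsExempt G d x) : outflow G d x = 0 :=
  sum_eq_zero fun _ _ => not_not.1 fun hv =>
    (mem_donors.1 (mem_donors_of_demand_ne_zero hv).2).2 h

theorem outflow_le_card_secondNbhd (x : V) : outflow G d x ≤ #(secondNbhd G x) := by
  have hsupp : ∀ v, v ∉ secondNbhd G x → demand G d v x = 0 := fun v hv => not_not.1 fun h =>
    hv (mem_secondNbhd_comm.1 (donors_subset_secondNbhd v (mem_donors_of_demand_ne_zero h).2))
  calc outflow G d x = ∑ v ∈ secondNbhd G x, demand G d v x :=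
      (sum_subset (subset_univ _) fun v _ hv => hsupp v hv).symm
    _ ≤ ∑ v ∈ secondNbhd G x, 1 := sum_le_sum fun v _ => demand_le_one v x
    _ = #(secondNbhd G x) := by simp

theorem IsRegularGraph.degree_le_card_secondNbhd_add_two (hreg : IsRegularGraph G d)
    (h : outflow G d x ≠ 0) : d ≤ #(secondNbhd G x) + 2 := by
  obtain ⟨v, hv⟩ := exists_demand_ne_zero h
  obtain ⟨hle, hx⟩ := mem_donors_of_demand_ne_zero hv
  have := hreg.lt_card_secondNbhd_add_of_mem_exits (mem_donors.1 hx).1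
  lia

namespace IsBroadRegular

theorem outflow_eq_zero (H : IsBroadRegular G d) (h : #(secondNbhd G x) ≤ 4) :
    outflow G d x = 0 := by
  by_contra hout
  have := H.regular.degree_le_card_secondNbhd_add_two hout
  have := H.lt_degree
  lia

theorem le_finalCharge (H : IsBroadRegular G d) (x : V) :
    (#(secondNbhd G x) : ℝ) - 4 - outflow G d x ≤ finalCharge G d x := by
  have hin : 0 ≤ (1 - discount d) * inflow G d x :=
    mul_nonneg (by linarith [discount_le H.lt_degree]) (inflow_nonneg x)
  have hout : 0 ≤ discount d * outflow G d x :=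
    mul_nonneg (discount_pos H.lt_degree).le (outflow_nonneg x)
  rw [finalCharge]
  linarith

theorem finalCharge_nonneg (H : IsBroadRegular G d) (h : 4 ≤ #(secondNbhd G x)) :
    0 ≤ finalCharge G d x := by
  have h₄ : (4 : ℝ) ≤ #(secondNbhd G x) := mod_cast h
  by_cases hout : outflow G d x = 0
  · linarith [H.le_finalCharge x]
  have hle : (d : ℝ) - 2 ≤ #(secondNbhd G x) := by
    rw [sub_le_iff_le_add]
    exact_mod_cast H.regular.degree_le_card_secondNbhd_add_two hout
  have hkept : 4 ≤ discount d * #(secondNbhd G x) := by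
    rw [← sub_two_mul_discount H.lt_degree, mul_comm]
    exact mul_le_mul_of_nonneg_left hle (discount_pos H.lt_degree).le
  have hnet : -(#(secondNbhd G x) : ℝ) ≤ inflow G d x - outflow G d x := by
    linarith [inflow_nonneg (G := G) (d := d) x, outflow_le_card_secondNbhd (G := G) (d := d) x]
  have := mul_le_mul_of_nonneg_left hnet
    (show 0 ≤ 1 - discount d by linarith [discount_le H.lt_degree])
  rw [finalCharge]
  linarith

theorem finalCharge_of_card_le_two (H : IsBroadRegular G d) (h : #(secondNbhd G x) ≤ 2) :
    finalCharge G d x = #(secondNbhd G x) - 4 + (1 - discount d) * #(donors G d x) := by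
  rw [finalCharge, inflow_eq_card_donors h, H.outflow_eq_zero (by lia), sub_zero]

theorem le_finalCharge_of_le_card_donors (H : IsBroadRegular G d) (h : #(secondNbhd G x) ≤ 2)
    (hb : b ≤ #(donors G d x)) :
    (#(secondNbhd G x) : ℝ) - 4 + (1 - discount d) * b ≤ finalCharge G d x := by
  have : 0 ≤ 1 - discount d := by linarith [discount_le H.lt_degree]
  rw [H.finalCharge_of_card_le_two h]
  gcongr

end IsBroadRegular

namespace IsOrdinary

theorem neg_discount_le_finalCharge (H : IsOrdinary G d) (h : 3 ≤ #(secondNbhd G x)) :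
    -discount d ≤ finalCharge G d x := by
  obtain h | h := h.eq_or_lt
  · rw [finalCharge, H.inflow_eq_one h.symm, H.outflow_eq_zero (by lia), ← h]
    push_cast
    linarith
  · linarith [discount_pos H.lt_degree, H.finalCharge_nonneg h]

theorem finalCharge_add_allowance_pos (H : IsOrdinary G d) (h : ¬ IsNeedy G d x) :
    0 < finalCharge G d x + allowance d := by
  have hallow := two_mul_discount_lt_allowance H.lt_degree
  have hpos := discount_pos H.lt_degree
  by_cases hle : #(secondNbhd G x) ≤ 2
  · have hdonors : 2 ≤ #(donors G d x) := by
      by_contra! hlt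
      exact h ⟨hle, Nat.le_of_lt_succ hlt⟩
    have hcard : #(secondNbhd G x) = 2 :=
      hle.antisymm (hdonors.trans (card_le_card (donors_subset_secondNbhd x)))
    have := H.le_finalCharge_of_le_card_donors hle hdonors
    rw [hcard] at this
    push_cast at this
    linarith
  · linarith [H.neg_discount_le_finalCharge (x := x) (by lia)]

end IsOrdinary

end Discharging

/-! ### Clusters of needy vertices -/

/-- The set of vertices over which the deficit of a needy vertex `w` is averaged: the vertices
which the exits of `w` cut off, and the exit itself when it ends a tail. -/
noncomputable def cluster (G : SimpleGraph V) (d : ℕ) (w : V) : Finset V :=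
  if #(secondNbhd G w) = 1 then core G w ∪ {z ∈ exits G w | IsTailPort G d z} else core G w

/-- What is required of the cluster `K` of a needy vertex: it has a positive total, and the other
conditions force clusters of needy vertices to coincide as soon as they meet. -/
structure IsCluster (G : SimpleGraph V) (d : ℕ) (K : Finset V) : Prop where
  sum_pos : 0 < ∑ x ∈ K, (finalCharge G d x + allowance d)
  three_le_of_adj : ∀ x ∈ K, ∀ z ∉ K, G.Adj x z → 3 ≤ #(secondNbhd G z)
  cluster_eq : ∀ w ∈ K, IsNeedy G d w → cluster G d w = K
  two_le_card_common : ∀ w ∈ K, IsNeedy G d w → ∀ x ∈ K, x ∉ closedNbhd G w →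
    2 ≤ #(G.neighborFinset w ∩ G.neighborFinset x)
  eq_closedNbhd_or_exists_eq_of_adj : (∀ w ∈ K, IsNeedy G d w → K = closedNbhd G w) ∨
    ∃ b, ∀ x ∈ K, ∀ z ∉ K, G.Adj x z → z = b

section Cluster

variable {K : Finset V} {p w w' x : V}

theorem closedNbhd_subset_cluster (w : V) : closedNbhd G w ⊆ cluster G d w := by
  unfold cluster core
  split_ifs
  · exact subset_union_left.trans subset_union_left
  · exact subset_union_left

theorem self_mem_cluster (w : V) : w ∈ cluster G d w :=
  closedNbhd_subset_cluster w (self_mem_closedNbhd w)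

namespace IsCluster

theorem mem_of_mem_closedNbhd (h : IsCluster G d K) (hw : IsNeedy G d w) (hx : x ∈ K)
    (hxw : x ∈ closedNbhd G w) : w ∈ K := by
  by_contra hwK
  obtain rfl | hxw := mem_closedNbhd.1 hxw
  · exact hwK hx
  · have := h.three_le_of_adj x hx w hwK hxw.symm
    have := hw.1
    lia

theorem cluster_eq_cluster_of_mem (h : IsCluster G d (cluster G d w))
    (h' : IsCluster G d (cluster G d w')) (hw : IsNeedy G d w) (hw' : IsNeedy G d w')
    (hx : x ∈ cluster G d w) (hx' : x ∈ cluster G d w') : cluster G d w = cluster G d w' := by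
  by_cases hxw' : x ∈ closedNbhd G w'
  · exact (h.cluster_eq w' (h.mem_of_mem_closedNbhd hw' hx hxw') hw').symm
  by_cases hxw : x ∈ closedNbhd G w
  · exact h'.cluster_eq w (h'.mem_of_mem_closedNbhd hw hx' hxw) hw
  obtain hK | ⟨b, hb⟩ := h.eq_closedNbhd_or_exists_eq_of_adj
  · exact absurd (hK w (self_mem_cluster w) hw ▸ hx) hxw
  obtain ⟨t, ht, htb⟩ : ∃ t ∈ G.neighborFinset w' ∩ G.neighborFinset x, t ≠ b :=
    exists_mem_ne (h'.two_le_card_common w' (self_mem_cluster w') hw' x hx' hxw') b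
  rw [mem_inter, mem_neighborFinset, mem_neighborFinset] at ht
  have htK : t ∈ cluster G d w := by
    by_contra htK
    exact htb (hb x hx t htK ht.2)
  have hw'K := h.mem_of_mem_closedNbhd hw' htK (mem_closedNbhd_of_adj ht.1)
  exact (h.cluster_eq w' hw'K hw').symm

end IsCluster

theorem sum_univ_pos_of_pairwiseDisjoint [Nonempty V] {f : V → ℝ} {F : Finset (Finset V)}
    (hdisj : (F : Set (Finset V)).PairwiseDisjoint id) (hF : ∀ K ∈ F, 0 < ∑ x ∈ K, f x)
    (hf : ∀ x, (∀ K ∈ F, x ∉ K) → 0 < f x) : 0 < ∑ x, f x := by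
  have hf' : ∀ x ∈ univ \ F.biUnion id, 0 < f x := fun x hx =>
    hf x fun K hK hxK => (mem_sdiff.1 hx).2 (mem_biUnion.2 ⟨K, hK, hxK⟩)
  rw [← sum_sdiff (subset_univ (F.biUnion id)), sum_biUnion hdisj]
  obtain rfl | hne := F.eq_empty_or_nonempty
  · simpa using sum_pos (s := univ) (fun x _ => hf x (by simp)) univ_nonempty
  · exact add_pos_of_nonneg_of_pos (sum_nonneg fun x hx => (hf' x hx).le) (sum_pos hF hne)

theorem IsOrdinary.sum_card_secondNbhd_pos (H : IsOrdinary G d)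
    (h : ∀ w, IsNeedy G d w → IsCluster G d (cluster G d w)) :
    0 < ∑ x, ((#(secondNbhd G x) : ℝ) - 4 + allowance d) := by
  have := H.connected.nonempty
  rw [sum_add_distrib, ← sum_finalCharge G d, ← sum_add_distrib]
  refine sum_univ_pos_of_pairwiseDisjoint
    (F := image (cluster G d) {w | IsNeedy G d w}) ?_ ?_ ?_
  · simp only [coe_image, coe_filter_univ]
    rintro _ ⟨w, hw, rfl⟩ _ ⟨w', hw', rfl⟩ hne
    refine Finset.disjoint_left.2 fun x hx hx' => hne ?_
    exact (h w hw).cluster_eq_cluster_of_mem (h w' hw') hw hw' hx hx'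
  · simp only [mem_image, mem_filter_univ]
    rintro _ ⟨w, hw, rfl⟩
    exact (h w hw).sum_pos
  · intro x hx
    refine H.finalCharge_add_allowance_pos fun hneedy => ?_
    exact hx _ (mem_image_of_mem (cluster G d) (by simpa using hneedy)) (self_mem_cluster x)

theorem sum_finalCharge_add_allowance (K : Finset V) :
    ∑ x ∈ K, (finalCharge G d x + allowance d)
      = ∑ x ∈ K, finalCharge G d x + #K * allowance d := by
  rw [sum_add_distrib, sum_const, nsmul_eq_mul]

theorem card_mul_le_sum {α : Type*} {S : Finset α} {f : α → ℝ} {m : ℝ} (h : ∀ x ∈ S, m ≤ f x) :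
    #S * m ≤ ∑ x ∈ S, f x := by
  simpa only [nsmul_eq_mul] using card_nsmul_le_sum S f m h

namespace IsBroadRegular

theorem sub_four_le_finalCharge (H : IsBroadRegular G d) (h : #(secondNbhd G x) ≤ 2) :
    (#(secondNbhd G x) : ℝ) - 4 ≤ finalCharge G d x := by
  simpa only [Nat.cast_zero, mul_zero, add_zero] using
    H.le_finalCharge_of_le_card_donors h (Nat.zero_le _)

theorem sub_discount_le_finalCharge (H : IsBroadRegular G d) (h : #(secondNbhd G x) ≤ 2)
    (hp : p ∈ exits G x) (hexempt : ¬ IsExempt G d p) :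
    (#(secondNbhd G x) : ℝ) - 3 - discount d ≤ finalCharge G d x := by
  have := H.le_finalCharge_of_le_card_donors h (card_pos.2 ⟨p, mem_donors.2 ⟨hp, hexempt⟩⟩)
  push_cast at this
  linarith

end IsBroadRegular

end Cluster

section PendantBlock

variable {C S B : Finset V} {k : ℕ} {q u w x : V}

theorem cluster_eq_core (h : ∀ u ∈ exits G w, ¬ IsTailPort G d u) :
    cluster G d w = core G w := by
  rw [cluster, filter_false_of_mem h, union_empty, ite_self]

theorem cluster_eq_core_of_card_ne_one (h : #(secondNbhd G w) ≠ 1) :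
    cluster G d w = core G w :=
  if_neg h

theorem cluster_eq_insert_core (h : #(secondNbhd G w) = 1) (hexits : exits G w = {u})
    (hu : IsTailPort G d u) : cluster G d w = insert u (core G w) := by
  rw [cluster, if_pos h, hexits, filter_singleton, if_pos hu, union_comm, insert_eq]

namespace IsPendantBlock

theorem cast_card_add_card (P : IsPendantBlock G d k C u) :
    (#(G.neighborFinset u ∩ C) : ℝ) + #(G.neighborFinset u \ C) = d :=
  mod_cast P.regular.card_inter_add_card_sdiff u C

theorem not_isNeedy (P : IsPendantBlock G d 1 C u) : ¬ IsNeedy G d u := fun h => by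
  have := P.degree_lt_card_secondNbhd_add P.two_le_card_neighborFinset_inter
  have := h.1
  have := P.lt_degree
  lia

section Tail

variable (P : IsPendantBlock G d 1 C u) (hw : G.neighborFinset u \ C = {w})
include P hw

theorem card_secondNbhd_eq_two (hx : x ∈ C) (hux : G.Adj u x) : #(secondNbhd G x) = 2 := by
  rw [P.card_secondNbhd_of_adj hx hux, hw, card_singleton]

theorem exits_eq_singleton (H : IsBroadRegular G d) (hx : x ∈ C) (hux : G.Adj u x) :
    exits G x = {w} := by
  refine (Nonempty.subset_singleton_iff (H.exits_nonempty ?_)).1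
    (hw ▸ P.exits_subset_of_adj hx hux)
  have := P.card_secondNbhd_eq_two hw hx hux
  have := H.lt_degree
  lia

theorem core_eq_insert (H : IsBroadRegular G d) (hx : x ∈ C) (hux : G.Adj u x) :
    core G x = insert u C := by
  have hwC : w ∉ C := (mem_sdiff.1 (hw ▸ mem_singleton_self w)).2
  rw [core, P.exits_eq_singleton hw H hx hux, P.secondNbhd_of_adj hx hux, hw, union_sdiff_right,
    sdiff_singleton_eq_erase,
    erase_eq_of_notMem fun h => hwC (mem_sdiff.1 h).1, union_sdiff_self_eq_union]
  ext z
  rw [mem_union, mem_insert]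
  refine ⟨?_, ?_⟩
  · rintro (hz | hz)
    · obtain rfl | hz := mem_closedNbhd.1 hz
      · exact Or.inr hx
      · exact (P.mem_or_eq_of_adj x hx z hz).symm
    · exact Or.inr hz
  · rintro (rfl | hz)
    · exact Or.inl (mem_closedNbhd_of_adj hux.symm)
    · exact Or.inr hz

theorem cluster_eq_insert (H : IsBroadRegular G d) (hx : x ∈ C) : cluster G d x = insert u C := by
  by_cases hux : G.Adj u x
  · have := P.card_secondNbhd_eq_two hw hx hux
    rw [cluster_eq_core_of_card_ne_one (by lia), P.core_eq_insert hw H hx hux]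
  · have ht := P.exists_common_of_not_adj P.two_le_card_neighborFinset_inter hx hux
    rw [cluster_eq_insert_core (P.card_secondNbhd_of_not_adj hx hux ht)
      (P.exits_of_not_adj hx hux ht) ⟨_, _, P.isTailEnd_insert hw⟩, P.core_of_not_adj hx hux ht]

theorem eq_of_mem_insert_of_adj (hx : x ∈ insert u C) (hq : q ∉ insert u C) (h : G.Adj x q) :
    q = w := by
  rw [mem_insert, not_or] at hq
  obtain rfl | hx := mem_insert.1 hx
  · rw [← mem_singleton, ← hw, mem_sdiff, mem_neighborFinset]
    exact ⟨h, hq.2⟩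
  · exact absurd (P.mem_or_eq_of_adj x hx q h) (not_or.2 hq.symm)

theorem degree_lt_card_secondNbhd_add_two (H : IsBroadRegular G d) :
    d < #(secondNbhd G w) + 2 := by
  obtain ⟨x, hx, hux⟩ := P.exists_adj_mem
  rw [← P.card_secondNbhd_eq_two hw hx hux]
  refine H.regular.lt_card_secondNbhd_add_of_mem_exits ?_
  rw [P.exits_eq_singleton hw H hx hux, mem_singleton]

theorem neg_one_sub_discount_le_finalCharge (H : IsOrdinary G d) (hx : x ∈ C)
    (hux : G.Adj u x) : -1 - discount d ≤ finalCharge G d x := by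
  have hcard := P.card_secondNbhd_eq_two hw hx hux
  have hexits := P.exits_eq_singleton hw H.toIsBroadRegular hx hux
  have := H.sub_discount_le_finalCharge hcard.le (hexits ▸ mem_singleton_self w)
    (H.not_isExempt_of_exits_eq_singleton hcard hexits)
  rw [hcard] at this
  push_cast at this
  linarith

theorem degree_sub_four_le_finalCharge (H : IsBroadRegular G d) :
    (d : ℝ) - 4 ≤ finalCharge G d u := by
  have hexempt : IsExempt G d u := Or.inl ⟨_, _, P.isTailEnd_insert hw⟩
  have hcard : (d : ℝ) ≤ #(secondNbhd G u) := mod_cast Nat.le_of_lt_succ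
    (P.degree_lt_card_secondNbhd_add P.two_le_card_neighborFinset_inter)
  linarith [H.le_finalCharge u, outflow_eq_zero_of_isExempt hexempt]

theorem sum_insert_pos (H : IsOrdinary G d) :
    0 < ∑ x ∈ insert u C, (finalCharge G d x + allowance d) := by
  have hu := P.degree_sub_four_le_finalCharge hw H.toIsBroadRegular
  have hinter : #(G.neighborFinset u ∩ C) * (-1 - discount d)
      ≤ ∑ x ∈ G.neighborFinset u ∩ C, finalCharge G d x := card_mul_le_sum fun x hx => by
    rw [mem_inter, mem_neighborFinset] at hx
    exact P.neg_one_sub_discount_le_finalCharge hw H hx.2 hx.1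
  have hsdiff : #(C \ G.neighborFinset u) * (-3 : ℝ)
      ≤ ∑ x ∈ C \ G.neighborFinset u, finalCharge G d x := card_mul_le_sum fun x hx => by
    rw [mem_sdiff, mem_neighborFinset] at hx
    have hcard := P.card_secondNbhd_of_not_adj hx.1 hx.2
      (P.exists_common_of_not_adj P.two_le_card_neighborFinset_inter hx.1 hx.2)
    have := H.sub_four_le_finalCharge (hcard.trans_le one_le_two)
    rw [hcard] at this
    push_cast at this
    linarith
  have hcard := P.cast_card_add_card
  rw [hw, card_singleton, Nat.cast_one] at hcard
  rw [eq_sub_of_add_eq hcard] at hinter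
  rw [P.card_sdiff_neighborFinset, hw, card_singleton] at hsdiff
  rw [sum_finalCharge_add_allowance, sum_insert P.notMem, card_insert_of_notMem P.notMem,
    P.card_eq, ← sum_inter_add_sum_sdiff C (G.neighborFinset u), inter_comm C]
  push_cast at hsdiff ⊢
  linarith [lt_add_one_mul_allowance H.lt_degree, allowance_pos H.lt_degree,
    sub_two_mul_discount H.lt_degree, discount_le H.lt_degree]

theorem isCluster_insert (H : IsOrdinary G d) : IsCluster G d (insert u C) where
  sum_pos := P.sum_insert_pos hw H
  three_le_of_adj x hx z hz h := by
    rw [P.eq_of_mem_insert_of_adj hw hx hz h]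
    have := P.degree_lt_card_secondNbhd_add_two hw H.toIsBroadRegular
    have := H.lt_degree
    lia
  cluster_eq x hx hneedy := by
    obtain rfl | hx := mem_insert.1 hx
    · exact absurd hneedy P.not_isNeedy
    · exact P.cluster_eq_insert hw H.toIsBroadRegular hx
  two_le_card_common x hx hneedy y hy hxy := by
    have hx' : x ∈ C := (mem_insert.1 hx).resolve_left fun hxu => P.not_isNeedy (hxu ▸ hneedy)
    obtain rfl | hy := mem_insert.1 hy
    · have hyx : ¬ G.Adj y x := fun h => hxy (mem_closedNbhd_of_adj h.symm)
      refine P.two_le_card_neighborFinset_inter.trans (card_le_card fun t ht => ?_)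
      rw [mem_inter, mem_neighborFinset] at ht
      rw [mem_inter, mem_neighborFinset, mem_neighborFinset]
      rw [← P.closedNbhd_eq_of_not_adj hx' hyx, mem_closedNbhd] at ht
      exact ⟨ht.2.resolve_left fun h => hyx (h ▸ ht.1), ht.1⟩
    · exact (P.two_le_card_common hx' hy).trans (card_le_card inter_subset_left)
  eq_closedNbhd_or_exists_eq_of_adj :=
    Or.inr ⟨w, fun _ hx _ hz => P.eq_of_mem_insert_of_adj hw hx hz⟩

end Tail

theorem mem_sdiff_of_demand_ne_zero (P : IsPendantBlock G d k C u)
    (ha : 2 ≤ #(G.neighborFinset u ∩ C)) (hx : x ∈ G.neighborFinset u ∩ C)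
    (h : demand G d q x ≠ 0) : q ∈ G.neighborFinset u \ C := by
  have hxq : x ∈ exits G q := (mem_donors.1 (mem_donors_of_demand_ne_zero h).2).1
  rw [mem_inter, mem_neighborFinset] at hx
  have hq : q ∉ C := fun hq => by
    by_cases hqu : G.Adj u q
    · exact (mem_sdiff.1 (P.exits_subset_of_adj hq hqu hxq)).2 hx.2
    · rw [P.exits_of_not_adj hq hqu (P.exists_common_of_not_adj ha hq hqu),
        mem_singleton] at hxq
      exact P.notMem (hxq ▸ hx.2)
  rw [mem_sdiff, mem_neighborFinset]
  exact ⟨P.adj_of_mem_secondNbhd hx.2 hx.1 hq (exits_subset_secondNbhd q hxq), hq⟩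

theorem card_secondNbhd_of_demand_ne_zero (P : IsPendantBlock G d k C u)
    (ha : 2 ≤ #(G.neighborFinset u ∩ C)) (hx : x ∈ G.neighborFinset u ∩ C)
    (h : demand G d q x ≠ 0) : #(secondNbhd G q) = 3 ∧ #(G.neighborFinset u ∩ C) ≤ 3 := by
  have hq := P.mem_sdiff_of_demand_ne_zero ha hx h
  rw [mem_sdiff, mem_neighborFinset] at hq
  have hsub := (P.neighborFinset_inter_subset_exits hq.2 hq.1).trans (exits_subset_secondNbhd q)
  have hle := (mem_donors_of_demand_ne_zero h).1
  refine ⟨hle.antisymm (Nat.lt_of_not_le fun hle₂ => ?_), (card_le_card hsub).trans hle⟩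
  have hC := eq_of_subset_of_card_le hsub (hle₂.trans ha)
  obtain ⟨y, z, hyz, hyzC⟩ := card_eq_two.1 ((hC ▸ hle₂).antisymm ha)
  have hmem : ∀ t ∈ ({y, z} : Finset V), G.neighborFinset t ∩ G.neighborFinset q = {u} := by
    intro t ht
    rw [← hyzC, mem_inter, mem_neighborFinset] at ht
    exact P.neighborFinset_inter_eq_singleton ht.2 ht.1 hq.2 hq.1
  have L : IsLink G d q y u u z :=
    ⟨P.regular, hyzC ▸ hC.symm, hyz, hmem y (by simp), hmem z (by simp)⟩
  exact L.ends_ne rfl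

end IsPendantBlock

theorem IsOrdinary.sum_outflow_le_card (H : IsOrdinary G d)
    (h : ∀ x ∈ S, ∀ q, demand G d q x ≠ 0 → q ∈ B ∧ #(secondNbhd G q) = 3) :
    ∑ x ∈ S, outflow G d x ≤ #B := by
  have hzero : ∀ q ∉ B, ∑ x ∈ S, demand G d q x = 0 := fun q hq =>
    sum_eq_zero fun x hx => not_not.1 fun hne => hq (h x hx q hne).1
  calc ∑ x ∈ S, outflow G d x = ∑ q, ∑ x ∈ S, demand G d q x := sum_comm
    _ = ∑ q ∈ B, ∑ x ∈ S, demand G d q x :=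
      (sum_subset (subset_univ B) fun q _ hq => hzero q hq).symm
    _ ≤ ∑ q ∈ B, 1 := sum_le_sum fun q _ => ?_
    _ = #B := by rw [sum_const, nsmul_one]
  by_cases hq : ∀ x ∈ S, demand G d q x = 0
  · rw [sum_eq_zero hq]
    exact zero_le_one
  · push Not at hq
    obtain ⟨x, hx, hne⟩ := hq
    rw [← H.inflow_eq_one (h x hx q hne).2]
    exact sum_le_sum_of_subset_of_nonneg (subset_univ S) fun x _ _ => demand_nonneg q x

namespace IsPendantBlock

theorem sum_outflow_le (P : IsPendantBlock G d k C u) (H : IsOrdinary G d)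
    (ha : 2 ≤ #(G.neighborFinset u ∩ C)) :
    ∑ x ∈ G.neighborFinset u ∩ C, outflow G d x ≤ #(G.neighborFinset u \ C) :=
  H.sum_outflow_le_card fun _ hx _ hne => ⟨P.mem_sdiff_of_demand_ne_zero ha hx hne,
    (P.card_secondNbhd_of_demand_ne_zero ha hx hne).1⟩

theorem sum_outflow_eq_zero (P : IsPendantBlock G d k C u)
    (ha : 4 ≤ #(G.neighborFinset u ∩ C)) : ∑ x ∈ G.neighborFinset u ∩ C, outflow G d x = 0 := by
  refine sum_eq_zero fun x hx => ?_
  by_contra hne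
  obtain ⟨q, hq⟩ := exists_demand_ne_zero hne
  have := (P.card_secondNbhd_of_demand_ne_zero (by lia) hx hq).2
  lia

theorem sum_outflow_eq_zero_of_card_eq_two (P : IsPendantBlock G d 1 C u)
    (ha : #(G.neighborFinset u ∩ C) = 2) : ∑ x ∈ G.neighborFinset u ∩ C, outflow G d x = 0 :=
  sum_eq_zero fun _ hx => outflow_eq_zero_of_isExempt (Or.inr ⟨C, u, P, ha, hx⟩)

theorem three_le_add_card_sdiff (P : IsPendantBlock G d k C u) (hu : ¬ IsTailPort G d u) :
    3 ≤ k + #(G.neighborFinset u \ C) := by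
  have hpos := P.card_neighborFinset_sdiff_pos
  have hk := P.one_le
  by_contra! hlt
  obtain rfl : k = 1 := by lia
  obtain ⟨w, hw⟩ := card_eq_one.1 (show #(G.neighborFinset u \ C) = 1 by lia)
  exact hu ⟨_, _, P.isTailEnd_insert hw⟩

theorem card_mul_sub_sum_outflow_le (P : IsPendantBlock G d k C u) (H : IsBroadRegular G d) :
    #(G.neighborFinset u ∩ C) * ((k : ℝ) + #(G.neighborFinset u \ C) - 4)
      - ∑ x ∈ G.neighborFinset u ∩ C, outflow G d x
        ≤ ∑ x ∈ G.neighborFinset u ∩ C, finalCharge G d x := by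
  rw [sub_le_iff_le_add, ← sum_add_distrib]
  refine card_mul_le_sum fun x hx => ?_
  rw [mem_inter, mem_neighborFinset] at hx
  have := H.le_finalCharge x
  rw [P.card_secondNbhd_of_adj hx.2 hx.1] at this
  push_cast at this
  linarith

theorem two_mul_card_sub_nine_le (P : IsPendantBlock G d 1 C u) (H : IsOrdinary G d)
    (hc : 3 ≤ #(G.neighborFinset u \ C)) :
    2 * (#(G.neighborFinset u \ C) : ℝ) - 9
      ≤ #(G.neighborFinset u ∩ C) * ((#(G.neighborFinset u \ C) : ℝ) - 3)
        - ∑ x ∈ G.neighborFinset u ∩ C, outflow G d x := by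
  have ha := P.two_le_card_neighborFinset_inter
  have hout := P.sum_outflow_le H ha
  have hc' : (0 : ℝ) ≤ #(G.neighborFinset u \ C) - 3 := sub_nonneg.2 (mod_cast hc)
  by_cases h₃ : #(G.neighborFinset u ∩ C) = 3
  · rw [h₃]
    push_cast
    linarith
  · have hzero : ∑ x ∈ G.neighborFinset u ∩ C, outflow G d x = 0 := by
      obtain h₂ | h₂ := ha.eq_or_lt
      · exact P.sum_outflow_eq_zero_of_card_eq_two h₂.symm
      · exact P.sum_outflow_eq_zero (by lia)
    have ha' : (2 : ℝ) ≤ #(G.neighborFinset u ∩ C) := mod_cast ha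
    linarith [mul_le_mul_of_nonneg_right ha' hc']

theorem le_sum_inter_finalCharge (P : IsPendantBlock G d k C u) (H : IsOrdinary G d)
    (ha : 2 ≤ #(G.neighborFinset u ∩ C)) (hu : ¬ IsTailPort G d u) :
    (3 - k) * (#(G.neighborFinset u \ C) : ℝ) - 9
      ≤ ∑ x ∈ G.neighborFinset u ∩ C, finalCharge G d x := by
  have hout := P.card_mul_sub_sum_outflow_le H.toIsBroadRegular
  have hk := P.one_le
  have hk' := P.le_two
  have hcpos := P.card_neighborFinset_sdiff_pos
  obtain h₃ | h₃ := (P.three_le_add_card_sdiff hu).eq_or_lt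
  · have hε : #(G.neighborFinset u ∩ C) * -discount d
        ≤ ∑ x ∈ G.neighborFinset u ∩ C, finalCharge G d x := card_mul_le_sum fun x hx => by
      rw [mem_inter, mem_neighborFinset] at hx
      exact H.neg_discount_le_finalCharge (by rw [P.card_secondNbhd_of_adj hx.2 hx.1, h₃])
    have hsum := P.cast_card_add_card
    have hc : (#(G.neighborFinset u \ C) : ℝ) = 3 - k := by
      rw [eq_sub_iff_add_eq']
      exact_mod_cast h₃.symm
    have hpos := discount_pos H.lt_degree
    have hle := discount_le H.lt_degree
    have hmul := sub_two_mul_discount H.lt_degree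
    rw [hc] at hsum ⊢
    rw [eq_sub_of_add_eq hsum] at hε
    obtain rfl | rfl : k = 1 ∨ k = 2 := by lia
    all_goals
      push_cast at hε ⊢
      linarith
  · obtain rfl | rfl : k = 1 ∨ k = 2 := by lia
    · have := P.two_mul_card_sub_nine_le H (by lia)
      push_cast at hout ⊢
      linarith
    · have ha' : (2 : ℝ) ≤ #(G.neighborFinset u ∩ C) := mod_cast ha
      have hc : (0 : ℝ) ≤ #(G.neighborFinset u \ C) - 2 := sub_nonneg.2 (mod_cast by lia)
      have := mul_le_mul_of_nonneg_right ha' hc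
      push_cast at hout ⊢
      linarith [P.sum_outflow_le H ha]

theorem sum_pos (P : IsPendantBlock G d k C u) (H : IsOrdinary G d)
    (ha : 2 ≤ #(G.neighborFinset u ∩ C)) (hu : ¬ IsExempt G d u) :
    0 < ∑ x ∈ C, (finalCharge G d x + allowance d) := by
  have hinter := P.le_sum_inter_finalCharge H ha fun h => hu (Or.inl h)
  have hsdiff : #(C \ G.neighborFinset u) * ((k : ℝ) - 3 - discount d)
      ≤ ∑ x ∈ C \ G.neighborFinset u, finalCharge G d x := card_mul_le_sum fun x hx => by
    rw [mem_sdiff, mem_neighborFinset] at hx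
    have ht := P.exists_common_of_not_adj ha hx.1 hx.2
    have hcard := P.card_secondNbhd_of_not_adj hx.1 hx.2 ht
    have hexits := P.exits_of_not_adj hx.1 hx.2 ht
    have := H.sub_discount_le_finalCharge (hcard.trans_le P.le_two)
      (hexits ▸ mem_singleton_self u) hu
    rwa [hcard] at this
  have hε : ((#(G.neighborFinset u \ C) : ℝ) + k) * discount d ≤ d * discount d := by
    have := P.regular.card_inter_add_card_sdiff u C
    have := P.le_two
    exact mul_le_mul_of_nonneg_right (mod_cast (by lia)) (discount_pos H.lt_degree).le
  rw [sum_finalCharge_add_allowance, P.card_eq, ← sum_inter_add_sum_sdiff C (G.neighborFinset u),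
    inter_comm C]
  rw [P.card_sdiff_neighborFinset] at hsdiff
  have hmul := sub_two_mul_discount H.lt_degree
  have hle := discount_le H.lt_degree
  have hallow := lt_add_one_mul_allowance H.lt_degree
  have hallow' := allowance_pos H.lt_degree
  have hk := P.one_le
  have hk' := P.le_two
  obtain rfl | rfl : k = 1 ∨ k = 2 := by lia
  all_goals
    push_cast at hinter hsdiff hε ⊢
    linarith

theorem isCluster (P : IsPendantBlock G d k C u) (H : IsOrdinary G d)
    (ha : 2 ≤ #(G.neighborFinset u ∩ C)) (hu : ¬ IsExempt G d u) : IsCluster G d C where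
  sum_pos := P.sum_pos H ha hu
  three_le_of_adj x hx z hz h := by
    obtain rfl := (P.mem_or_eq_of_adj x hx z h).resolve_left hz
    have := P.degree_lt_card_secondNbhd_add ha
    have := P.lt_degree
    have := P.le_two
    lia
  cluster_eq x hx hneedy := by
    have hux : ¬ G.Adj u x := fun hux => by
      have := P.card_secondNbhd_of_adj hx hux
      have := P.three_le_add_card_sdiff fun h => hu (Or.inl h)
      have := hneedy.1
      lia
    have ht := P.exists_common_of_not_adj ha hx hux
    rw [cluster_eq_core, P.core_of_not_adj hx hux ht]
    rw [P.exits_of_not_adj hx hux ht]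
    simpa only [mem_singleton, forall_eq] using fun h => hu (Or.inl h)
  two_le_card_common _ hx _ _ hy _ :=
    (P.two_le_card_common hx hy).trans (card_le_card inter_subset_left)
  eq_closedNbhd_or_exists_eq_of_adj :=
    Or.inr ⟨u, fun x hx z hz h => (P.mem_or_eq_of_adj x hx z h).resolve_left hz⟩

end IsPendantBlock

namespace IsOrdinary

theorem isCluster_of_card_eq_one (H : IsOrdinary G d) (hcard : #(secondNbhd G w) = 1) :
    IsCluster G d (cluster G d w) := by
  obtain ⟨u, hu⟩ := card_eq_one.1 hcard
  have hexits := H.exits_eq_singleton hu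
  have hu' : u ∈ exits G w := hexits ▸ mem_singleton_self u
  have P := H.regular.isPendantBlock_core H.lt_degree hexits (hcard.trans_le one_le_two)
  rw [hcard] at P
  by_cases hport : IsTailPort G d u
  · rw [cluster_eq_insert_core hcard hexits hport]
    have hcore : core G w = closedNbhd G w := by
      rw [core, hexits, hu, Finset.sdiff_self, union_empty]
    obtain ⟨t, ht⟩ := card_eq_one.1 (H.card_neighborFinset_sdiff_closedNbhd hu hport)
    exact P.isCluster_insert (hcore ▸ ht) H
  · rw [cluster_eq_core (by simpa [hexits] using hport)]
    exact P.isCluster H P.two_le_card_neighborFinset_inter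
      (not_or.2 ⟨hport, not_isTwinPort_of_card_le_two hu' (hcard.trans_le one_le_two)⟩)

theorem isCluster_of_exits_eq_singleton (H : IsOrdinary G d) (hcard : #(secondNbhd G w) = 2)
    (hexits : exits G w = {u}) : IsCluster G d (cluster G d w) := by
  have P := H.regular.isPendantBlock_core H.lt_degree hexits hcard.le
  rw [hcard] at P
  rw [cluster_eq_core_of_card_ne_one (by lia)]
  obtain h₁ | h₂ := P.card_neighborFinset_inter_pos.nat_succ_le.eq_or_lt
  · obtain ⟨p, hp⟩ := card_eq_one.1 h₁.symm
    have hpC : p ∈ core G w := (mem_inter.1 (hp ▸ mem_singleton_self p)).2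
    rw [← insert_erase hpC]
    exact (P.erase hp).isCluster_insert (P.neighborFinset_sdiff_erase hp) H
  · exact P.isCluster H h₂ (H.not_isExempt_of_exits_eq_singleton hcard hexits)

end IsOrdinary

end PendantBlock

/-! ### Tail junctions -/

/-- The vertices at distance two from `v` are the exits `p` and `y`, where `p` ends a tail which is
attached to `u`, and `y` is a donor. -/
structure IsTailJunction (G : SimpleGraph V) (d : ℕ) (v p u y : V) : Prop where
  secondNbhd_eq : secondNbhd G v = {p, y}
  exits_eq : exits G v = secondNbhd G v
  ne : p ≠ y
  exists_isTailEnd : ∃ X, IsTailEnd G d p u X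
  not_isExempt : ¬ IsExempt G d y

namespace IsTailJunction

variable {p q u v w x y z : V}

theorem card_secondNbhd (J : IsTailJunction G d v p u y) : #(secondNbhd G v) = 2 := by
  rw [J.secondNbhd_eq, card_pair J.ne]

theorem mem_secondNbhd_left (J : IsTailJunction G d v p u y) : p ∈ secondNbhd G v := by
  simp [J.secondNbhd_eq]

theorem mem_secondNbhd_right (J : IsTailJunction G d v p u y) : y ∈ secondNbhd G v := by
  simp [J.secondNbhd_eq]

theorem mem_exits_right (J : IsTailJunction G d v p u y) : y ∈ exits G v :=
  J.exits_eq ▸ J.mem_secondNbhd_right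

theorem neighborFinset_inter_eq_singleton (J : IsTailJunction G d v p u y) :
    G.neighborFinset p ∩ G.neighborFinset v = {u} := by
  obtain ⟨X, T⟩ := J.exists_isTailEnd
  exact T.neighborFinset_inter_eq_singleton
    (T.notMem_of_card J.mem_secondNbhd_left J.card_secondNbhd.ge (by simp [J.card_secondNbhd]))
    J.mem_secondNbhd_left

theorem eq_of_adj (J : IsTailJunction G d v p u y) (hx : x ∈ closedNbhd G v) (hxp : G.Adj x p) :
    x = u :=
  eq_of_adj_of_inter_eq_singleton J.mem_secondNbhd_left J.neighborFinset_inter_eq_singleton hx hxp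

theorem mem_or_eq_of_adj (J : IsTailJunction G d v p u y) (hx : x ∈ closedNbhd G v)
    (hxu : x ≠ u) (hxz : G.Adj x z) : z ∈ closedNbhd G v ∨ z = y := by
  refine (mem_closedNbhd_or_mem_secondNbhd_of_adj hx hxz).imp_right fun hz => ?_
  rw [J.secondNbhd_eq, mem_insert, mem_singleton] at hz
  exact hz.resolve_left fun h => hxu (J.eq_of_adj hx (h ▸ hxz))

theorem neighborFinset_inter_closedNbhd_left (J : IsTailJunction G d v p u y) :
    G.neighborFinset p ∩ closedNbhd G v = {u} := by
  have hu : u ∈ G.neighborFinset p ∩ G.neighborFinset v :=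
    J.neighborFinset_inter_eq_singleton ▸ mem_singleton_self u
  simp only [mem_inter, mem_neighborFinset] at hu
  ext x
  rw [mem_inter, mem_neighborFinset, mem_singleton]
  exact ⟨fun h => J.eq_of_adj h.2 h.1.symm, fun h => h ▸ ⟨hu.1, mem_closedNbhd_of_adj hu.2⟩⟩

theorem degree_le_card_secondNbhd (J : IsTailJunction G d v p u y) (hreg : IsRegularGraph G d) :
    d ≤ #(secondNbhd G u) + 1 := by
  obtain ⟨X, T⟩ := J.exists_isTailEnd
  exact T.degree_le_card_secondNbhd_add_one hreg

theorem lt_card_secondNbhd (J : IsTailJunction G d v p u y) (hreg : IsRegularGraph G d)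
    (hz : z ∈ secondNbhd G v) : d < #(secondNbhd G z) + 2 :=
  J.card_secondNbhd ▸ hreg.lt_card_secondNbhd_add_of_mem_exits (J.exits_eq ▸ hz)

theorem odd_card_inter (J : IsTailJunction G d v p u y) (hreg : IsRegularGraph G d) :
    Odd #(G.neighborFinset y ∩ closedNbhd G v) := by
  have heven := hreg.even_mul_card_add_sum_boundary (disjoint_closedNbhd_secondNbhd v)
    fun x hx z hz => mem_closedNbhd_or_mem_secondNbhd_of_adj hx hz
  rw [J.secondNbhd_eq, sum_pair J.ne, J.neighborFinset_inter_closedNbhd_left, card_singleton,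
    hreg.card_closedNbhd, Nat.even_add, iff_true_left (Nat.even_mul_succ_self d)] at heven
  simpa [Nat.even_add_one, add_comm 1] using heven

theorem even_card_sdiff (J : IsTailJunction G d v p u y) (hreg : IsRegularGraph G d) :
    Even #(G.neighborFinset y \ closedNbhd G v) := by
  obtain ⟨X, T⟩ := J.exists_isTailEnd
  have hodd := T.odd
  rw [← hreg.card_inter_add_card_sdiff y (closedNbhd G v), Nat.odd_add] at hodd
  exact hodd.1 (J.odd_card_inter hreg)

theorem two_le_card_sdiff (J : IsTailJunction G d v p u y) (hreg : IsRegularGraph G d) :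
    2 ≤ #(G.neighborFinset y \ closedNbhd G v) := by
  obtain ⟨-, w, hyw, hw, -⟩ := mem_exits.1 J.mem_exits_right
  have hpos : 0 < #(G.neighborFinset y \ closedNbhd G v) :=
    card_pos.2 ⟨w, mem_sdiff.2 ⟨(mem_neighborFinset ..).2 hyw, hw⟩⟩
  obtain ⟨r, hr⟩ := J.even_card_sdiff hreg
  lia

theorem closedNbhd_eq_of_not_adj (J : IsTailJunction G d v p u y) (hreg : IsRegularGraph G d)
    (hx : x ∈ closedNbhd G v) (hyx : ¬ G.Adj y x) (hxu : x ≠ u) :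
    closedNbhd G x = closedNbhd G v :=
  hreg.closedNbhd_eq_of_forall_not_adj hx fun z hz hxz => by
    obtain h | rfl := J.mem_or_eq_of_adj hx hxu hxz
    exacts [notMem_closedNbhd_of_mem_secondNbhd hz h, hyx hxz.symm]

theorem card_sdiff_lt_card_secondNbhd (J : IsTailJunction G d v p u y)
    (hreg : IsRegularGraph G d) (hx : x ∈ closedNbhd G v) (hyx : G.Adj y x) (hxu : x ≠ u) :
    #(G.neighborFinset y \ closedNbhd G v) < #(secondNbhd G x) := by
  have hy : y ∉ closedNbhd G v := notMem_closedNbhd_of_mem_secondNbhd J.mem_secondNbhd_right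
  have hsub : (G.neighborFinset y \ closedNbhd G v) ∪ (closedNbhd G v \ closedNbhd G x)
      ⊆ secondNbhd G x := by
    refine union_subset (fun z hz => ?_) fun z hz => ?_
    · rw [mem_sdiff, mem_neighborFinset] at hz
      refine mem_secondNbhd.2 ⟨fun h => ?_, y, mem_closedNbhd_of_adj hyx.symm, hz.1⟩
      obtain rfl | hxz := mem_closedNbhd.1 h
      · exact hz.2 hx
      · exact (J.mem_or_eq_of_adj hx hxu hxz).elim hz.2 fun h => hz.1.ne h.symm
    · rw [mem_sdiff] at hz
      have hxv := mem_closedNbhd_comm.1 hx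
      refine mem_secondNbhd.2 ⟨hz.2, v, hxv, ?_⟩
      exact (mem_closedNbhd.1 hz.1).resolve_left fun h => hz.2 (h ▸ hxv)
  have hpos : 0 < #(closedNbhd G v \ closedNbhd G x) := by
    rw [hreg.card_closedNbhd_sdiff_comm]
    exact card_pos.2 ⟨y, mem_sdiff.2 ⟨mem_closedNbhd_of_adj hyx.symm, hy⟩⟩
  have := card_le_card hsub
  rw [card_union_of_disjoint (disjoint_sdiff_self_left.mono_right sdiff_subset)] at this
  lia

theorem closedNbhd_eq_of_card_le_two (J : IsTailJunction G d v p u y) (H : IsBroadRegular G d)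
    (hx : x ∈ closedNbhd G v) (hcard : #(secondNbhd G x) ≤ 2) :
    closedNbhd G x = closedNbhd G v := by
  have hxu : x ≠ u := by
    rintro rfl
    have := J.degree_le_card_secondNbhd H.regular
    have := H.lt_degree
    lia
  refine J.closedNbhd_eq_of_not_adj H.regular hx (fun hyx => ?_) hxu
  have := J.card_sdiff_lt_card_secondNbhd H.regular hx hyx hxu
  have := J.two_le_card_sdiff H.regular
  lia

theorem cluster_eq (J : IsTailJunction G d v p u y) (h : closedNbhd G x = closedNbhd G v) :
    cluster G d x = closedNbhd G v := by
  have hcard : #(secondNbhd G x) ≠ 1 := by simp [secondNbhd_congr h, J.card_secondNbhd]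
  rw [cluster_eq_core_of_card_ne_one hcard, core, h, exits_congr h, secondNbhd_congr h,
    J.exits_eq, Finset.sdiff_self, union_empty]

theorem not_adj_of_card_le_three (J : IsTailJunction G d v p u y) (H : IsBroadRegular G d)
    (hq : q ∉ closedNbhd G v) (hcard : #(secondNbhd G q) ≤ 3) (hx : x ∈ closedNbhd G v) :
    ¬ G.Adj x q := fun hxq => by
  have := J.lt_card_secondNbhd H.regular
    ((mem_closedNbhd_or_mem_secondNbhd_of_adj hx hxq).resolve_left hq)
  have := H.lt_degree
  lia

theorem notMem_closedNbhd_of_demand_ne_zero (J : IsTailJunction G d v p u y)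
    (H : IsBroadRegular G d) (hc : 3 ≤ #(G.neighborFinset y \ closedNbhd G v))
    (hx : x ∈ closedNbhd G v) (h : demand G d q x ≠ 0) : q ∉ closedNbhd G v := fun hq => by
  obtain ⟨hcard, hxq⟩ := mem_donors_of_demand_ne_zero h
  have hqu : q ≠ u := by
    rintro rfl
    have := J.degree_le_card_secondNbhd H.regular
    have := H.lt_degree
    lia
  have hyq : ¬ G.Adj y q := fun hyq => by
    have := J.card_sdiff_lt_card_secondNbhd H.regular hq hyq hqu
    lia
  have htwin := J.closedNbhd_eq_of_not_adj H.regular hq hyq hqu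
  exact notMem_closedNbhd_of_mem_secondNbhd
    (secondNbhd_congr htwin ▸ donors_subset_secondNbhd q hxq) hx

theorem mem_sdiff_of_demand_ne_zero (J : IsTailJunction G d v p u y) (H : IsBroadRegular G d)
    (hc : 3 ≤ #(G.neighborFinset y \ closedNbhd G v)) (hx : x ∈ closedNbhd G v) (hxu : x ≠ u)
    (h : demand G d q x ≠ 0) : q ∈ G.neighborFinset y \ closedNbhd G v := by
  have hq := J.notMem_closedNbhd_of_demand_ne_zero H hc hx h
  obtain ⟨hcard, hxq⟩ := mem_donors_of_demand_ne_zero h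
  obtain ⟨-, -, t, hqt, htx⟩ := mem_secondNbhd_iff.1 (donors_subset_secondNbhd q hxq)
  obtain ht | rfl := J.mem_or_eq_of_adj hx hxu htx.symm
  · exact absurd hqt.symm (J.not_adj_of_card_le_three H hq hcard ht)
  · exact mem_sdiff.2 ⟨(mem_neighborFinset ..).2 hqt.symm, hq⟩

theorem card_inter_le_of_demand_ne_zero (J : IsTailJunction G d v p u y) (H : IsBroadRegular G d)
    (hc : 3 ≤ #(G.neighborFinset y \ closedNbhd G v)) (hx : x ∈ closedNbhd G v) (hxu : x ≠ u)
    (h : demand G d q x ≠ 0) :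
    #(G.neighborFinset y ∩ closedNbhd G v) ≤ #(secondNbhd G q) := by
  have hq := J.mem_sdiff_of_demand_ne_zero H hc hx hxu h
  rw [mem_sdiff, mem_neighborFinset] at hq
  refine card_le_card fun z hz => ?_
  rw [mem_inter, mem_neighborFinset] at hz
  have hzq := J.not_adj_of_card_le_three H hq.2 (mem_donors_of_demand_ne_zero h).1 hz.2
  exact mem_secondNbhd_iff.2
    ⟨fun h => hq.2 (h ▸ hz.2), fun h => hzq h.symm, y, hq.1.symm, hz.1⟩

theorem exists_inter_eq_singleton (J : IsTailJunction G d v p u y) (H : IsBroadRegular G d)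
    (h : #(G.neighborFinset y ∩ closedNbhd G v) = 1) :
    ∃ t, G.neighborFinset y ∩ closedNbhd G v = {t} ∧ t ≠ u ∧ IsTailPort G d t := by
  obtain ⟨t, ht⟩ := card_eq_one.1 h
  have hvy : v ∉ G.neighborFinset y := fun hvy =>
    (mem_secondNbhd_iff.1 J.mem_secondNbhd_right).2.1 ((mem_neighborFinset ..).1 hvy).symm
  have hty : G.neighborFinset y ∩ G.neighborFinset v = {t} := by
    rwa [closedNbhd, inter_insert_of_notMem hvy] at ht
  obtain ⟨X, T⟩ := J.exists_isTailEnd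
  have L : IsLink G d v p u t y :=
    ⟨H.regular, J.secondNbhd_eq, J.ne, J.neighborFinset_inter_eq_singleton, hty⟩
  exact ⟨t, ht, L.ends_ne.symm, y, _, T.extend L H.lt_degree (T.notMem_of_card
    J.mem_secondNbhd_left J.card_secondNbhd.ge (by simp [J.card_secondNbhd]))⟩

section Charge

theorem card_mul_sub_sum_outflow_le (J : IsTailJunction G d v p u y) (H : IsBroadRegular G d) :
    #((G.neighborFinset y ∩ closedNbhd G v).erase u)
        * ((#(G.neighborFinset y \ closedNbhd G v) : ℝ) - 3)
      - ∑ x ∈ (G.neighborFinset y ∩ closedNbhd G v).erase u, outflow G d x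
        ≤ ∑ x ∈ (G.neighborFinset y ∩ closedNbhd G v).erase u, finalCharge G d x := by
  rw [sub_le_iff_le_add, ← sum_add_distrib]
  refine card_mul_le_sum fun x hx => ?_
  rw [mem_erase, mem_inter, mem_neighborFinset] at hx
  have hcard : (#(G.neighborFinset y \ closedNbhd G v) : ℝ) + 1 ≤ #(secondNbhd G x) :=
    mod_cast J.card_sdiff_lt_card_secondNbhd H.regular hx.2.2 hx.2.1 hx.1
  linarith [H.le_finalCharge x]

theorem finalCharge_nonneg (J : IsTailJunction G d v p u y) (H : IsBroadRegular G d) :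
    0 ≤ finalCharge G d u := by
  have := J.degree_le_card_secondNbhd H.regular
  have := H.lt_degree
  exact H.finalCharge_nonneg (by lia)

theorem sub_six_le_card_mul_sub_sum_outflow (J : IsTailJunction G d v p u y)
    (H : IsOrdinary G d) (hc : 4 ≤ #(G.neighborFinset y \ closedNbhd G v)) :
    (#(G.neighborFinset y \ closedNbhd G v) : ℝ) - 6
      ≤ #((G.neighborFinset y ∩ closedNbhd G v).erase u)
          * ((#(G.neighborFinset y \ closedNbhd G v) : ℝ) - 3)
        - ∑ x ∈ (G.neighborFinset y ∩ closedNbhd G v).erase u, outflow G d x := by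
  have hc' : (0 : ℝ) ≤ #(G.neighborFinset y \ closedNbhd G v) - 4 := sub_nonneg.2 (mod_cast hc)
  have hmem : ∀ x ∈ (G.neighborFinset y ∩ closedNbhd G v).erase u, ∀ q, demand G d q x ≠ 0 →
      q ∈ G.neighborFinset y \ closedNbhd G v ∧ #(secondNbhd G q) ≤ 3 ∧
        #(G.neighborFinset y ∩ closedNbhd G v) ≤ #(secondNbhd G q) := fun x hx q hq => by
    rw [mem_erase, mem_inter] at hx
    exact ⟨J.mem_sdiff_of_demand_ne_zero H.toIsBroadRegular (by lia) hx.2.2 hx.1 hq,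
      (mem_donors_of_demand_ne_zero hq).1,
      J.card_inter_le_of_demand_ne_zero H.toIsBroadRegular (by lia) hx.2.2 hx.1 hq⟩
  obtain ⟨r, hr⟩ := J.odd_card_inter H.regular
  have hr' := pred_card_le_card_erase (s := G.neighborFinset y ∩ closedNbhd G v) (a := u)
  rw [hr, Nat.add_sub_cancel] at hr'
  have hmul := mul_le_mul_of_nonneg_right (Nat.cast_le (α := ℝ).2 hr')
    (show (0 : ℝ) ≤ #(G.neighborFinset y \ closedNbhd G v) - 3 by linarith)
  push_cast at hmul
  obtain rfl | rfl | hr₂ : r = 0 ∨ r = 1 ∨ 2 ≤ r := by lia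
  · obtain ⟨t, ht, htu, hport⟩ := J.exists_inter_eq_singleton H.toIsBroadRegular hr
    rw [ht, erase_eq_of_notMem (by simpa using htu.symm), sum_singleton, card_singleton,
      outflow_eq_zero_of_isExempt (.inl hport)]
    push_cast
    linarith
  · have := H.sum_outflow_le_card (B := G.neighborFinset y \ closedNbhd G v) fun x hx q hq =>
      ⟨(hmem x hx q hq).1, by have := (hmem x hx q hq).2; lia⟩
    push_cast at hmul
    linarith
  · rw [sum_eq_zero fun x hx => ?_]
    · have : (2 : ℝ) ≤ r := mod_cast hr₂
      nlinarith
    · by_contra hne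
      obtain ⟨q, hq⟩ := exists_demand_ne_zero hne
      have := (hmem x hx q hq).2
      lia

theorem sub_six_le_sum_inter_finalCharge (J : IsTailJunction G d v p u y) (H : IsOrdinary G d) :
    (#(G.neighborFinset y \ closedNbhd G v) : ℝ) - 6
      ≤ ∑ x ∈ G.neighborFinset y ∩ closedNbhd G v, finalCharge G d x := by
  have hu := J.finalCharge_nonneg H.toIsBroadRegular
  obtain h₂ | h₂ := (J.two_le_card_sdiff H.regular).eq_or_lt
  · have hε : #(G.neighborFinset y ∩ closedNbhd G v) * -discount d
        ≤ ∑ x ∈ G.neighborFinset y ∩ closedNbhd G v, finalCharge G d x :=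
      card_mul_le_sum fun x hx => by
        rw [mem_inter, mem_neighborFinset] at hx
        by_cases hxu : x = u
        · rw [hxu]
          linarith [discount_pos H.lt_degree]
        · have := J.card_sdiff_lt_card_secondNbhd H.regular hx.2 hx.1 hxu
          exact H.neg_discount_le_finalCharge (by lia)
    have hsum : (#(G.neighborFinset y ∩ closedNbhd G v) : ℝ) + 2 = d :=
      mod_cast h₂ ▸ H.regular.card_inter_add_card_sdiff y (closedNbhd G v)
    rw [eq_sub_of_add_eq hsum] at hε
    rw [← h₂]
    push_cast
    linarith [sub_two_mul_discount H.lt_degree]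
  · have hc : 4 ≤ #(G.neighborFinset y \ closedNbhd G v) := by
      obtain ⟨r, hr⟩ := J.even_card_sdiff H.regular
      lia
    calc _ ≤ _ := J.sub_six_le_card_mul_sub_sum_outflow H hc
      _ ≤ _ := J.card_mul_sub_sum_outflow_le H.toIsBroadRegular
      _ ≤ ∑ x ∈ G.neighborFinset y ∩ closedNbhd G v, finalCharge G d x := by
        by_cases h : u ∈ G.neighborFinset y ∩ closedNbhd G v
        · rw [← add_sum_erase _ _ h]
          exact le_add_of_nonneg_left hu
        · rw [erase_eq_of_notMem h]

theorem neg_one_sub_discount_le_finalCharge (J : IsTailJunction G d v p u y)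
    (H : IsBroadRegular G d) (hx : x ∈ closedNbhd G v) (hyx : ¬ G.Adj y x) :
    -1 - discount d ≤ finalCharge G d x := by
  by_cases hxu : x = u
  · rw [hxu]
    linarith [J.finalCharge_nonneg H, discount_pos H.lt_degree]
  · have htwin := J.closedNbhd_eq_of_not_adj H.regular hx hyx hxu
    have hcard : #(secondNbhd G x) = 2 := by rw [secondNbhd_congr htwin, J.card_secondNbhd]
    have := H.sub_discount_le_finalCharge hcard.le (exits_congr htwin ▸ J.mem_exits_right)
      J.not_isExempt
    rw [hcard] at this
    push_cast at this
    linarith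

theorem sum_pos (J : IsTailJunction G d v p u y) (H : IsOrdinary G d) :
    0 < ∑ x ∈ closedNbhd G v, (finalCharge G d x + allowance d) := by
  have hinter := J.sub_six_le_sum_inter_finalCharge H
  have hsdiff : #(closedNbhd G v \ G.neighborFinset y) * (-1 - discount d)
      ≤ ∑ x ∈ closedNbhd G v \ G.neighborFinset y, finalCharge G d x :=
    card_mul_le_sum fun x hx => by
      rw [mem_sdiff, mem_neighborFinset] at hx
      exact J.neg_one_sub_discount_le_finalCharge H.toIsBroadRegular hx.1 hx.2
  have hε : ((#(G.neighborFinset y \ closedNbhd G v) : ℝ) + 1) * discount d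
      ≤ d * discount d := by
    have := H.regular.card_inter_add_card_sdiff y (closedNbhd G v)
    have := (J.odd_card_inter H.regular).pos
    exact mul_le_mul_of_nonneg_right (mod_cast (by lia)) (discount_pos H.lt_degree).le
  rw [H.regular.card_closedNbhd_sdiff_neighborFinset] at hsdiff
  rw [sum_finalCharge_add_allowance, H.regular.card_closedNbhd,
    ← sum_inter_add_sum_sdiff (closedNbhd G v) (G.neighborFinset y), inter_comm]
  push_cast at hsdiff ⊢
  linarith [sub_two_mul_discount H.lt_degree, discount_le H.lt_degree,
    lt_add_one_mul_allowance H.lt_degree]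

end Charge

theorem isCluster (J : IsTailJunction G d v p u y) (H : IsOrdinary G d) :
    IsCluster G d (closedNbhd G v) where
  sum_pos := J.sum_pos H
  three_le_of_adj x hx z hz hxz := by
    have := J.lt_card_secondNbhd H.regular
      ((mem_closedNbhd_or_mem_secondNbhd_of_adj hx hxz).resolve_left hz)
    have := H.lt_degree
    lia
  cluster_eq x hx hneedy :=
    J.cluster_eq (J.closedNbhd_eq_of_card_le_two H.toIsBroadRegular hx hneedy.1)
  two_le_card_common x hx hneedy z hz hzx :=
    absurd (J.closedNbhd_eq_of_card_le_two H.toIsBroadRegular hx hneedy.1 ▸ hz) hzx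
  eq_closedNbhd_or_exists_eq_of_adj := .inl fun _ hx hneedy =>
    (J.closedNbhd_eq_of_card_le_two H.toIsBroadRegular hx hneedy.1).symm

end IsTailJunction

namespace IsOrdinary

variable {p q w : V}

theorem isCluster_of_isTailPort (H : IsOrdinary G d) (hsecond : secondNbhd G w = {p, q})
    (hne : p ≠ q) (hexits : exits G w = secondNbhd G w) (hp : IsTailPort G d p) :
    IsCluster G d (cluster G d w) := by
  have hq : ¬ IsExempt G d q := not_or.2 ⟨H.not_isTailPort_of_isTailPort hsecond hne hp,
    not_isTwinPort_of_card_le_two (v := w) (by simp [hexits, hsecond])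
      (by simp [hsecond, card_pair hne])⟩
  obtain ⟨u, hp⟩ := hp
  have J : IsTailJunction G d w p u q := ⟨hsecond, hexits, hne, hp, hq⟩
  rw [J.cluster_eq rfl]
  exact J.isCluster H

theorem exists_isTailPort (hneedy : IsNeedy G d w) (hcard : #(exits G w) = 2) :
    ∃ p ∈ exits G w, IsTailPort G d p := by
  by_contra! h
  have hdonors : donors G d w = exits G w := filter_true_of_mem fun p hp =>
    not_or.2 ⟨h p hp, not_isTwinPort_of_card_le_two hp hneedy.1⟩
  have := hneedy.2
  rw [hdonors, hcard] at this
  lia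

theorem isCluster_cluster (H : IsOrdinary G d) (hneedy : IsNeedy G d w) :
    IsCluster G d (cluster G d w) := by
  have hle := hneedy.1
  have hpos : 0 < #(exits G w) := card_pos.2 (H.exits_nonempty (by have := H.lt_degree; lia))
  have hexits : #(exits G w) ≤ #(secondNbhd G w) := card_le_card (exits_subset_secondNbhd w)
  by_cases h₁ : #(secondNbhd G w) = 1
  · exact H.isCluster_of_card_eq_one h₁
  have h₂ : #(secondNbhd G w) = 2 := by lia
  obtain h | h : #(exits G w) = 1 ∨ #(exits G w) = 2 := by lia
  · obtain ⟨u, hu⟩ := card_eq_one.1 h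
    exact H.isCluster_of_exits_eq_singleton h₂ hu
  · have heq : exits G w = secondNbhd G w :=
      eq_of_subset_of_card_le (exits_subset_secondNbhd w) (by lia)
    obtain ⟨p, hp, hport⟩ := exists_isTailPort hneedy h
    rw [heq] at hp
    obtain ⟨q, hq⟩ := card_eq_one.1 (show #((secondNbhd G w).erase p) = 1 by
      rw [card_erase_of_mem hp, h₂])
    have hqp : q ≠ p := (mem_erase.1 (hq ▸ mem_singleton_self q)).1
    exact H.isCluster_of_isTailPort (by rw [← insert_erase hp, hq]) hqp.symm heq hport

end IsOrdinary

theorem two_mul_ncard_edgeSet (G : SimpleGraph V) :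
    2 * G.edgeSet.ncard = ∑ v, #(G.neighborFinset v) := by
  rw [← coe_edgeFinset, Set.ncard_coe_finset, ← G.sum_degrees_eq_twice_card_edges]
  rfl

theorem card_neighborFinset_graphSquare (v : V) :
    #((graphSquare G).neighborFinset v) = #(G.neighborFinset v) + #(secondNbhd G v) := by
  have hdisj : Disjoint (G.neighborFinset v) (secondNbhd G v) :=
    (disjoint_closedNbhd_secondNbhd v).mono_left (subset_insert ..)
  rw [← card_union_of_disjoint hdisj]
  congr 1
  ext z
  rw [mem_union, mem_neighborFinset, mem_neighborFinset, graphSquare_adj]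

theorem two_mul_ncard_edgeSet_graphSquare (G : SimpleGraph V) :
    2 * (graphSquare G).edgeSet.ncard = 2 * G.edgeSet.ncard + ∑ v, #(secondNbhd G v) := by
  simp only [two_mul_ncard_edgeSet, card_neighborFinset_graphSquare, sum_add_distrib]

theorem IsOrdinary.card_mul_lt_sum_card_secondNbhd (H : IsOrdinary G d) :
    (Fintype.card V : ℝ) * (4 - allowance d) < ∑ v, (#(secondNbhd G v) : ℝ) := by
  have hpos := H.sum_card_secondNbhd_pos fun w hw => H.isCluster_cluster hw
  rw [sum_add_distrib, sum_sub_distrib, sum_const, sum_const, card_univ, nsmul_eq_mul,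
    nsmul_eq_mul] at hpos
  linarith

end Development

/-- If `G` is a connected `d`-regular graph (`d > 6`) on `n` vertices whose
square is not complete and which is neither a snake graph nor a peanut graph, then
`e(G²) - e(G) > 2n(1 - 2/(d+1) - 3/(d-3))`. -/
theorem stmt0 {V : Type*} [Fintype V] (G : SimpleGraph V) (d n : ℕ)
    (hn : n = Fintype.card V) (hd : 6 < d)
    (hconn : G.Connected) (hreg : IsRegularGraph G d)
    (hnotcomplete : graphSquare G ≠ ⊤)
    (hsnake : ¬ IsSnake G d) (hpeanut : ¬ IsPeanut G d) :
    ((graphSquare G).edgeSet.ncard : ℝ) - (G.edgeSet.ncard : ℝ) >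
      2 * (n : ℝ) * (1 - 2 / ((d : ℝ) + 1) - 3 / ((d : ℝ) - 3)) := by
  subst hn
  have H : IsOrdinary G d :=
    { lt_degree := hd
      regular := hreg
      connected := hconn
      two_mul_add_two_le_card := hreg.le_card_of_graphSquare_ne_top hnotcomplete
      not_isSnake := hsnake
      not_isPeanut := hpeanut }
  have hsecond : (Fintype.card V : ℝ) * (4 - (8 / (d + 1) + 12 / (d - 3)))
      < ∑ v, ((secondNbhd G v).card : ℝ) := H.card_mul_lt_sum_card_secondNbhd
  have hedges : 2 * ((graphSquare G).edgeSet.ncard : ℝ)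
      = 2 * G.edgeSet.ncard + ∑ v, ((secondNbhd G v).card : ℝ) :=
    mod_cast two_mul_ncard_edgeSet_graphSquare G
  have hbound : 2 * (2 * (Fintype.card V : ℝ) * (1 - 2 / ((d : ℝ) + 1) - 3 / ((d : ℝ) - 3)))
      = Fintype.card V * (4 - (8 / (d + 1) + 12 / (d - 3))) := by ring
  linarith
end

section
/- Let G be a d-regular graph, let v be a vertex of G, and let u ∈ N₂'(v). Then deg₂(u) ≥ d − deg₂(v) + 1. In particular, if deg₂(v) ≤ 3, then deg₂(u) ≥ d − 2. -/
open SimpleGraph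

variable {V : Type*}

/-!
Choose a geodesic `v, x, u` and a neighbour `w` of `u` at distance 3 from `v`. Every common
neighbour of `x` and `w` lies at distance 2 from `v`, so there are at most `deg₂ v` of them. Hence
`N(x) ∪ N(w)` has at least `2d - deg₂ v` elements; together with the two further vertices `x` and
`w` they all lie in the ball of radius 2 about `u`, which has `1 + d + deg₂ u` elements.
-/

theorem ncard_neighborSet_eq_degree (G : SimpleGraph V) (v : V) [Fintype (G.neighborSet v)] :
    (G.neighborSet v).ncard = G.degree v := by
  rw [← Set.fintypeCard_eq_ncard, card_neighborSet_eq_degree]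

section Distance

variable {G : SimpleGraph V} {u v w x : V}

theorem dist_eq_two_iff :
    G.dist u v = 2 ↔ u ≠ v ∧ ¬ G.Adj u v ∧ (G.commonNeighbors u v).Nonempty := by
  rw [← edist_eq_two_iff, SimpleGraph.dist, ENat.toNat_eq_iff two_ne_zero, Nat.cast_ofNat]

theorem commonNeighbors_subset_distSet {i : ℕ} (hx : G.dist v x = i) (hw : G.dist v w = i + 2) :
    G.commonNeighbors x w ⊆ distSet G v (i + 1) := by
  rintro y ⟨hxy, hwy⟩
  have hx_step := hxy.diff_dist_adj (u := v)
  have hw_step := hwy.diff_dist_adj (u := v)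
  change G.dist v y = i + 1
  omega

theorem neighborSet_subset_of_adj (hux : G.Adj u x) :
    G.neighborSet x ⊆ insert u (G.neighborSet u) ∪ distSet G u 2 := by
  intro y hxy
  by_cases hyu : y = u
  · exact .inl (.inl hyu)
  by_cases huy : G.Adj u y
  · exact .inl (.inr huy)
  · exact .inr (dist_eq_two_iff.2 ⟨Ne.symm hyu, huy, x, hux, hxy.symm⟩)

end Distance

theorem finite_distSet_two (G : SimpleGraph V) [G.LocallyFinite] (v : V) :
    (distSet G v 2).Finite := by
  refine ((G.neighborSet v).toFinite.biUnion fun x _ ↦ (G.neighborSet x).toFinite).subset ?_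
  intro u hu
  obtain ⟨-, -, x, hvx, hux⟩ := dist_eq_two_iff.1 hu
  exact Set.mem_biUnion hvx hux.symm

section Counting

variable {G : SimpleGraph V} [G.LocallyFinite] {u v w x : V}

theorem ncard_commonNeighbors_le_deg2 (hvx : G.Adj v x) (hw : G.dist v w = 3) :
    (G.commonNeighbors x w).ncard ≤ deg2 G v :=
  Set.ncard_le_ncard (commonNeighbors_subset_distSet (dist_eq_one_iff_adj.2 hvx) hw)
    (finite_distSet_two G v)

theorem degree_add_degree_add_one_le (hux : G.Adj u x) (huw : G.Adj u w) (hne : x ≠ w)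
    (hxw : ¬ G.Adj x w) :
    G.degree x + G.degree w + 1 ≤
      G.degree u + deg2 G u + (G.commonNeighbors x w).ncard := by
  have hdisj : Disjoint {x, w} (G.neighborSet x ∪ G.neighborSet w) := by
    simp [hxw, G.adj_comm w x]
  have hball : {x, w} ∪ (G.neighborSet x ∪ G.neighborSet w) ⊆
      insert u (G.neighborSet u) ∪ distSet G u 2 :=
    Set.union_subset
      (Set.pair_subset (.inl (.inr hux)) (.inl (.inr huw)))
      (Set.union_subset (neighborSet_subset_of_adj hux) (neighborSet_subset_of_adj huw))
  have hcard : 2 + (G.neighborSet x ∪ G.neighborSet w).ncard ≤ G.degree u + 1 + deg2 G u := calc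
    2 + (G.neighborSet x ∪ G.neighborSet w).ncard
      = ({x, w} ∪ (G.neighborSet x ∪ G.neighborSet w)).ncard := by
        rw [Set.ncard_union_eq hdisj, Set.ncard_pair hne]
    _ ≤ (insert u (G.neighborSet u) ∪ distSet G u 2).ncard :=
        Set.ncard_le_ncard hball ((Set.toFinite _).union (finite_distSet_two G u))
    _ ≤ (insert u (G.neighborSet u)).ncard + deg2 G u := Set.ncard_union_le _ _
    _ ≤ G.degree u + 1 + deg2 G u := by
        grw [Set.ncard_insert_le, ncard_neighborSet_eq_degree]
  have hunion : (G.neighborSet x ∪ G.neighborSet w).ncard + (G.commonNeighbors x w).ncard =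
      G.degree x + G.degree w := by
    rw [commonNeighbors, Set.ncard_union_add_ncard_inter (G.neighborSet x) (G.neighborSet w),
      ncard_neighborSet_eq_degree, ncard_neighborSet_eq_degree]
  omega

theorem degree_add_degree_add_one_le_of_dist_eq_three (hvx : G.Adj v x) (hxu : G.Adj x u)
    (huw : G.Adj u w) (hw : G.dist v w = 3) :
    G.degree x + G.degree w + 1 ≤ G.degree u + deg2 G u + deg2 G v := by
  have hx : G.dist v x = 1 := dist_eq_one_iff_adj.2 hvx
  have hne : x ≠ w := by
    rintro rfl
    omega
  have hxw : ¬ G.Adj x w := fun hadj ↦ by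
    have hstep := hadj.diff_dist_adj (u := v)
    omega
  grw [degree_add_degree_add_one_le hxu.symm huw hne hxw, ncard_commonNeighbors_le_deg2 hvx hw]

theorem add_one_le_deg2_add_deg2 {d : ℕ} (hreg : IsRegularGraph G d) (hu : u ∈ N2' G v) :
    d + 1 ≤ deg2 G u + deg2 G v := by
  obtain ⟨hvu, w, hvw, huw⟩ := hu
  obtain ⟨-, -, x, hvx, hux⟩ := dist_eq_two_iff.1 hvu
  have hdeg (y : V) : G.degree y = d := by rw [← ncard_neighborSet_eq_degree, hreg]
  have hcount := degree_add_degree_add_one_le_of_dist_eq_three hvx hux.symm huw hvw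
  simp only [hdeg] at hcount
  omega

end Counting

theorem stmt1_general {V : Type*} (G : SimpleGraph V) [G.LocallyFinite] (d : ℕ)
    (hreg : IsRegularGraph G d) (v u : V) (hu : u ∈ N2' G v) :
    ((d : ℤ) - (deg2 G v : ℤ) + 1 ≤ (deg2 G u : ℤ)) ∧
      (deg2 G v ≤ 3 → d - 2 ≤ deg2 G u) := by
  have hsum := add_one_le_deg2_add_deg2 hreg hu
  omega

/-- If `G` is `d`-regular and `u ∈ N₂'(v)`, then
`deg₂(u) ≥ d - deg₂(v) + 1`; in particular if `deg₂(v) ≤ 3` then `deg₂(u) ≥ d - 2`. -/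
theorem stmt1 {V : Type*} [Fintype V] (G : SimpleGraph V) (d : ℕ)
    (hreg : IsRegularGraph G d) (v u : V) (hu : u ∈ N2' G v) :
    ((d : ℤ) - (deg2 G v : ℤ) + 1 ≤ (deg2 G u : ℤ)) ∧
      (deg2 G v ≤ 3 → d - 2 ≤ deg2 G u) := by
  classical exact stmt1_general G d hreg v u hu
end

section
/- Let d > 6, let G be a connected d-regular graph such that G² is not complete, and let R be a region of G. Let t be the minimum of deg₂(x) over all vertices x ∈ R with deg₂(x) ≤ 3. Then R contains at most d + t + 1 vertices; in particular, R contains at most d + 4 vertices. -/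
open SimpleGraph

variable {V : Type*}

/-- One step of the equivalence relation generating regions : both vertices are low degree
(`deg₂ ≤ 3`) and they are within distance 2 of each other. -/
def regStep (G : SimpleGraph V) (a b : V) : Prop :=
  deg2 G a ≤ 3 ∧ deg2 G b ≤ 3 ∧ G.Reachable a b ∧ G.dist a b ≤ 2

/-- A region : an equivalence class of low-degree vertices under chains of `regStep`,
together with all neighbors of vertices of the class. -/
def IsRegion (G : SimpleGraph V) (R : Set V) : Prop :=
  ∃ x₀, deg2 G x₀ ≤ 3 ∧
    R = {y | Relation.ReflTransGen (regStep G) x₀ y} ∪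
        {y | ∃ x, Relation.ReflTransGen (regStep G) x₀ x ∧ G.Adj x y}

/-! Call `v` low if `deg₂ v ≤ 3`. Only `d + 1 + deg₂ v` vertices are within distance two of `v`, so
two closed neighborhoods inside this set overlap in more than `d - deg₂ v` vertices.

Let `u` and `v` be low and at distance at most two, with `w` in both closed neighborhoods. If a
neighbor `y` of `v` were at distance three from `u`, then the closed neighborhoods of `w` and `y`
would overlap inside `N₂(u)`, whence `d < deg₂ u + deg₂ v ≤ 6`, a contradiction. So the closed
neighborhood of `v` is within distance two of `u`. By the same count, being within distance two is
transitive on low vertices. Hence a region lies within distance two of each of its low vertices, in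
particular of one with the least `deg₂`.

The balls of Mathlib are open: `G.ball v 2` is the closed neighborhood of `v`, and `G.ball v 3` is
the set of vertices within distance two of `v`. -/

section Ball

variable {G : SimpleGraph V} {u v : V} {i : ℕ}

theorem mem_ball_three_iff_inter_ball_two_nonempty :
    v ∈ G.ball u 3 ↔ (G.ball u 2 ∩ G.ball v 2).Nonempty := by
  constructor
  · intro h
    by_contra hdisj
    have hne : v ≠ u := by
      rintro rfl
      exact hdisj ⟨v, by simp, by simp⟩
    have hadj : ¬ G.Adj v u := fun hvu ↦ hdisj ⟨v, by simp [hvu.symm], by simp⟩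
    have hcommon : G.commonNeighbors v u = ∅ := by
      refine Set.eq_empty_of_forall_notMem fun w ⟨hvw, huw⟩ ↦ hdisj ⟨w, ?_, ?_⟩
      · simpa using Or.inr huw
      · simpa using Or.inr hvw
    have hlt : 2 < G.edist v u := two_lt_edist_iff.2 ⟨hne, hadj, hcommon⟩
    exact (Order.add_one_le_of_lt hlt).not_gt h
  · rintro ⟨w, hwu, hwv⟩
    have hwu_le : G.edist w u ≤ 1 := ENat.lt_two_iff.1 hwu
    have hvw_le : G.edist v w ≤ 1 := ENat.lt_two_iff.1 (mem_ball_comm.1 hwv)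
    calc G.edist v u ≤ G.edist v w + G.edist w u := G.edist_triangle
      _ ≤ 1 + 1 := add_le_add hvw_le hwu_le
      _ < 3 := by norm_num

theorem ball_two_subset_ball_three_of_mem (h : v ∈ G.ball u 2) : G.ball v 2 ⊆ G.ball u 3 :=
  fun _ hw ↦ mem_ball_three_iff_inter_ball_two_nonempty.2 ⟨v, h, mem_ball_comm.1 hw⟩

theorem mem_distSet_iff_edist_eq (hi : i ≠ 0) : u ∈ distSet G v i ↔ G.edist u v = i := by
  rw [edist_comm]
  exact ENat.toNat_eq_iff hi

theorem ball_add_one_eq_union_distSet (hi : i ≠ 0) :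
    G.ball v (i + 1) = G.ball v i ∪ distSet G v i := by
  ext u
  rw [Set.mem_union, mem_distSet_iff_edist_eq hi, mem_ball, mem_ball, ← le_iff_lt_or_eq]
  exact ENat.lt_natCast_add_one_iff

theorem ball_three_eq_union_distSet : G.ball v 3 = G.ball v 2 ∪ distSet G v 2 := by
  exact_mod_cast ball_add_one_eq_union_distSet (G := G) (v := v) two_ne_zero

theorem disjoint_ball_distSet (hi : i ≠ 0) : Disjoint (G.ball v i) (distSet G v i) :=
  Set.disjoint_left.2 fun _ hlt heq ↦ hlt.ne ((mem_distSet_iff_edist_eq hi).1 heq)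

end Ball

namespace IsRegularGraph

variable {G : SimpleGraph V} {d : ℕ} {a b u v w : V}

theorem finite_ball_two (hreg : IsRegularGraph G d) (hd : d ≠ 0) (v : V) :
    (G.ball v 2).Finite := by
  rw [ball_two]
  exact (Set.finite_of_ncard_ne_zero (by rwa [hreg v])).insert v

theorem finite_ball_three (hreg : IsRegularGraph G d) (hd : d ≠ 0) (v : V) :
    (G.ball v 3).Finite := by
  refine ((hreg.finite_ball_two hd v).biUnion fun w _ ↦ hreg.finite_ball_two hd w).subset ?_
  intro x hx
  obtain ⟨w, hwv, hwx⟩ := mem_ball_three_iff_inter_ball_two_nonempty.1 hx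
  exact Set.mem_biUnion hwv (mem_ball_comm.1 hwx)

theorem ncard_ball_two (hreg : IsRegularGraph G d) (hd : d ≠ 0) (v : V) :
    (G.ball v 2).ncard = d + 1 := by
  have hfin : (G.neighborSet v).Finite := Set.finite_of_ncard_ne_zero (by rwa [hreg v])
  rw [ball_two, Set.ncard_insert_of_notMem (by simp) hfin, hreg v]

theorem ncard_ball_three (hreg : IsRegularGraph G d) (hd : d ≠ 0) (v : V) :
    (G.ball v 3).ncard = d + 1 + deg2 G v := by
  have hdisj : Disjoint (G.ball v 2) (distSet G v 2) := disjoint_ball_distSet two_ne_zero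
  have hfin := hreg.finite_ball_three hd v
  rw [ball_three_eq_union_distSet] at hfin ⊢
  rw [Set.ncard_union_eq hdisj (hfin.subset Set.subset_union_left)
    (hfin.subset Set.subset_union_right), hreg.ncard_ball_two hd, deg2]

theorem lt_deg2_add_ncard_inter (hreg : IsRegularGraph G d) (hd : d ≠ 0)
    (ha : G.ball a 2 ⊆ G.ball v 3) (hb : G.ball b 2 ⊆ G.ball v 3) :
    d < deg2 G v + (G.ball a 2 ∩ G.ball b 2).ncard := by
  have hle := Set.ncard_le_ncard (Set.union_subset ha hb) (hreg.finite_ball_three hd v)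
  have hsum := Set.ncard_union_add_ncard_inter (G.ball a 2) (G.ball b 2)
    (hreg.finite_ball_two hd a) (hreg.finite_ball_two hd b)
  rw [hreg.ncard_ball_three hd] at hle
  rw [hreg.ncard_ball_two hd, hreg.ncard_ball_two hd] at hsum
  omega

theorem ball_two_subset_of_mem_ball_three (hreg : IsRegularGraph G d) (hd : d ≠ 0)
    (hdeg : deg2 G u + deg2 G v ≤ d) (hv : v ∈ G.ball u 3) : G.ball v 2 ⊆ G.ball u 3 := by
  intro y hy
  by_contra hyu
  obtain ⟨w, hwu, hwv⟩ := mem_ball_three_iff_inter_ball_two_nonempty.1 hv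
  have hcount : d < deg2 G v + (G.ball w 2 ∩ G.ball y 2).ncard :=
    hreg.lt_deg2_add_ncard_inter hd (ball_two_subset_ball_three_of_mem hwv)
      (ball_two_subset_ball_three_of_mem hy)
  have hsub : G.ball w 2 ∩ G.ball y 2 ⊆ distSet G u 2 := by
    rintro x ⟨hxw, hxy⟩
    have hxu : x ∈ G.ball u 2 ∪ distSet G u 2 :=
      ball_three_eq_union_distSet ▸ ball_two_subset_ball_three_of_mem hwu hxw
    exact hxu.resolve_left fun hxu ↦
      hyu (mem_ball_three_iff_inter_ball_two_nonempty.2 ⟨x, hxu, hxy⟩)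
  have hfin : (distSet G u 2).Finite := (hreg.finite_ball_three hd u).subset
    (ball_three_eq_union_distSet ▸ Set.subset_union_right)
  have hle : (G.ball w 2 ∩ G.ball y 2).ncard ≤ deg2 G u := Set.ncard_le_ncard hsub hfin
  omega

theorem mem_ball_three_trans (hreg : IsRegularGraph G d) (hd : d ≠ 0)
    (huv : deg2 G u + deg2 G v ≤ d) (hvw : deg2 G v + deg2 G w ≤ d)
    (hv : v ∈ G.ball u 3) (hw : w ∈ G.ball v 3) : w ∈ G.ball u 3 := by
  have hcount : d < deg2 G v + (G.ball u 2 ∩ G.ball w 2).ncard :=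
    hreg.lt_deg2_add_ncard_inter hd
      (hreg.ball_two_subset_of_mem_ball_three hd (by omega) (mem_ball_comm.1 hv))
      (hreg.ball_two_subset_of_mem_ball_three hd hvw hw)
  exact mem_ball_three_iff_inter_ball_two_nonempty.2
    (Set.nonempty_of_ncard_ne_zero (by omega))

end IsRegularGraph

section Region

open Relation (ReflTransGen)

variable {G : SimpleGraph V} {d : ℕ} {R : Set V} {v x y : V}

theorem regStep.mem_ball_three (h : regStep G x y) : y ∈ G.ball x 3 := by
  obtain ⟨-, -, hreach, hdist⟩ := h
  rw [mem_ball, edist_comm, ← hreach.coe_dist_eq_edist]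
  exact_mod_cast Nat.lt_succ_of_le hdist

theorem deg2_le_three_of_reflTransGen (hx : deg2 G x ≤ 3) (h : ReflTransGen (regStep G) x y) :
    deg2 G y ≤ 3 := by
  cases h with
  | refl => exact hx
  | tail _ hstep => exact hstep.2.1

theorem IsRegularGraph.mem_ball_three_of_reflTransGen (hreg : IsRegularGraph G d) (hd : 6 ≤ d)
    (hv : deg2 G v ≤ 3) (hx : x ∈ G.ball v 3) (h : ReflTransGen (regStep G) x y) :
    y ∈ G.ball v 3 := by
  induction h with
  | refl => exact hx
  | tail _ hstep ih =>
    have hdeg := hstep.1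
    have hdeg' := hstep.2.1
    exact hreg.mem_ball_three_trans (by omega) (by omega) (by omega) ih hstep.mem_ball_three

theorem IsRegion.exists_eq_biUnion_ball (hR : IsRegion G R) :
    ∃ x₀, deg2 G x₀ ≤ 3 ∧ R = ⋃ (x) (_ : ReflTransGen (regStep G) x₀ x), G.ball x 2 := by
  obtain ⟨x₀, hx₀, rfl⟩ := hR
  refine ⟨x₀, hx₀, ?_⟩
  ext y
  simp only [ball_two, Set.mem_iUnion, Set.mem_insert_iff, mem_neighborSet]
  constructor
  · rintro (hy | ⟨x, hx, hxy⟩)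
    exacts [⟨y, hy, .inl rfl⟩, ⟨x, hx, .inr hxy⟩]
  · rintro ⟨x, hx, rfl | hxy⟩
    exacts [.inl hx, .inr ⟨x, hx, hxy⟩]

theorem IsRegion.exists_deg2_le_three (hR : IsRegion G R) : ∃ v ∈ R, deg2 G v ≤ 3 := by
  obtain ⟨x₀, hx₀, rfl⟩ := hR
  exact ⟨x₀, Or.inl .refl, hx₀⟩

theorem IsRegion.subset_ball_three (hR : IsRegion G R) (hreg : IsRegularGraph G d) (hd : 6 ≤ d)
    (hvR : v ∈ R) (hv : deg2 G v ≤ 3) : R ⊆ G.ball v 3 := by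
  obtain ⟨x₀, hx₀, rfl⟩ := hR.exists_eq_biUnion_ball
  have ball_subset {u x : V} (hu : deg2 G u ≤ 3) (hx : ReflTransGen (regStep G) x₀ x)
      (hxu : x₀ ∈ G.ball u 3) : G.ball x 2 ⊆ G.ball u 3 := by
    have hdeg := deg2_le_three_of_reflTransGen hx₀ hx
    exact hreg.ball_two_subset_of_mem_ball_three (by omega) (by omega)
      (hreg.mem_ball_three_of_reflTransGen hd hu hxu hx)
  obtain ⟨x, hx, hvx⟩ := Set.mem_iUnion₂.1 hvR
  have hvx₀ : v ∈ G.ball x₀ 3 := ball_subset hx₀ hx (mem_ball_self (by norm_num)) hvx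
  exact Set.iUnion₂_subset fun y hy ↦ ball_subset hv hy (mem_ball_comm.1 hvx₀)

end Region

theorem stmt4_general {V : Type*} (G : SimpleGraph V) (d : ℕ) (hd : 6 ≤ d)
    (hreg : IsRegularGraph G d) (R : Set V) (hR : IsRegion G R) (t : ℕ)
    (ht : t = sInf (deg2 G '' {x | x ∈ R ∧ deg2 G x ≤ 3})) :
    R.Finite ∧ R.ncard ≤ d + t + 1 ∧ R.ncard ≤ d + 4 := by
  have hlow : (deg2 G '' {x | x ∈ R ∧ deg2 G x ≤ 3}).Nonempty :=
    Set.Nonempty.image _ hR.exists_deg2_le_three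
  obtain ⟨v, ⟨hvR, hv⟩, hvt⟩ := ht ▸ Nat.sInf_mem hlow
  have hsub : R ⊆ G.ball v 3 := hR.subset_ball_three hreg hd hvR hv
  have hfin : (G.ball v 3).Finite := hreg.finite_ball_three (by omega) v
  have hcard : R.ncard ≤ d + 1 + deg2 G v :=
    hreg.ncard_ball_three (by omega) v ▸ Set.ncard_le_ncard hsub hfin
  exact ⟨hfin.subset hsub, by omega, by omega⟩

/-- Let `d > 6`, `G` connected `d`-regular with `G²` not complete, `R` a
region, and let `t` be the minimum of `deg₂(x)` over the low-degree vertices `x ∈ R`.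
Then `|R| ≤ d + t + 1`; in particular `|R| ≤ d + 4`. -/
theorem stmt4 {V : Type*} [Fintype V] (G : SimpleGraph V) (d : ℕ) (hd : 6 < d)
    (hconn : G.Connected) (hreg : IsRegularGraph G d) (hnotcomplete : graphSquare G ≠ ⊤)
    (R : Set V) (hR : IsRegion G R) (t : ℕ)
    (ht : t = sInf (deg2 G '' {x | x ∈ R ∧ deg2 G x ≤ 3})) :
    R.ncard ≤ d + t + 1 ∧ R.ncard ≤ d + 4 :=
  (stmt4_general G d hd.le hreg R hR t ht).2
end
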